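/- arXiv:2412.20809 — 2 statements merged into one kernel-verified Lean document; each statement's English description precedes it below -/
import Mathlib

section
/- Let k be an algebraically closed field of characteristic 0 and let λ be a symplectic partition of 2n whose number of parts p satisfies j := 2n − p < n. Then the Zariski closure in Mat_{2n}(k) of the set {x + y : x, y ∈ O_λ ∩ sp_{2n}(k)} equals {M ∈ sp_{2n}(k) : rank(M) ≤ 2j}; that is, the conical secant variety of this nilpotent Sp_{2n}-orbit is the symmetric determinantal variety Sym_{2j}(2n) viewed inside sp_{2n}. -/
open Matrix

noncomputable section

/-- The Zariski closure of a set of `N × N` matrices. -/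
def zClosure {k : Type*} [CommRing k] {N : ℕ}
    (S : Set (Matrix (Fin N) (Fin N) k)) : Set (Matrix (Fin N) (Fin N) k) :=
  {M | ∀ P : MvPolynomial (Fin N × Fin N) k,
      (∀ x ∈ S, MvPolynomial.eval (fun q => x q.1 q.2) P = 0) →
      MvPolynomial.eval (fun q => M q.1 q.2) P = 0}

/-- The set of nilpotent matrices of Jordan type `lam`. -/
def jordanOrbit (k : Type*) [Field k] (N : ℕ) {p : ℕ} (lam : Fin p → ℕ) :
    Set (Matrix (Fin N) (Fin N) k) :=
  {M | ∀ i : ℕ, 1 ≤ i → (M ^ i).rank = ∑ l, (lam l - i)}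

/-- The standard symplectic form matrix `J = [[0, I_n], [−I_n, 0]]`. -/
def Jmat (k : Type*) [CommRing k] (n : ℕ) : Matrix (Fin (2 * n)) (Fin (2 * n)) k :=
  Matrix.of fun i j =>
    if (i : ℕ) + n = (j : ℕ) then 1 else if (j : ℕ) + n = (i : ℕ) then -1 else 0

/-- The symplectic Lie algebra `sp_{2n}(k) = {M : Mᵀ J + J M = 0}`. -/
def spSet (k : Type*) [CommRing k] (n : ℕ) : Set (Matrix (Fin (2 * n)) (Fin (2 * n)) k) :=
  {M | Mᵀ * Jmat k n + Jmat k n * M = 0}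

/-- A partition is symplectic if each odd part occurs with even multiplicity. -/
def IsSymplecticParts {p : ℕ} (lam : Fin p → ℕ) : Prop :=
  ∀ m : ℕ, Odd m → Even ((Finset.univ.filter (fun l => lam l = m)).card)

open Polynomial in
/-- A polynomial curve of matrices which generically lies in a Zariski closure does so at `0`. -/
theorem mem_zClosure_of_curve {k : Type*} [Field k] [Infinite k] {N : ℕ}
    {S : Set (Matrix (Fin N) (Fin N) k)} (f : Matrix (Fin N) (Fin N) k[X]) (D : k[X])
    (hD : D ≠ 0) (h : ∀ t, D.eval t ≠ 0 → f.map (Polynomial.eval t) ∈ zClosure S) :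
    f.map (Polynomial.eval 0) ∈ zClosure S := by
  intro P hP
  have key : ∀ t, MvPolynomial.eval (fun q => f.map (Polynomial.eval t) q.1 q.2) P
      = (MvPolynomial.aeval (fun q : Fin N × Fin N => f q.1 q.2) P).eval t := by
    intro t
    clear hP
    induction P using MvPolynomial.induction_on with
    | C a => simp
    | add p q hp hq => simp_all
    | mul_X p i hp => simp_all
  have hzero : MvPolynomial.aeval (fun q : Fin N × Fin N => f q.1 q.2) P * D = 0 := by
    refine Polynomial.funext fun t => ?_
    by_cases ht : D.eval t = 0
    · simp [ht]
    · rw [Polynomial.eval_mul, ← key, h t ht P hP]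
      simp
  rw [key, (mul_eq_zero.mp hzero).resolve_right hD, Polynomial.eval_zero]

theorem subset_zClosure {k : Type*} [Field k] {N : ℕ}
    (S : Set (Matrix (Fin N) (Fin N) k)) : S ⊆ zClosure S := fun x hx _ hP => hP x hx

theorem exists_left_right_inv_of_le_rank {k : Type*} [Field k] {N r : ℕ}
    (M : Matrix (Fin N) (Fin N) k) (h : r ≤ M.rank) :
    ∃ (E : Matrix (Fin r) (Fin N) k) (F : Matrix (Fin N) (Fin r) k), E * M * F = 1 := by
  obtain ⟨f, hf⟩ := exists_linearIndependent_of_le_finrank (R := k)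
    (M := LinearMap.range M.mulVecLin) (n := r) h
  have hf' := hf.map' (Submodule.subtype _) (Submodule.ker_subtype _)
  choose g hg using fun i => (f i).2
  have h1 : LinearIndependent k (M * (Matrix.of g)ᵀ).col := by
    have : (M * (Matrix.of g)ᵀ).col = Submodule.subtype _ ∘ f := by
      ext i l
      simp [← hg, Matrix.mul_apply, Matrix.mulVec, dotProduct]
    rw [this]
    exact hf'
  obtain ⟨E, hE⟩ := LinearMap.exists_leftInverse_of_injective (M * (Matrix.of g)ᵀ).mulVecLin
    (LinearMap.ker_eq_bot.mpr (Matrix.mulVec_injective_iff.mpr h1))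
  refine ⟨LinearMap.toMatrix' E, (Matrix.of g)ᵀ, ?_⟩
  rw [Matrix.mul_assoc, ← LinearMap.toMatrix'_id, ← hE, LinearMap.toMatrix'_comp,
    ← Matrix.toLin'_apply', LinearMap.toMatrix'_toLin']

theorem rank_le_of_mem_zClosure {k : Type*} [Field k] {N r : ℕ}
    {S : Set (Matrix (Fin N) (Fin N) k)} (hS : ∀ x ∈ S, x.rank ≤ r)
    {M : Matrix (Fin N) (Fin N) k} (hM : M ∈ zClosure S) : M.rank ≤ r := by
  by_contra! hlt
  obtain ⟨E, F, hEF⟩ := exists_left_right_inv_of_le_rank M hlt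
  let X : Matrix (Fin N) (Fin N) (MvPolynomial (Fin N × Fin N) k) :=
    Matrix.of (fun a b => MvPolynomial.X (a, b))
  let E' : Matrix (Fin (r + 1)) (Fin N) (MvPolynomial (Fin N × Fin N) k) := E.map MvPolynomial.C
  let F' : Matrix (Fin N) (Fin (r + 1)) (MvPolynomial (Fin N × Fin N) k) := F.map MvPolynomial.C
  let P : MvPolynomial (Fin N × Fin N) k :=
    (E' * X * F').det
  have key : ∀ x : Matrix (Fin N) (Fin N) k,
      MvPolynomial.eval (fun q => x q.1 q.2) P = (E * x * F).det := by
    intro x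
    simp only [P, RingHom.map_det, RingHom.mapMatrix_apply]
    congr 1
    ext a b
    simp [X, E', F', Matrix.mul_apply]
  have := hM P fun x hx => by
    rw [key]
    by_contra hne
    have h1 := Matrix.rank_of_det_ne_zero hne
    have h2 := (Matrix.rank_mul_le_left (E * x) F).trans (Matrix.rank_mul_le_right E x)
    have h3 := hS x hx
    simp at h1
    omega
  rw [key, hEF] at this
  simp at this

theorem mem_spSet_of_mem_zClosure {k : Type*} [Field k] {n : ℕ}
    {S : Set (Matrix (Fin (2 * n)) (Fin (2 * n)) k)} (hS : S ⊆ spSet k n)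
    {M : Matrix (Fin (2 * n)) (Fin (2 * n)) k} (hM : M ∈ zClosure S) : M ∈ spSet k n := by
  ext a b
  let X : Matrix (Fin (2 * n)) (Fin (2 * n)) (MvPolynomial (Fin (2 * n) × Fin (2 * n)) k) :=
    Matrix.of (fun a b => MvPolynomial.X (a, b))
  let P : MvPolynomial (Fin (2 * n) × Fin (2 * n)) k :=
    (Xᵀ * (Jmat k n).map MvPolynomial.C + (Jmat k n).map MvPolynomial.C * X :
      Matrix _ _ (MvPolynomial _ k)) a b
  have key : ∀ x : Matrix (Fin (2 * n)) (Fin (2 * n)) k,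
      MvPolynomial.eval (fun q => x q.1 q.2) P = (xᵀ * Jmat k n + Jmat k n * x) a b := by
    intro x
    simp [P, X, Matrix.mul_apply]
  have := hM P fun x hx => by
    rw [key, show xᵀ * Jmat k n + Jmat k n * x = 0 from hS hx]; rfl
  rw [← key, this]; rfl

/-- A symmetric matrix of rank at most `card ι` is of the form `W Wᵀ`. -/
theorem exists_mul_transpose_of_isSymm {k : Type*} [Field k] [IsAlgClosed k] [CharZero k]
    {m ι : Type*} [Fintype m] [DecidableEq m] [Fintype ι] (S : Matrix m m k) (hS : S.IsSymm)
    (hr : S.rank ≤ Fintype.card ι) : ∃ W : Matrix m ι k, S = W * Wᵀ := by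
  classical
  have : Invertible (2 : k) := invertibleOfNonzero two_ne_zero
  have hsym : LinearMap.IsSymm (Matrix.toBilin' S) :=
    ⟨fun x y => by
      simp only [Matrix.toBilin'_apply', RingHom.id_apply]
      rw [Matrix.dotProduct_mulVec, ← Matrix.mulVec_transpose, hS.eq, dotProduct_comm]⟩
  obtain ⟨v₀, hv₀⟩ := LinearMap.BilinForm.exists_orthogonal_basis hsym
  have e : Fin (Module.finrank k (m → k)) ≃ m := Fintype.equivOfCardEq (by simp)
  let v := v₀.reindex e
  have hv : ∀ i l, i ≠ l → v i ⬝ᵥ S *ᵥ v l = 0 := fun i l hil => by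
    have := hv₀ (e.symm.injective.ne hil)
    simp only [Function.onFun, Matrix.toBilin'_apply'] at this
    simpa [v] using this
  let Q : Matrix m m k := (Pi.basisFun k m).toMatrix v
  let R : Matrix m m k := v.toMatrix (Pi.basisFun k m)
  have hQR : Q * R = 1 := (Pi.basisFun k m).toMatrix_mul_toMatrix_flip v
  have hRQ : Rᵀ * Qᵀ = 1 := by rw [← Matrix.transpose_mul, hQR, Matrix.transpose_one]
  let d : m → k := fun i => v i ⬝ᵥ S *ᵥ v i
  have hD : Qᵀ * S * Q = Matrix.diagonal d := by
    ext i l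
    have : (Qᵀ * S * Q) i l = v i ⬝ᵥ S *ᵥ v l := by
      rw [Matrix.mul_assoc]
      simp [Q, Matrix.mul_apply, dotProduct, Matrix.mulVec, Module.Basis.toMatrix_apply]
    rw [this]
    by_cases h : i = l
    · subst h; simp [d]
    · rw [hv i l h, Matrix.diagonal_apply_ne _ h]
  have hcard : Fintype.card {i // d i ≠ 0} ≤ Fintype.card ι := by
    rw [← Matrix.rank_diagonal d, ← hD]
    exact ((Matrix.rank_mul_le_left _ _).trans (Matrix.rank_mul_le_right _ _)).trans hr
  obtain ⟨g⟩ := Function.Embedding.nonempty_of_card_le hcard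
  choose s hs using fun i => IsAlgClosed.exists_eq_mul_self (d i)
  let E : Matrix m ι k := Matrix.of fun i c => if h : d i ≠ 0 then
    if g ⟨i, h⟩ = c then s i else 0 else 0
  have hE : E * Eᵀ = Matrix.diagonal d := by
    ext i l
    by_cases hi : d i = 0
    · by_cases h : i = l
      · subst h; simp [E, Matrix.mul_apply, hi]
      · simp [E, Matrix.mul_apply, hi, h]
    · by_cases hl : d l = 0
      · have h : i ≠ l := by rintro rfl; exact hi hl
        simp [E, Matrix.mul_apply, hl, h]
      · by_cases h : i = l
        · subst h; simp [E, Matrix.mul_apply, hi, ← hs]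
        · simp [E, Matrix.mul_apply, hi, hl, h, g.injective.eq_iff]
  refine ⟨Rᵀ * E, ?_⟩
  rw [Matrix.transpose_mul, Matrix.transpose_transpose, ← Matrix.mul_assoc, Matrix.mul_assoc Rᵀ,
    hE, ← hD]
  calc S = 1 * S * 1 := by simp
    _ = _ := by nth_rw 1 [← hRQ]; rw [← hQR]; simp only [Matrix.mul_assoc]

open Polynomial in
theorem eval_neg_charpoly_of_skew {k I : Type*} [Field k] [Fintype I] [DecidableEq I]
    (hI : Even (Fintype.card I)) {T : Matrix I I k} (hT : Tᵀ = -T) (x : k) :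
    T.charpoly.eval (-x) = T.charpoly.eval x := by
  rw [Matrix.eval_charpoly, Matrix.eval_charpoly, ← Matrix.det_transpose, Matrix.transpose_sub, hT,
    ← one_mul (det (scalar I x - T)), ← hI.neg_one_pow, ← Matrix.det_neg]
  congr 1
  rw [map_neg, Matrix.transpose_neg, Matrix.scalar_apply, Matrix.diagonal_transpose]
  abel

open Polynomial in
theorem eval_zero_charpoly_ne_zero_of_skew {k I : Type*} [Field k] [CharZero k] [Fintype I]
    [DecidableEq I] (hI : Even (Fintype.card I)) {T : Matrix I I k} (hT : Tᵀ = -T)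
    (hsep : T.charpoly.Separable) : T.charpoly.eval 0 ≠ 0 := by
  intro h0
  have hcomp : T.charpoly.comp (-X) = T.charpoly :=
    Polynomial.funext fun x => by simp [eval_neg_charpoly_of_skew hI hT]
  have hder := congrArg (fun p => p.derivative.eval 0) hcomp
  simp only [derivative_comp, derivative_neg, derivative_X, eval_mul, eval_neg, eval_one, eval_comp,
    eval_X, neg_zero] at hder
  have : T.charpoly.derivative.eval 0 = 0 := by
    have h2 : (2 : k) * T.charpoly.derivative.eval 0 = 0 := by linear_combination -hder
    simpa using h2
  obtain ⟨a, b, hab⟩ := hsep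
  simpa [h0, this] using congrArg (Polynomial.eval 0) hab

/-- A skew-symmetric matrix of even size with separable characteristic polynomial has an eigenbasis,
indexed by the index type of the matrix. -/
theorem exists_eigenbasis {k I : Type*} [Field k] [IsAlgClosed k]
    [Fintype I] [DecidableEq I] {T : Matrix I I k}
    (hsep : T.charpoly.Separable) :
    ∃ (ρ : I → k) (P : Matrix I I k), Function.Injective ρ ∧
      (∀ x, T.charpoly.eval x = 0 → ∃ i, ρ i = x) ∧
      (∀ i, T.charpoly.eval (ρ i) = 0) ∧ IsUnit P ∧ T * P = P * diagonal ρ := by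
  classical
  have hne : T.charpoly ≠ 0 := T.charpoly_monic.ne_zero
  have hcard : Fintype.card I = Fintype.card T.charpoly.roots.toFinset := by
    rw [Fintype.card_coe, Multiset.toFinset_card_of_nodup (Polynomial.nodup_roots hsep),
      IsAlgClosed.card_roots_eq_natDegree, Matrix.charpoly_natDegree_eq_dim]
  let e : I ≃ T.charpoly.roots.toFinset := Fintype.equivOfCardEq hcard
  have hroot : ∀ i, T.charpoly.eval (e i : k) = 0 := fun i => by
    have := (e i).2
    rw [Multiset.mem_toFinset, Polynomial.mem_roots hne] at this
    exact this
  have hex : ∀ i, ∃ v : I → k, v ≠ 0 ∧ T *ᵥ v = (e i : k) • v := fun i => by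
    have h := hroot i
    rw [Matrix.eval_charpoly] at h
    obtain ⟨v, hv, hv'⟩ := Matrix.exists_mulVec_eq_zero_iff.mpr h
    refine ⟨v, hv, ?_⟩
    rw [Matrix.sub_mulVec, sub_eq_zero] at hv'
    rw [← hv']
    simp [Matrix.scalar_apply, ← Matrix.smul_one_eq_diagonal, Matrix.smul_mulVec]
  choose v hv hTv using hex
  have hinj : Function.Injective (fun i => (e i : k)) := Subtype.val_injective.comp e.injective
  have hlin : LinearIndependent k v :=
    Module.End.eigenvectors_linearIndependent' (Matrix.toLin' T) (fun i => (e i : k)) hinj v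
      fun i => ⟨Module.End.mem_eigenspace_iff.mpr (by simpa using hTv i), hv i⟩
  refine ⟨fun i => e i, (Matrix.of v)ᵀ, hinj, fun x hx => ?_, hroot, ?_, ?_⟩
  · have : x ∈ T.charpoly.roots.toFinset := by
      rw [Multiset.mem_toFinset, Polynomial.mem_roots hne]
      exact hx
    exact ⟨e.symm ⟨x, this⟩, by simp⟩
  · exact Matrix.linearIndependent_cols_iff_isUnit.mp hlin
  · ext a i
    rw [Matrix.mul_diagonal]
    have := congrFun (hTv i) a
    simp only [Pi.smul_apply, smul_eq_mul] at this
    simp only [Matrix.transpose_apply, Matrix.of_apply]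
    rw [mul_comm, ← this]
    rfl

/-- A skew-symmetric matrix of size `2 j` with separable characteristic polynomial admits
a pair of complementary isotropic subspaces that are dual for the standard symmetric form and on
whose product the skew form is diagonal. -/
theorem exists_isotropic_pair {k I : Type*} [Field k] [IsAlgClosed k] [CharZero k]
    [Fintype I] [DecidableEq I] {j : ℕ} (hI : Fintype.card I = 2 * j) {T : Matrix I I k}
    (hT : Tᵀ = -T) (hsep : T.charpoly.Separable) :
    ∃ (U V : Matrix I (Fin j) k) (d : Fin j → k), (∀ i, d i ≠ 0) ∧ Uᵀ * T * U = 0 ∧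
      Vᵀ * T * V = 0 ∧ Uᵀ * T * V = diagonal d ∧ U * Vᵀ + V * Uᵀ = 1 := by
  classical
  have heven : Even (Fintype.card I) := ⟨j, by omega⟩
  obtain ⟨ρ, P, hinj, hsurj, hroot, hP, hTP⟩ := exists_eigenbasis hsep
  have hρ0 : ∀ i, ρ i ≠ 0 := fun i h =>
    eval_zero_charpoly_ne_zero_of_skew heven hT hsep (h ▸ hroot i)
  choose ν hν using fun i => hsurj (-ρ i) (by rw [eval_neg_charpoly_of_skew heven hT, hroot])
  have hνν : ∀ i, ν (ν i) = i := fun i => hinj (by rw [hν, hν, neg_neg])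
  let G := Pᵀ * P
  have hG : ∀ i l, l ≠ ν i → G i l = 0 := fun i l hl => by
    have h1 : diagonal ρ * G = - (G * diagonal ρ) := by
      have := congrArg (fun A => Aᵀ * P) hTP
      simp only [Matrix.transpose_mul, hT, Matrix.diagonal_transpose, Matrix.mul_assoc] at this
      rw [← this]
      simp only [G, Matrix.mul_assoc, ← hTP, Matrix.mul_neg, Matrix.neg_mul]
    have h2 := congrFun (congrFun h1 i) l
    rw [Matrix.diagonal_mul, Matrix.neg_apply, Matrix.mul_diagonal] at h2
    have h3 : (ρ i + ρ l) * G i l = 0 := by linear_combination h2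
    refine (mul_eq_zero.mp h3).resolve_left fun h => hl (hinj ?_)
    rw [hν]
    linear_combination h
  have hGsymm : ∀ i l, G i l = G l i := fun i l =>
    congrFun (congrFun (show G = Gᵀ by simp [G]) i) l
  have hGunit : IsUnit G := ((Matrix.isUnit_transpose P).mpr hP).mul hP
  let g : I → k := fun i => G i (ν i)
  have hg0 : ∀ i, g i ≠ 0 := fun i h => by
    have : G.det = 0 := Matrix.det_eq_zero_of_row_eq_zero i fun l => by
      by_cases hl : l = ν i
      · rw [hl]; exact h
      · exact hG i l hl
    exact ((Matrix.isUnit_iff_isUnit_det _).mp hGunit).ne_zero this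
  have hgν : ∀ i, g (ν i) = g i := fun i => by
    simp only [g]; rw [hνν, hGsymm]
  have hPTP : ∀ i l, (Pᵀ * T * P) i l = G i l * ρ l := fun i l => by
    rw [Matrix.mul_assoc, hTP, ← Matrix.mul_assoc, Matrix.mul_diagonal]
  let f : I → Matrix I I k := fun i => Matrix.of fun a b => P a i * P b (ν i) * (g i)⁻¹
  have hsum : ∑ i, f i = 1 := by
    let Y : Matrix I I k := Matrix.of fun i l => if l = ν i then (g i)⁻¹ else 0
    have hGY : G * Y = 1 := by
      ext i l
      rw [Matrix.mul_apply, Finset.sum_eq_single (ν i)]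
      · have h1 := hg0 i
        have h2 : G i (ν i) = g i := rfl
        by_cases h : i = l
        · subst h; simp [Y, hνν, hgν, h2, h1]
        · simp [Y, hνν, h, Ne.symm h]
      · intro b _ hb
        rw [hG i b hb, zero_mul]
      · simp
    have : P * Y * Pᵀ = 1 := by
      rw [mul_eq_one_comm, ← Matrix.mul_assoc]; exact hGY
    rw [← this]
    ext a b
    simp only [Matrix.sum_apply, Matrix.mul_apply, Matrix.transpose_apply, f, Y, Matrix.of_apply]
    refine Finset.sum_bij (fun i _ => ν i) (by simp)
      (fun i _ l _ h => by rw [← hνν i, h, hνν]) (fun i _ => ⟨ν i, by simp, hνν i⟩) ?_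
    intro i _
    rw [Finset.sum_eq_single i]
    · simp; ring
    · intro b _ hb
      rw [if_neg, mul_zero]
      intro h
      exact hb (by rw [← hνν b, ← h, hνν])
    · simp
  let pos : I → Prop := fun i => WellOrderingRel (ρ i) (-ρ i)
  have hpos : ∀ i, pos (ν i) ↔ ¬ pos i := fun i => by
    simp only [pos, hν, neg_neg]
    constructor
    · exact fun h h' => asymm_of WellOrderingRel h h'
    · intro h
      rcases trichotomous_of WellOrderingRel (ρ i) (-ρ i) with h' | h' | h'
      · exact absurd h' h
      · exact absurd (self_eq_neg.mp h') (hρ0 i)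
      · exact h'
  let F := Finset.univ.filter pos
  have hcompl : Finset.univ.filter (fun i => ¬ pos i) = F.image ν := by
    ext i
    simp only [Finset.mem_filter, Finset.mem_univ, true_and, Finset.mem_image, F]
    constructor
    · exact fun h => ⟨ν i, (hpos i).mpr h, hνν i⟩
    · rintro ⟨l, hl, rfl⟩
      rw [hpos]; exact not_not.mpr hl
  have hνinj : Function.Injective ν := fun i l h => by rw [← hνν i, h, hνν]
  have hFcard : F.card = j := by
    have h1 := Finset.card_filter_add_card_filter_not (s := (Finset.univ : Finset I)) pos
    rw [hcompl, Finset.card_image_of_injective _ hνinj, Finset.card_univ, hI] at h1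
    change F.card + F.card = _ at h1
    omega
  let e : Fin j ≃ F := (F.equivFinOfCardEq hFcard).symm
  have hepos : ∀ c, pos (e c) := fun c => (Finset.mem_filter.mp (e c).2).2
  have hene : ∀ c c', (e c : I) ≠ ν (e c') := fun c c' h =>
    (hpos (e c')).mp (h ▸ hepos c) (hepos c')
  have hsub : ∀ u v : Fin j → I, (P.submatrix id u)ᵀ * T * P.submatrix id v
      = (Pᵀ * T * P).submatrix u v := fun u v => rfl
  let U := P.submatrix id (fun c => (e c : I))
  let V₀ := P.submatrix id (fun c => ν (e c))
  let γ : Fin j → k := fun c => (g (e c))⁻¹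
  have hUU : Uᵀ * T * U = 0 := by
    ext c c'
    rw [hsub, Matrix.submatrix_apply, hPTP, hG _ _ (hene c' c), zero_mul, Matrix.zero_apply]
  have hVV : V₀ᵀ * T * V₀ = 0 := by
    ext c c'
    rw [hsub, Matrix.submatrix_apply, hPTP, hG _ _ (fun h => hene c c' ?_), zero_mul,
      Matrix.zero_apply]
    rw [h, hνν]
  have hUV : Uᵀ * T * V₀ = diagonal fun c => - (g (e c) * ρ (e c)) := by
    ext c c'
    rw [hsub, Matrix.submatrix_apply, hPTP, hν]
    by_cases h : c = c'
    · subst h; simp [g]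
    · rw [hG, Matrix.diagonal_apply_ne _ h, zero_mul]
      exact fun h' => h (e.injective (Subtype.ext (hνinj h'))).symm
  refine ⟨U, V₀ * diagonal γ, fun c => - ρ (e c), fun c => neg_ne_zero.mpr (hρ0 _), hUU, ?_, ?_, ?_⟩
  · calc _ = (diagonal γ)ᵀ * (V₀ᵀ * T * V₀) * diagonal γ := by
          simp only [Matrix.transpose_mul, Matrix.mul_assoc]
      _ = 0 := by rw [hVV]; simp
  · rw [← Matrix.mul_assoc, hUV, Matrix.diagonal_mul_diagonal]
    congr 1
    funext c
    have := hg0 (e c)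
    simp only [γ]
    field_simp
  · rw [← hsum, ← Finset.sum_filter_add_sum_filter_not Finset.univ pos, hcompl,
      Finset.sum_image hνinj.injOn, ← Finset.sum_coe_sort F, ← Finset.sum_coe_sort F,
      ← e.sum_comp, ← e.sum_comp]
    congr 1
    · ext a b
      rw [Matrix.sum_apply, Matrix.mul_apply]
      simp only [Matrix.transpose_apply, f, Matrix.of_apply, Matrix.mul_diagonal,
        U, V₀, γ, Matrix.submatrix_apply, id, mul_assoc]
    · ext a b
      rw [Matrix.sum_apply, Matrix.mul_apply]
      simp only [Matrix.transpose_apply, f, Matrix.of_apply, Matrix.mul_diagonal,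
        U, V₀, γ, Matrix.submatrix_apply, id, hνν, hgν]
      exact Finset.sum_congr rfl fun c _ => by ring

theorem exists_fixedPointFree_involution {F : Type*} [Fintype F] (h : Even (Fintype.card F)) :
    ∃ σ : F → F, (∀ x, σ (σ x) = x) ∧ ∀ x, σ x ≠ x := by
  obtain ⟨r, hr⟩ := h
  let e : F ≃ Fin r × Bool := Fintype.equivOfCardEq (by simp [hr]; omega)
  refine ⟨fun x => e.symm ((e x).1, !(e x).2), fun x => by simp, fun x hx => ?_⟩
  have := congrArg (fun y => (e y).2) hx
  simp at this

/-- The parts of a symplectic partition can be permuted by an involution preserving sizes, whose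
fixed points are exactly the even parts. -/
theorem IsSymplecticParts.exists_involution {p : ℕ} {lam : Fin p → ℕ} (h : IsSymplecticParts lam) :
    ∃ τ : Fin p → Fin p, (∀ l, lam (τ l) = lam l) ∧ (∀ l, τ (τ l) = l) ∧
      (∀ l, Odd (lam l) → τ l ≠ l) ∧ ∀ l, Even (lam l) → τ l = l := by
  have hex : ∀ m, Odd m → ∃ σ : {l // lam l = m} → {l // lam l = m},
      (∀ x, σ (σ x) = x) ∧ ∀ x, σ x ≠ x := fun m hm =>
    exists_fixedPointFree_involution (by rw [Fintype.card_subtype]; exact h m hm)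
  choose σ hσσ hσ using hex
  let τ : Fin p → Fin p := fun l => if h : Odd (lam l) then (σ (lam l) h ⟨l, rfl⟩).1 else l
  have hτ : ∀ m (hm : Odd m) (x : {l // lam l = m}), τ x.1 = (σ m hm x).1 := by
    rintro m hm ⟨l, rfl⟩
    simp [τ, hm]
  refine ⟨τ, fun l => ?_, fun l => ?_, fun l hl => ?_, fun l hl => ?_⟩
  · by_cases hl : Odd (lam l)
    · rw [hτ _ hl ⟨l, rfl⟩]; exact (σ (lam l) hl ⟨l, rfl⟩).2
    · simp [τ, hl]
  · by_cases hl : Odd (lam l)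
    · rw [hτ _ hl ⟨l, rfl⟩, hτ _ hl, hσσ]
    · simp [τ, hl]
  · rw [hτ _ hl ⟨l, rfl⟩]
    exact fun heq => hσ _ hl ⟨l, rfl⟩ (Subtype.ext heq)
  · simp [τ, Nat.not_odd_iff_even.mpr hl]

/-- The direct sum of nilpotent Jordan blocks of sizes `mu l`. -/
def jordanShift (k : Type*) [CommRing k] {p : ℕ} (mu : Fin p → ℕ) :
    Matrix (Σ l, Fin (mu l)) (Σ l, Fin (mu l)) k :=
  Matrix.of fun x y => if x.1 = y.1 ∧ (x.2 : ℕ) = y.2 + 1 then 1 else 0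

theorem sigma_fin_ext {p : ℕ} {mu : Fin p → ℕ} {x y : Σ l, Fin (mu l)} (h : x.1 = y.1)
    (h' : (x.2 : ℕ) = y.2) : x = y := by
  obtain ⟨l, i⟩ := x
  obtain ⟨l', i'⟩ := y
  obtain rfl : l = l' := h
  obtain rfl : i = i' := Fin.ext h'
  rfl

theorem jordanShift_pow_apply {k : Type*} [CommRing k] {p : ℕ} (mu : Fin p → ℕ) (i : ℕ)
    (x y : Σ l, Fin (mu l)) :
    (jordanShift k mu ^ i) x y = if x.1 = y.1 ∧ (x.2 : ℕ) = y.2 + i then 1 else 0 := by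
  induction i generalizing x y with
  | zero =>
    rw [pow_zero, Matrix.one_apply]
    refine if_congr ⟨?_, fun h => sigma_fin_ext h.1 h.2⟩ rfl rfl
    rintro rfl; simp
  | succ i ih =>
    rw [pow_succ', Matrix.mul_apply]
    simp only [ih]
    by_cases hx : (x.2 : ℕ) = 0
    · rw [if_neg (by omega)]
      refine Finset.sum_eq_zero fun z _ => ?_
      simp [jordanShift, hx]
    · let z : Σ l, Fin (mu l) := ⟨x.1, ⟨x.2 - 1, by have := x.2.2; omega⟩⟩
      have hz : (z.2 : ℕ) = x.2 - 1 := rfl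
      rw [Finset.sum_eq_single z]
      · rw [jordanShift, Matrix.of_apply, if_pos ⟨rfl, by omega⟩, one_mul]
        exact if_congr (and_congr Iff.rfl (by omega)) rfl rfl
      · intro b _ hb
        rw [jordanShift, Matrix.of_apply, if_neg, zero_mul]
        rintro ⟨h1, h2⟩
        exact hb (sigma_fin_ext h1.symm (by omega))
      · simp

theorem rank_jordanShift_pow {k : Type*} [Field k] {p : ℕ} (mu : Fin p → ℕ) (i : ℕ) :
    (jordanShift k mu ^ i).rank = ∑ l, (mu l - i) := by
  let κ := Σ l, Fin (mu l - i)
  let E : Matrix (Σ l, Fin (mu l)) κ k :=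
    Matrix.of fun x z => if x.1 = z.1 ∧ (x.2 : ℕ) = z.2 + i then 1 else 0
  let F : Matrix κ (Σ l, Fin (mu l)) k :=
    Matrix.of fun z y => if z.1 = y.1 ∧ (z.2 : ℕ) = y.2 then 1 else 0
  have hκ : Fintype.card κ = ∑ l, (mu l - i) := by simp [κ]
  rw [← hκ]
  apply le_antisymm
  · have hEF : jordanShift k mu ^ i = E * F := by
      ext x y
      rw [jordanShift_pow_apply, Matrix.mul_apply]
      by_cases hx : i ≤ x.2
      · let z : κ := ⟨x.1, ⟨x.2 - i, by have := x.2.2; omega⟩⟩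
        have hz : (z.2 : ℕ) = x.2 - i := rfl
        rw [Finset.sum_eq_single z]
        · simp only [E, F, Matrix.of_apply]
          rw [if_pos (c := x.1 = z.1 ∧ _) ⟨rfl, by omega⟩, one_mul]
          exact if_congr (and_congr Iff.rfl (by omega)) rfl rfl
        · intro b _ hb
          simp only [E, Matrix.of_apply]
          rw [if_neg, zero_mul]
          rintro ⟨h1, h2⟩
          exact hb (sigma_fin_ext h1.symm (by omega))
        · simp
      · rw [if_neg (by omega)]
        refine (Finset.sum_eq_zero fun z _ => ?_).symm
        simp only [E, Matrix.of_apply]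
        rw [if_neg (by omega), zero_mul]
    rw [hEF]
    exact (Matrix.rank_mul_le_left _ _).trans (Matrix.rank_le_card_width _)
  · let r : κ → Σ l, Fin (mu l) := fun z => ⟨z.1, ⟨z.2 + i, by have := z.2.2; omega⟩⟩
    let c : κ → Σ l, Fin (mu l) := fun z => ⟨z.1, ⟨z.2, by have := z.2.2; omega⟩⟩
    have h1 : (jordanShift k mu ^ i).submatrix r c = 1 := by
      ext x y
      rw [Matrix.submatrix_apply, jordanShift_pow_apply, Matrix.one_apply]
      refine if_congr ⟨fun h => sigma_fin_ext h.1 ?_, ?_⟩ rfl rfl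
      · have := h.2; simp only [r, c] at this; omega
      · rintro rfl; simp [r, c]
    rw [← Matrix.rank_one (R := k) (n := κ), ← h1]
    exact Matrix.rank_submatrix_le _ _ _

/-- Conjugating to an orthonormal basis. -/
theorem exists_skew_of_adjoint {k ι : Type*} [Field k] [IsAlgClosed k] [CharZero k] [Fintype ι]
    [DecidableEq ι] (N a : Matrix ι ι k) (ha : aᵀ = a) (haa : a * a = 1) (hN : Nᵀ * a = -(a * N)) :
    ∃ ω : Matrix ι ι k, ωᵀ = -ω ∧ ∀ i, (ω ^ i).rank = (N ^ i).rank := by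
  obtain ⟨c, hc⟩ := exists_mul_transpose_of_isSymm (ι := ι) a ha (Matrix.rank_le_card_width a)
  have hcu : IsUnit c := IsUnit.of_mul_eq_one (cᵀ * a) (by rw [← Matrix.mul_assoc, ← hc, haa])
  have hcut : IsUnit cᵀ := (Matrix.isUnit_transpose c).mpr hcu
  let ω := cᵀ * (N * a) * c
  have haN : a * Nᵀ = -(N * a) := by
    calc a * Nᵀ = a * (Nᵀ * a) * a := by simp only [Matrix.mul_assoc, haa, Matrix.mul_one]
      _ = _ := by
        rw [hN, Matrix.mul_neg, Matrix.neg_mul, ← Matrix.mul_assoc a a, haa, Matrix.one_mul]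
  refine ⟨ω, ?_, fun i => ?_⟩
  · simp only [ω, Matrix.transpose_mul, Matrix.transpose_transpose, ha, haN, Matrix.mul_neg,
      Matrix.neg_mul, Matrix.mul_assoc]
  · have h1 : SemiconjBy cᵀ N ω := by
      simp only [SemiconjBy, ω, Matrix.mul_assoc]
      rw [← hc, haa, Matrix.mul_one]
    have h2 := h1.pow_right i
    rw [← Matrix.rank_mul_eq_left_of_isUnit_det cᵀ (ω ^ i)
        ((Matrix.isUnit_iff_isUnit_det _).mp hcut),
      ← h2.eq, Matrix.rank_mul_eq_right_of_isUnit_det _ _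
        ((Matrix.isUnit_iff_isUnit_det _).mp hcut)]

/-- Every partition obtained by removing a column from a symplectic partition is the Jordan type
of a skew-symmetric matrix. -/
theorem IsSymplecticParts.exists_skew {k : Type*} [Field k] [IsAlgClosed k] [CharZero k]
    {p : ℕ} {lam : Fin p → ℕ} (h : IsSymplecticParts lam) {j : ℕ} (hj : ∑ l, (lam l - 1) = j) :
    ∃ ω : Matrix (Fin j) (Fin j) k, ωᵀ = -ω ∧ ∀ i, (ω ^ i).rank = ∑ l, (lam l - 1 - i) := by
  obtain ⟨τ, hlam, hττ, hodd, heven⟩ := h.exists_involution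
  let mu : Fin p → ℕ := fun l => lam l - 1
  let ι := Σ l, Fin (mu l)
  let π : ι → ι := fun x => ⟨τ x.1, ⟨lam x.1 - 2 - x.2, by
    have := x.2.2; simp only [mu, hlam] at this ⊢; omega⟩⟩
  have hππ : ∀ x, π (π x) = x := fun x => sigma_fin_ext (hττ _) (by
    have := x.2.2; simp only [mu, π, hlam] at this ⊢; omega)
  let η : Fin p → k := fun l => if l ≤ τ l then 1 else -1
  let s : ι → k := fun x => η x.1 * (-1) ^ (x.2 : ℕ)
  have hηη : ∀ l, η l * η l = 1 := fun l => by
    simp only [η]; split_ifs <;> norm_num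
  have hss : ∀ x, s x * s x = 1 := fun x => by
    have : s x * s x = η x.1 * η x.1 * ((-1) * (-1)) ^ (x.2 : ℕ) := by
      simp only [s]; rw [mul_pow]; ring
    rw [this, hηη]; simp
  have hsπ : ∀ x, s (π x) = s x := fun x => by
    have hlt := x.2.2
    simp only [mu] at hlt
    simp only [s, π]
    rcases Nat.even_or_odd (lam x.1) with he | ho
    · rw [heven _ he]
      congr 1
      obtain ⟨r, hr⟩ := he
      rw [neg_one_pow_eq_pow_mod_two, neg_one_pow_eq_pow_mod_two (x.2 : ℕ)]
      congr 1
      omega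
    · have h1 : η (τ x.1) = - η x.1 := by
        have hne := hodd _ ho
        simp only [η, hττ]
        rcases lt_or_gt_of_ne hne with h2 | h2
        · rw [if_pos h2.le, if_neg (not_le.mpr h2)]; simp
        · rw [if_pos h2.le, if_neg (not_le.mpr h2)]
      obtain ⟨r, hr⟩ := ho
      have h2 : (-1 : k) ^ (lam x.1 - 2 - x.2) = - (-1) ^ (x.2 : ℕ) := by
        rw [← neg_one_mul ((-1 : k) ^ (x.2 : ℕ)), ← pow_succ', neg_one_pow_eq_pow_mod_two,
          neg_one_pow_eq_pow_mod_two ((x.2 : ℕ) + 1)]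
        congr 1
        omega
      rw [h1, h2]; ring
  let a : Matrix ι ι k := Matrix.of fun x y => if y = π x then s x else 0
  have hπeq : ∀ x y, y = π x ↔ x = π y := fun x y =>
    ⟨fun h => by rw [h, hππ], fun h => by rw [h, hππ]⟩
  have ha : aᵀ = a := by
    ext x y
    simp only [a, Matrix.transpose_apply, Matrix.of_apply]
    by_cases hxy : y = π x
    · rw [if_pos hxy, if_pos ((hπeq x y).mp hxy), hxy, hsπ]
    · rw [if_neg hxy, if_neg (fun h => hxy ((hπeq x y).mpr h))]
  have hmulL : ∀ (B : Matrix ι ι k) x y, (a * B) x y = s x * B (π x) y := fun B x y => by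
    simp [a, Matrix.mul_apply]
  have hmulR : ∀ (B : Matrix ι ι k) x y, (B * a) x y = B x (π y) * s y := fun B x y => by
    rw [← ha, ← Matrix.transpose_transpose B, ← Matrix.transpose_mul, Matrix.transpose_apply,
      hmulL, mul_comm]
    simp
  have haa : a * a = 1 := by
    ext x y
    rw [hmulL, Matrix.one_apply]
    simp only [a, Matrix.of_apply, hππ, hsπ, mul_ite, hss, mul_zero, eq_comm]
  have hN : (jordanShift k mu)ᵀ * a = -(a * jordanShift k mu) := by
    ext x y
    rw [Matrix.neg_apply, hmulL, hmulR, Matrix.transpose_apply]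
    simp only [jordanShift, Matrix.of_apply]
    have hx := x.2.2
    have hy := y.2.2
    have hz : ∀ z : ι, (π z).1 = τ z.1 ∧ ((π z).2 : ℕ) = lam z.1 - 2 - z.2 := fun z => ⟨rfl, rfl⟩
    simp only [mu] at hx hy
    by_cases hc : (π y).1 = x.1 ∧ ((π y).2 : ℕ) = x.2 + 1
    · have hc' : (π x).1 = y.1 ∧ ((π x).2 : ℕ) = y.2 + 1 := by
        have h1 : τ x.1 = y.1 := by rw [← hc.1, (hz y).1, hττ]
        have h2 := hlam x.1
        rw [h1] at h2
        have h3 := hc.2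
        rw [(hz _).2] at h3
        exact ⟨h1, by rw [(hz _).2]; omega⟩
      rw [if_pos hc, if_pos hc', ← hsπ y]
      have h1 : s (π y) = η x.1 * (-1) ^ ((x.2 : ℕ) + 1) := by
        rw [← hc.2, ← show η (π y).1 = η x.1 from congrArg η hc.1]
      rw [h1]
      simp only [s]
      ring
    · have hc' : ¬((π x).1 = y.1 ∧ ((π x).2 : ℕ) = y.2 + 1) := by
        rintro ⟨h1, h3⟩
        rw [(hz _).1] at h1
        rw [(hz _).2] at h3
        have h2 := hlam x.1
        rw [h1] at h2
        exact hc ⟨by rw [(hz y).1, ← h1, hττ], by rw [(hz _).2]; omega⟩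
      rw [if_neg hc, if_neg hc']
      simp
  obtain ⟨ω, hω, hr⟩ := exists_skew_of_adjoint _ _ ha haa hN
  have e : Fin j ≃ ι := Fintype.equivOfCardEq (by simp [ι, mu, hj])
  refine ⟨ω.submatrix e e, ?_, fun i => ?_⟩
  · rw [Matrix.transpose_submatrix, hω]; rfl
  · have : ω.submatrix e e ^ i = (ω ^ i).submatrix e e := by
      have := map_pow (Matrix.reindexAlgEquiv k k e.symm) ω i
      simpa using this.symm
    rw [this, Matrix.rank_submatrix, hr, rank_jordanShift_pow]

theorem mem_zClosure_of_quadratic {k : Type*} [Field k] [Infinite k] {N : ℕ}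
    {S : Set (Matrix (Fin N) (Fin N) k)} (A₀ A₁ A₂ : Matrix (Fin N) (Fin N) k)
    {D : Polynomial k} (hD : D ≠ 0)
    (h : ∀ t, D.eval t ≠ 0 → A₀ + t • A₁ + t ^ 2 • A₂ ∈ zClosure S) : A₀ ∈ zClosure S := by
  let f : Matrix (Fin N) (Fin N) (Polynomial k) := Matrix.of fun a b =>
    Polynomial.C (A₀ a b) + Polynomial.X * Polynomial.C (A₁ a b)
      + Polynomial.X ^ 2 * Polynomial.C (A₂ a b)
  have hf : ∀ t, f.map (Polynomial.eval t) = A₀ + t • A₁ + t ^ 2 • A₂ := fun t => by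
    ext a b
    simp [f]
    ring
  have := mem_zClosure_of_curve f D hD fun t ht => by rw [hf]; exact h t ht
  rw [hf] at this
  simpa using this

theorem add_smul_mul_transpose {m ι k : Type*} [Fintype ι] [CommRing k] (V V' : Matrix m ι k)
    (t : k) : (V + t • V') * (V + t • V')ᵀ
      = V * Vᵀ + t • (V * V'ᵀ + V' * Vᵀ) + t ^ 2 • (V' * V'ᵀ) := by
  simp only [Matrix.transpose_add, Matrix.transpose_smul, Matrix.mul_add, Matrix.add_mul,
    Matrix.mul_smul, Matrix.smul_mul, smul_add, smul_smul, pow_two]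
  abel

theorem transpose_Jmat (k : Type*) [CommRing k] (n : ℕ) : (Jmat k n)ᵀ = -Jmat k n := by
  ext a b
  have := a.2
  have := b.2
  simp only [Jmat, Matrix.transpose_apply, Matrix.of_apply, Matrix.neg_apply]
  split_ifs <;> first | omega | simp

theorem Jmat_mul_Jmat (k : Type*) [CommRing k] (n : ℕ) : Jmat k n * Jmat k n = -1 := by
  ext a b
  have ha := a.2
  have hb := b.2
  rw [Matrix.mul_apply, Matrix.neg_apply, Matrix.one_apply]
  let c : Fin (2 * n) := if h : (a : ℕ) < n then ⟨a + n, by omega⟩ else ⟨a - n, by omega⟩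
  have hc : (c : ℕ) = if (a : ℕ) < n then (a : ℕ) + n else a - n := by
    simp only [c]; split_ifs <;> rfl
  rw [Finset.sum_eq_single c]
  · simp only [Jmat, Matrix.of_apply, hc, Fin.ext_iff]
    split_ifs <;> first | omega | simp
  · intro d _ hd
    have hd' : (d : ℕ) ≠ c := fun h => hd (Fin.ext h)
    rw [hc] at hd'
    have := d.2
    simp only [Jmat, Matrix.of_apply]
    split_ifs at hd' ⊢ <;> first | omega | simp
  · simp

theorem Jmat_mul_mem_spSet {k : Type*} [CommRing k] {n : ℕ}
    {S : Matrix (Fin (2 * n)) (Fin (2 * n)) k} (hS : Sᵀ = S) : Jmat k n * S ∈ spSet k n := by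
  change (Jmat k n * S)ᵀ * Jmat k n + Jmat k n * (Jmat k n * S) = 0
  rw [Matrix.transpose_mul, hS, transpose_Jmat, Matrix.mul_assoc, Matrix.neg_mul, Jmat_mul_Jmat,
    ← Matrix.mul_assoc, Jmat_mul_Jmat]
  simp

theorem smul_mem_spSet {k : Type*} [CommRing k] {n : ℕ} (c : k)
    {M : Matrix (Fin (2 * n)) (Fin (2 * n)) k} (hM : M ∈ spSet k n) : c • M ∈ spSet k n := by
  change Mᵀ * Jmat k n + Jmat k n * M = 0 at hM
  change (c • M)ᵀ * Jmat k n + Jmat k n * (c • M) = 0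
  rw [Matrix.transpose_smul, Matrix.smul_mul, Matrix.mul_smul, ← smul_add, hM, smul_zero]

theorem mul_pow_succ_eq {m ι k : Type*} [Fintype m] [DecidableEq m] [Fintype ι] [DecidableEq ι]
    [CommRing k] (A : Matrix m ι k) (B : Matrix ι m k) (i : ℕ) :
    (A * B) ^ (i + 1) = A * (B * A) ^ i * B := by
  induction i with
  | zero => simp
  | succ i ih => rw [pow_succ, ih, pow_succ]; simp only [Matrix.mul_assoc]

theorem rank_mul_pow_succ {m ι k : Type*} [Fintype m] [DecidableEq m] [Fintype ι] [DecidableEq ι]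
    [Field k] {A L' : Matrix m ι k} {B L : Matrix ι m k} (hA : L * A = 1) (hB : B * L' = 1)
    (i : ℕ) : ((A * B) ^ (i + 1)).rank = ((B * A) ^ i).rank := by
  rw [mul_pow_succ_eq]
  apply le_antisymm
  · exact (Matrix.rank_mul_le_left _ _).trans (Matrix.rank_mul_le_right _ _)
  · have : (B * A) ^ i = L * (A * (B * A) ^ i * B) * L' := by
      calc (B * A) ^ i = L * A * (B * A) ^ i * (B * L') := by
            rw [hA, hB, Matrix.one_mul, Matrix.mul_one]
        _ = _ := by simp only [Matrix.mul_assoc]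
    conv_lhs => rw [this]
    exact (Matrix.rank_mul_le_left _ _).trans (Matrix.rank_mul_le_right _ _)

/-- A factorization criterion for membership in a symplectic nilpotent orbit. -/
theorem smul_Jmat_mul_mem_orbit {k : Type*} [Field k] {n p j : ℕ} {lam : Fin p → ℕ}
    {ω : Matrix (Fin j) (Fin j) k} (hr : ∀ i, (ω ^ i).rank = ∑ l, (lam l - 1 - i))
    {V R : Matrix (Fin (2 * n)) (Fin j) k} (hR : Vᵀ * R = 1) {c e : k} (hc : c ≠ 0) (he : e ≠ 0)
    (hV : Vᵀ * Jmat k n * V = e • ω) :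
    c • (Jmat k n * (V * Vᵀ)) ∈ jordanOrbit k (2 * n) lam ∩ spSet k n := by
  refine ⟨fun i hi => ?_, smul_mem_spSet c (Jmat_mul_mem_spSet (by simp))⟩
  obtain ⟨i, rfl⟩ : ∃ i', i = i' + 1 := ⟨i - 1, by omega⟩
  have h1 : c • (Jmat k n * (V * Vᵀ)) = Jmat k n * V * (c • Vᵀ) := by
    rw [Matrix.mul_smul, Matrix.mul_assoc]
  have h2 : (c • Vᵀ) * (Jmat k n * V) = (c * e) • ω := by
    rw [Matrix.smul_mul, ← Matrix.mul_assoc, hV, smul_smul]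
  have hL : -(Rᵀ * Jmat k n) * (Jmat k n * V) = 1 := by
    rw [Matrix.neg_mul, Matrix.mul_assoc, ← Matrix.mul_assoc (Jmat k n), Jmat_mul_Jmat,
      ← Matrix.transpose_one (n := Fin j), ← hR, Matrix.transpose_mul, Matrix.transpose_transpose]
    simp
  have hL' : (c • Vᵀ) * (c⁻¹ • R) = 1 := by
    rw [Matrix.smul_mul, Matrix.mul_smul, smul_smul, mul_inv_cancel₀ hc, one_smul, hR]
  rw [h1, rank_mul_pow_succ hL hL', h2, smul_pow,
    Matrix.rank_smul_of_mem_nonZeroDivisors _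
      (mem_nonZeroDivisors_of_ne_zero (pow_ne_zero _ (mul_ne_zero hc he))), hr]
  exact Finset.sum_congr rfl fun l _ => by omega

/-- Perturbing a Lagrangian frame `V` along a dual Lagrangian frame `V'`. -/
theorem perturbed_form {k m : Type*} [Field k] [CharZero k] {j : ℕ} [Fintype m]
    {K : Matrix m m k} {ω L : Matrix (Fin j) (Fin j) k} (hω : ωᵀ = -ω) (hLt : Lᵀ = L)
    (hL : IsUnit L.det) {V V' : Matrix m (Fin j) k} (h1 : Vᵀ * K * V = 0) (h2 : V'ᵀ * K * V' = 0)
    (h3 : Vᵀ * K * V' = L) (h4 : V'ᵀ * K * V = -L) (t : k) :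
    (V + t • (V' * ((2⁻¹ : k) • (L⁻¹ * ω))))ᵀ * K * (V + t • (V' * ((2⁻¹ : k) • (L⁻¹ * ω))))
      = t • ω := by
  have e1 : Vᵀ * K * (V' * (L⁻¹ * ω)) = ω := by
    rw [← Matrix.mul_assoc, h3, Matrix.mul_nonsing_inv_cancel_left _ _ hL]
  have e2 : (V' * (L⁻¹ * ω))ᵀ * K * V = ω := by
    rw [Matrix.transpose_mul, Matrix.mul_assoc, Matrix.mul_assoc, ← Matrix.mul_assoc _ K, h4,
      Matrix.transpose_mul, hω, Matrix.transpose_nonsing_inv, hLt]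
    simp [Matrix.mul_assoc, Matrix.nonsing_inv_mul _ hL]
  have e3 : (V' * (L⁻¹ * ω))ᵀ * K * (V' * (L⁻¹ * ω)) = 0 := by
    calc _ = (L⁻¹ * ω)ᵀ * (V'ᵀ * K * V') * (L⁻¹ * ω) := by
          simp only [Matrix.transpose_mul, Matrix.mul_assoc]
      _ = 0 := by rw [h2]; simp
  rw [Matrix.mul_smul, Matrix.transpose_add, Matrix.transpose_smul, Matrix.transpose_smul]
  simp only [Matrix.add_mul, Matrix.mul_add, Matrix.smul_mul, Matrix.mul_smul, h1, e1, e2, e3]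
  rw [smul_zero, smul_zero, add_zero, zero_add, ← smul_add, ← add_smul]
  norm_num

/-- The perturbed Lagrangian frame keeps its duality with `V'`. -/
theorem perturbed_dual {k m : Type*} [Field k] {j : ℕ} [Fintype m]
    {K : Matrix m m k} {L : Matrix (Fin j) (Fin j) k}
    (hL : IsUnit L.det) {V V' : Matrix m (Fin j) k} (h2 : V'ᵀ * K * V' = 0)
    (h3 : Vᵀ * K * V' = L) (t : k) (C : Matrix (Fin j) (Fin j) k) :
    (V + t • (V' * C))ᵀ * (K * V' * L⁻¹) = 1 := by
  have : (V + t • (V' * C))ᵀ * (K * V' * L⁻¹)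
      = (Vᵀ * K * V' + t • (Cᵀ * (V'ᵀ * K * V'))) * L⁻¹ := by
    simp only [Matrix.transpose_add, Matrix.transpose_smul, Matrix.transpose_mul, Matrix.add_mul,
      Matrix.smul_mul, Matrix.mul_assoc]
  rw [this, h2, h3, Matrix.mul_zero, smul_zero, add_zero, Matrix.mul_nonsing_inv _ hL]

theorem Jmat_mul_mem_zClosure_of_separable {k : Type*} [Field k] [IsAlgClosed k] [CharZero k]
    {n p j : ℕ} {lam : Fin p → ℕ} (hsymp : IsSymplecticParts lam) (hj : ∑ l, (lam l - 1) = j)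
    {I : Type*} [Fintype I] [DecidableEq I] (hI : Fintype.card I = 2 * j)
    (W : Matrix (Fin (2 * n)) I k) (hsep : (Wᵀ * Jmat k n * W).charpoly.Separable) :
    Jmat k n * (W * Wᵀ) ∈ zClosure (Set.image2 (· + ·) (jordanOrbit k (2 * n) lam ∩ spSet k n)
        (jordanOrbit k (2 * n) lam ∩ spSet k n)) := by
  obtain ⟨ω, hω, hr⟩ := hsymp.exists_skew (k := k) hj
  have hJ := transpose_Jmat k n
  obtain ⟨U, V, d, hd, hUU, hVV, hUV, hone⟩ := exists_isotropic_pair hI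
    (T := Wᵀ * Jmat k n * W) (by simp [Matrix.mul_assoc, hJ]) hsep
  set K := Jmat k n with hK
  let A := W * U
  let B := W * V
  have hAA : Aᵀ * K * A = 0 := by rw [← hUU]; simp only [A, Matrix.transpose_mul, Matrix.mul_assoc]
  have hBB : Bᵀ * K * B = 0 := by rw [← hVV]; simp only [B, Matrix.transpose_mul, Matrix.mul_assoc]
  have hAB : Aᵀ * K * B = diagonal d := by
    rw [← hUV]; simp only [A, B, Matrix.transpose_mul, Matrix.mul_assoc]
  have hBA : Bᵀ * K * A = -diagonal d := by
    rw [← Matrix.diagonal_transpose, ← hAB]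
    simp [Matrix.mul_assoc, hJ]
  have hWW : W * Wᵀ = A * Bᵀ + B * Aᵀ := by
    calc W * Wᵀ = W * (U * Vᵀ + V * Uᵀ) * Wᵀ := by rw [hone, Matrix.mul_one]
      _ = _ := by
        simp only [A, B, Matrix.transpose_mul, Matrix.mul_assoc, Matrix.mul_add, Matrix.add_mul]
  let L := diagonal d
  have hLt : Lᵀ = L := Matrix.diagonal_transpose d
  have hL : IsUnit L.det := by
    simp only [L, Matrix.det_diagonal, isUnit_iff_ne_zero]
    exact Finset.prod_ne_zero_iff.mpr fun i _ => hd i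
  have hL' : IsUnit (-L).det := by
    rw [Matrix.det_neg]; exact (isUnit_one.neg.pow _).mul hL
  let V₁ := A + (2⁻¹ : k) • B
  let V₂ := A - (2⁻¹ : k) • B
  have hhalf : (2⁻¹ : k) + 2⁻¹ = 1 := by norm_num
  have hVsub : V₁ * V₁ᵀ - V₂ * V₂ᵀ = W * Wᵀ := by
    rw [hWW, ← one_smul k (A * Bᵀ), ← one_smul k (B * Aᵀ), ← hhalf]
    simp only [V₁, V₂, Matrix.transpose_add, Matrix.transpose_sub, Matrix.transpose_smul,
      Matrix.add_mul, Matrix.mul_add, Matrix.sub_mul, Matrix.mul_sub, Matrix.smul_mul,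
      Matrix.mul_smul, add_smul, smul_add, smul_sub]
    abel
  have hexp : ∀ a b : k, (A + a • B)ᵀ * K * (A + b • B) = (b - a) • L := fun a b => by
    simp only [Matrix.transpose_add, Matrix.transpose_smul, Matrix.add_mul, Matrix.mul_add,
      Matrix.smul_mul, Matrix.mul_smul, hAA, hBB, hAB, hBA, L, sub_smul, smul_neg, smul_zero]
    abel_nf
  have hV₂ : V₂ = A + (-2⁻¹ : k) • B := by simp only [V₂, neg_smul, sub_eq_add_neg]
  have h11 : V₁ᵀ * K * V₁ = 0 := by simp only [V₁]; rw [hexp]; simp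
  have h22 : V₂ᵀ * K * V₂ = 0 := by rw [hV₂, hexp]; simp
  have h12 : V₁ᵀ * K * V₂ = -L := by
    simp only [V₁]; rw [hV₂, hexp, ← neg_add', hhalf, neg_one_smul]
  have h21 : V₂ᵀ * K * V₁ = L := by
    simp only [V₁]; rw [hV₂, hexp, sub_neg_eq_add, hhalf, one_smul]
  let Y₁ := V₂ * ((2⁻¹ : k) • ((-L)⁻¹ * ω))
  let Y₂ := V₁ * ((2⁻¹ : k) • (L⁻¹ * ω))
  rw [← hVsub]
  refine mem_zClosure_of_quadratic _
    (K * ((V₁ * Y₁ᵀ + Y₁ * V₁ᵀ) - (V₂ * Y₂ᵀ + Y₂ * V₂ᵀ))) (K * (Y₁ * Y₁ᵀ - Y₂ * Y₂ᵀ))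
    (D := Polynomial.X) Polynomial.X_ne_zero fun t ht => subset_zClosure _ ?_
  rw [Polynomial.eval_X] at ht
  refine ⟨(1 : k) • (K * ((V₁ + t • Y₁) * (V₁ + t • Y₁)ᵀ)),
    smul_Jmat_mul_mem_orbit hr (perturbed_dual hL' h22 h12 t _) one_ne_zero ht
      (perturbed_form hω (by rw [Matrix.transpose_neg, hLt]) hL' h11 h22 h12
        (by rw [neg_neg, h21]) t),
    (-1 : k) • (K * ((V₂ + t • Y₂) * (V₂ + t • Y₂)ᵀ)),
    smul_Jmat_mul_mem_orbit hr (perturbed_dual hL h11 h21 t _) (neg_ne_zero.mpr one_ne_zero) ht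
      (perturbed_form hω hLt hL h22 h11 h21 h12 t), ?_⟩
  simp only [add_smul_mul_transpose, one_smul, neg_one_smul, Matrix.mul_add, Matrix.mul_sub,
    Matrix.mul_smul, smul_add, smul_sub]
  abel

theorem separable_iff_resultant_ne_zero {k : Type*} [Field k] [CharZero k] {f : Polynomial k}
    (hf : f.Monic) :
    f.Separable ↔ Polynomial.resultant f f.derivative f.natDegree (f.natDegree - 1) ≠ 0 := by
  rw [← Polynomial.natDegree_derivative f, ← isUnit_iff_ne_zero,
    Polynomial.isUnit_resultant_iff_isCoprime hf]
  rfl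

/-- Separability of the characteristic polynomial is an open condition along a curve. -/
theorem exists_separable_charpoly_locus {k I : Type*} [Field k] [CharZero k] [Fintype I]
    [DecidableEq I] (T : Matrix I I (Polynomial k)) : ∃ D : Polynomial k, ∀ t,
      D.eval t ≠ 0 ↔ (T.map (Polynomial.eval t)).charpoly.Separable := by
  refine ⟨Polynomial.resultant T.charpoly T.charpoly.derivative (Fintype.card I)
    (Fintype.card I - 1), fun t => ?_⟩
  rw [separable_iff_resultant_ne_zero (Matrix.charpoly_monic _), Matrix.charpoly_natDegree_eq_dim,
    ← Polynomial.coe_evalRingHom, Matrix.charpoly_map, Polynomial.derivative_map,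
    Polynomial.resultant_map_map]

theorem separable_charpoly_fromBlocks {k ι : Type*} [Field k] [IsAlgClosed k] [CharZero k]
    [Fintype ι] [DecidableEq ι] (d : ι → k) (hd : Function.Injective d)
    (hdd : ∀ i i', d i + d i' ≠ 0) :
    (Matrix.fromBlocks 0 (diagonal d) (-diagonal d) 0).charpoly.Separable := by
  obtain ⟨z, hz⟩ := IsAlgClosed.exists_pow_nat_eq (-1 : k) (n := 2) two_pos
  have hz' : z * z = -1 := by rw [← pow_two, hz]
  have hz0 : z ≠ 0 := by rintro rfl; norm_num at hz
  let P : Matrix (ι ⊕ ι) (ι ⊕ ι) k := Matrix.fromBlocks 1 1 (z • 1) (-z • 1)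
  let Q : Matrix (ι ⊕ ι) (ι ⊕ ι) k :=
    (2⁻¹ : k) • Matrix.fromBlocks 1 (-z • 1) 1 (z • 1)
  let δ : ι ⊕ ι → k := Sum.elim (fun i => z * d i) (fun i => -(z * d i))
  have hPQ : P * Q = 1 := by
    simp only [P, Q, Matrix.mul_smul, Matrix.fromBlocks_multiply, ← Matrix.fromBlocks_one,
      Matrix.fromBlocks_smul, Matrix.mul_one]
    congr 1 <;> ext a b <;>
      simp only [Matrix.smul_apply, Matrix.add_apply, Matrix.zero_apply, smul_eq_mul, neg_smul,
        Matrix.neg_apply]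
    · ring
    · ring
    · ring
    · linear_combination (-(1 : Matrix ι ι k) a b) * hz'
  have hQP : Q * P = 1 := mul_eq_one_comm.mp hPQ
  have hTP : Matrix.fromBlocks 0 (diagonal d) (-diagonal d) 0 = P * diagonal δ * Q := by
    have h1 : diagonal δ = Matrix.fromBlocks (z • diagonal d) 0 0 (-z • diagonal d) := by
      rw [← Matrix.diagonal_smul, ← Matrix.diagonal_smul, Matrix.fromBlocks_diagonal]
      congr 1
      ext (i | i) <;> simp [δ]
    have h2 : Matrix.fromBlocks 0 (diagonal d) (-diagonal d) 0 * P = P * diagonal δ := by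
      rw [h1]
      simp [P, Matrix.fromBlocks_multiply, smul_smul, hz']
    rw [← h2, Matrix.mul_assoc, hPQ, Matrix.mul_one]
  have hconj := Matrix.charpoly_units_conj
    (⟨P, Q, hPQ, hQP⟩ : (Matrix (ι ⊕ ι) (ι ⊕ ι) k)ˣ) (diagonal δ)
  change (P * diagonal δ * P⁻¹).charpoly = _ at hconj
  rw [Matrix.inv_eq_right_inv hPQ] at hconj
  rw [hTP, hconj,
    Matrix.charpoly_diagonal,
    Polynomial.separable_prod_X_sub_C_iff]
  rintro (i | i) (i' | i') h <;> simp only [δ, Sum.elim_inl, Sum.elim_inr] at h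
  · rw [hd (mul_left_cancel₀ hz0 h)]
  · exact absurd (mul_left_cancel₀ hz0 (a := z) (b := d i + d i') (c := 0)
      (by linear_combination h)) (hdd _ _)
  · exact absurd (mul_left_cancel₀ hz0 (a := z) (b := d i + d i') (c := 0)
      (by linear_combination -h)) (hdd _ _)
  · rw [hd (mul_left_cancel₀ hz0 (neg_injective h))]

theorem exists_separable_charpoly {k : Type*} [Field k] [IsAlgClosed k] [CharZero k] {n j : ℕ}
    (hjn : j < n) : ∃ W : Matrix (Fin (2 * n)) (Fin j ⊕ Fin j) k,
      (Wᵀ * Jmat k n * W).charpoly.Separable := by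
  let e : Fin j ⊕ Fin j → Fin (2 * n) :=
    Sum.elim (fun i => ⟨i, by have := i.2; omega⟩) (fun i => ⟨i + n, by have := i.2; omega⟩)
  let d : Fin j → k := fun i => ((i : ℕ) : k) + 1
  let w : Matrix (Fin j ⊕ Fin j) (Fin j ⊕ Fin j) k := Matrix.fromBlocks 1 0 0 (diagonal d)
  have hwt : wᵀ = w := by simp [w, Matrix.fromBlocks_transpose]
  have hJ : (Jmat k n).submatrix e e = Matrix.fromBlocks 0 1 (-1) 0 := by
    ext (a | a) (b | b) <;>
    · have := a.2
      have := b.2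
      simp only [e, Jmat, Matrix.submatrix_apply, Matrix.of_apply, Sum.elim_inl, Sum.elim_inr,
        Matrix.fromBlocks_apply₁₁, Matrix.fromBlocks_apply₁₂, Matrix.fromBlocks_apply₂₁,
        Matrix.fromBlocks_apply₂₂, Matrix.zero_apply, Matrix.neg_apply, Matrix.one_apply,
        Fin.ext_iff]
      split_ifs <;> first | omega | simp
  let E : Matrix (Fin (2 * n)) (Fin j ⊕ Fin j) k := (1 : Matrix _ _ k).submatrix id e
  have hE : Eᵀ * Jmat k n * E = (Jmat k n).submatrix e e := by
    ext a b
    simp [E, Matrix.mul_apply, Matrix.one_apply]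
  refine ⟨E * w, ?_⟩
  have : (E * w)ᵀ * Jmat k n * (E * w) = Matrix.fromBlocks 0 (diagonal d) (-diagonal d) 0 := by
    calc _ = w * (Eᵀ * Jmat k n * E) * w := by
          simp only [Matrix.transpose_mul, hwt, Matrix.mul_assoc]
      _ = _ := by rw [hE, hJ]; simp [w, Matrix.fromBlocks_multiply]
  rw [this]
  refine separable_charpoly_fromBlocks d (fun a b h => ?_) fun a b => ?_
  · simpa [d, Fin.ext_iff] using h
  · simp only [d]
    exact_mod_cast (by omega : ((a : ℕ) + 1) + (b + 1) ≠ 0)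

theorem Jmat_mul_mem_zClosure {k : Type*} [Field k] [IsAlgClosed k] [CharZero k]
    {n p j : ℕ} {lam : Fin p → ℕ} (hsymp : IsSymplecticParts lam) (hj : ∑ l, (lam l - 1) = j)
    (hjn : j < n) (W : Matrix (Fin (2 * n)) (Fin j ⊕ Fin j) k) :
    Jmat k n * (W * Wᵀ) ∈ zClosure (Set.image2 (· + ·) (jordanOrbit k (2 * n) lam ∩ spSet k n)
        (jordanOrbit k (2 * n) lam ∩ spSet k n)) := by
  obtain ⟨W₀, hW₀⟩ := exists_separable_charpoly (k := k) hjn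
  let Y := W₀ - W
  let Wp : Matrix (Fin (2 * n)) (Fin j ⊕ Fin j) (Polynomial k) :=
    W.map Polynomial.C + (Polynomial.X : Polynomial k) • Y.map Polynomial.C
  have hWp : ∀ t, Wp.map (Polynomial.evalRingHom t) = W + t • Y := fun t => by
    ext a b
    simp [Wp, mul_comm t]
  obtain ⟨D, hD⟩ := exists_separable_charpoly_locus (Wpᵀ * (Jmat k n).map Polynomial.C * Wp)
  have hmap : ∀ t, (Wpᵀ * (Jmat k n).map Polynomial.C * Wp).map (Polynomial.eval t)
      = (W + t • Y)ᵀ * Jmat k n * (W + t • Y) := fun t => by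
    rw [← Polynomial.coe_evalRingHom, Matrix.map_mul, Matrix.map_mul, ← hWp, Matrix.transpose_map]
    congr 2
    ext a b
    simp
  refine mem_zClosure_of_quadratic _ (Jmat k n * (W * Yᵀ + Y * Wᵀ)) (Jmat k n * (Y * Yᵀ))
    (D := D) ?_ fun t ht => ?_
  · rintro rfl
    refine (hD 1).mpr ?_ Polynomial.eval_zero
    rw [hmap, one_smul, add_sub_cancel]
    exact hW₀
  · have := Jmat_mul_mem_zClosure_of_separable hsymp hj (by simp [two_mul]) (W + t • Y)
      (by rw [← hmap]; exact (hD t).mp ht)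
    rwa [add_smul_mul_transpose, Matrix.mul_add, Matrix.mul_add, Matrix.mul_smul,
      Matrix.mul_smul] at this

theorem rank_add_le_add {m m' k : Type*} [Fintype m] [Fintype m'] [Field k] (A B : Matrix m m' k) :
    (A + B).rank ≤ A.rank + B.rank := by
  rw [Matrix.rank, Matrix.rank, Matrix.rank, Matrix.mulVecLin_add]
  exact (Submodule.finrank_mono (LinearMap.range_add_le _ _)).trans
    (Submodule.finrank_add_le_finrank_add_finrank _ _)

/-- For a symplectic partition `λ` of `2n` with `j := 2n − p < n`, the conical secant
variety of the nilpotent `Sp_{2n}`-orbit `O_λ ∩ sp_{2n}` is the set of symplectic matrices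
of rank at most `2j`. -/
theorem stmt4 {k : Type*} [Field k] [IsAlgClosed k] [CharZero k]
    {n p j : ℕ} (lam : Fin p → ℕ)
    (hanti : Antitone lam) (hpos : ∀ l, 1 ≤ lam l)
    (hsum : ∑ l, lam l = 2 * n)
    (hsymp : IsSymplecticParts lam)
    (hj : j = 2 * n - p) (hjn : j < n) :
    zClosure (Set.image2 (· + ·) (jordanOrbit k (2 * n) lam ∩ spSet k n)
        (jordanOrbit k (2 * n) lam ∩ spSet k n))
      = {M | M ∈ spSet k n ∧ M.rank ≤ 2 * j} := by
  have hsum' : ∑ l, (lam l - 1) = j := by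
    have h : ∑ l, (lam l - 1) + ∑ _l : Fin p, 1 = ∑ l, lam l := by
      rw [← Finset.sum_add_distrib]
      exact Finset.sum_congr rfl fun l _ => Nat.sub_add_cancel (hpos l)
    rw [hsum] at h
    simp at h
    omega
  ext M
  refine ⟨fun hM => ⟨mem_spSet_of_mem_zClosure ?_ hM, rank_le_of_mem_zClosure ?_ hM⟩, ?_⟩
  · rintro _ ⟨x, ⟨-, hx⟩, y, ⟨-, hy⟩, rfl⟩
    change xᵀ * Jmat k n + Jmat k n * x = 0 at hx
    change yᵀ * Jmat k n + Jmat k n * y = 0 at hy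
    change (x + y)ᵀ * Jmat k n + Jmat k n * (x + y) = 0
    rw [Matrix.transpose_add, Matrix.add_mul, Matrix.mul_add, add_add_add_comm, hx, hy, add_zero]
  · rintro _ ⟨x, ⟨hx, -⟩, y, ⟨hy, -⟩, rfl⟩
    have hx1 := hx 1 le_rfl
    have hy1 := hy 1 le_rfl
    rw [pow_one, hsum'] at hx1 hy1
    have := rank_add_le_add x y
    dsimp only
    omega
  · rintro ⟨hM, hr⟩
    change Mᵀ * Jmat k n + Jmat k n * M = 0 at hM
    have hsymm : (-(Jmat k n * M)).IsSymm := by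
      rw [Matrix.IsSymm, Matrix.transpose_neg, Matrix.transpose_mul, transpose_Jmat,
        Matrix.mul_neg, neg_neg, eq_neg_iff_add_eq_zero, hM]
    obtain ⟨W, hW⟩ := exists_mul_transpose_of_isSymm (ι := Fin j ⊕ Fin j) _ hsymm (by
      rw [← Matrix.neg_mul]
      exact (Matrix.rank_mul_le_right _ _).trans (hr.trans (by simp [two_mul])))
    have hMW : M = Jmat k n * (W * Wᵀ) := by
      rw [← hW, Matrix.mul_neg, ← Matrix.mul_assoc, Jmat_mul_Jmat]
      simp
    rw [hMW]
    exact Jmat_mul_mem_zClosure hsymp hsum' hjn W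
end
end

section
/- Let k be an algebraically closed field of characteristic 0, N ≥ 7, and let λ be an orthogonal partition of N with λ₁ ≥ 3 whose number of parts p satisfies N − p ≥ ⌊N/2⌋. Then the Zariski closure in Mat_N(k) of the set {x + y : x, y ∈ O_λ ∩ so_N(k)} equals so_N(k); that is, the conical secant variety of this nilpotent orbit is all of so_N. -/
open Matrix

noncomputable section

/-- The orthogonal Lie algebra `so_N(k)`: skew-symmetric matrices. -/
def soSet (k : Type*) [CommRing k] (N : ℕ) : Set (Matrix (Fin N) (Fin N) k) :=
  {M | Mᵀ = -M}

/-- A partition is orthogonal if each (nonzero) even part occurs with even multiplicity. -/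
def IsOrthogonalParts {p : ℕ} (lam : Fin p → ℕ) : Prop :=
  ∀ m : ℕ, 0 < m → Even m → Even ((Finset.univ.filter (fun l => lam l = m)).card)

/-- Injectivity is an open condition along a polynomial family of linear maps. -/
lemma finite_setOf_not_injective_of_polynomial_family {k E F : Type*} [Field k]
    [AddCommGroup E] [Module k E] [FiniteDimensional k E] [AddCommGroup F] [Module k F]
    (d : ℕ) (T : ℕ → E →ₗ[k] F) (h0 : Function.Injective (T 0)) :
    {t : k | ¬ Function.Injective
      (∑ i ∈ Finset.range (d + 1), t ^ i • T i : E →ₗ[k] F)}.Finite := by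
  classical
  obtain ⟨K, hK⟩ := LinearMap.exists_leftInverse_of_injective (T 0) (LinearMap.ker_eq_bot.2 h0)
  let b := Module.finBasis k E
  let M : ℕ → Matrix _ _ k := fun i => LinearMap.toMatrix b b (K ∘ₗ T i)
  let Q : Matrix _ _ (Polynomial k) :=
    ∑ i ∈ Finset.range (d + 1), (Polynomial.X : Polynomial k) ^ i • (M i).map Polynomial.C
  have hQ : ∀ t : k, (Q.det).eval t = (∑ i ∈ Finset.range (d + 1), t ^ i • M i).det := by
    intro t
    rw [← Polynomial.coe_evalRingHom, RingHom.map_det]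
    congr 1
    ext i j
    simp [Q, Matrix.sum_apply]
    exact Finset.sum_congr rfl fun _ _ => mul_comm _ _
  have hQ0 : Q.det ≠ 0 := by
    intro h
    have := hQ 0
    rw [h, Finset.sum_range_succ'] at this
    simp [M, hK] at this
  refine (Q.det.roots.toFinset.finite_toSet).subset ?_
  intro t ht
  simp only [Finset.mem_coe, Multiset.mem_toFinset, Polynomial.mem_roots hQ0,
    Polynomial.IsRoot.def]
  by_contra hne
  apply ht
  rw [hQ] at hne
  have hM : ∑ i ∈ Finset.range (d + 1), t ^ i • M i =
      LinearMap.toMatrix b b (K ∘ₗ ∑ i ∈ Finset.range (d + 1), t ^ i • T i) := by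
    have : K ∘ₗ ∑ i ∈ Finset.range (d + 1), t ^ i • T i =
        ∑ i ∈ Finset.range (d + 1), t ^ i • (K ∘ₗ T i) := by
      ext v
      simp [LinearMap.sum_apply]
    rw [this, map_sum]
    simp [M]
  rw [hM, LinearMap.det_toMatrix] at hne
  have : Function.Injective (K ∘ₗ ∑ i ∈ Finset.range (d + 1), t ^ i • T i) :=
    (LinearEquiv.ofIsUnitDet (f := K ∘ₗ ∑ i ∈ Finset.range (d + 1), t ^ i • T i)
      (v := b) (v' := b) (by rw [LinearMap.det_toMatrix]; exact isUnit_iff_ne_zero.2 hne)).injective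
  rw [LinearMap.coe_comp] at this
  exact this.of_comp

/-- Chain rule for a polynomial curve. -/
lemma derivative_aeval_mvPolynomial {k σ : Type*} [CommRing k] [Fintype σ]
    (Z : σ → Polynomial k) (P : MvPolynomial σ k) :
    Polynomial.derivative (MvPolynomial.aeval Z P) =
      ∑ q, MvPolynomial.aeval Z (MvPolynomial.pderiv q P) * Polynomial.derivative (Z q) := by
  classical
  induction P using MvPolynomial.induction_on with
  | C a => simp [MvPolynomial.algHom_C]
  | add p q hp hq => simp [hp, hq, add_mul, Finset.sum_add_distrib]
  | mul_X p i hp =>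
    have h1 : ∀ q, MvPolynomial.aeval Z (MvPolynomial.pderiv q (p * MvPolynomial.X i)) *
        Polynomial.derivative (Z q) =
        MvPolynomial.aeval Z (MvPolynomial.pderiv q p) * Polynomial.derivative (Z q) * Z i +
        (if q = i then MvPolynomial.aeval Z p * Polynomial.derivative (Z q) else 0) := by
      intro q
      rw [Derivation.leibniz, MvPolynomial.pderiv_X]
      by_cases hq : q = i
      · subst hq
        simp
        ring
      · simp [hq, Ne.symm hq]
        ring
    rw [Finset.sum_congr rfl fun q _ => h1 q, Finset.sum_add_distrib, Finset.sum_ite_eq',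
      ← Finset.sum_mul, ← hp, map_mul, MvPolynomial.aeval_X, Polynomial.derivative_mul]
    simp

/-- The pair `(x, y)` has no nonzero skew-symmetric matrix in its commutant. -/
def MatSkewCommutantTrivial {k : Type*} [CommRing k] {N : ℕ}
    (x y : Matrix (Fin N) (Fin N) k) : Prop :=
  ∀ A : Matrix (Fin N) (Fin N) k, Aᵀ = -A → A * x = x * A → A * y = y * A → A = 0

lemma MatSkewCommutantTrivial.symm {k : Type*} [CommRing k] {N : ℕ}
    {x y : Matrix (Fin N) (Fin N) k} (h : MatSkewCommutantTrivial x y) :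
    MatSkewCommutantTrivial y x := fun A hA hy hx => h A hA hx hy

/-- The linear map `A ↦ [A, x]`. -/
def commLin {k : Type*} [CommRing k] {N : ℕ} (x : Matrix (Fin N) (Fin N) k) :
    Matrix (Fin N) (Fin N) k →ₗ[k] Matrix (Fin N) (Fin N) k :=
  LinearMap.mulRight k x - LinearMap.mulLeft k x

lemma finite_setOf_not_matSkewCommutantTrivial {k : Type*} [Field k] {N : ℕ} (d : ℕ)
    (X : ℕ → Matrix (Fin N) (Fin N) k) (y : Matrix (Fin N) (Fin N) k)
    (h : MatSkewCommutantTrivial (X 0) y) :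
    {t : k | ¬ MatSkewCommutantTrivial
      (∑ i ∈ Finset.range (d + 1), t ^ i • X i) y}.Finite := by
  let T : ℕ → Matrix (Fin N) (Fin N) k →ₗ[k] Matrix (Fin N) (Fin N) k ×
      Matrix (Fin N) (Fin N) k × Matrix (Fin N) (Fin N) k := fun i =>
    (if i = 0 then LinearMap.id + (Matrix.transposeLinearEquiv (Fin N) (Fin N) k k).toLinearMap
      else 0).prod ((commLin (X i)).prod (if i = 0 then commLin y else 0))
  refine (finite_setOf_not_injective_of_polynomial_family d T ?_).subset ?_
  · rw [← LinearMap.ker_eq_bot, LinearMap.ker_eq_bot']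
    intro A hA
    simp only [T, commLin, if_true, LinearMap.prod_apply, Function.prod_apply,
      Prod.mk_eq_zero] at hA
    exact h A (eq_neg_of_add_eq_zero_right hA.1) (by simpa [sub_eq_zero] using hA.2.1)
      (by simpa [sub_eq_zero] using hA.2.2)
  · intro t ht hinj
    apply ht
    intro A hA hx hy
    apply hinj
    rw [map_zero, LinearMap.sum_apply, Prod.ext_iff, Prod.ext_iff]
    simp only [Prod.fst_sum, Prod.snd_sum]
    refine ⟨?_, ?_, ?_⟩
    · rw [Finset.sum_range_succ']
      simp [T, hA]
    · simp only [T, commLin, LinearMap.smul_apply, LinearMap.prod_apply, Function.prod_apply,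
        Prod.smul_snd,
        Prod.smul_fst, LinearMap.sub_apply, LinearMap.mulRight_apply, LinearMap.mulLeft_apply,
        smul_sub, Finset.sum_sub_distrib]
      rw [Finset.mul_sum, Finset.sum_mul] at hx
      simp only [Matrix.mul_smul, Matrix.smul_mul] at hx
      simp [hx]
    · rw [Finset.sum_range_succ']
      simp [T, commLin, hy]

/-- If the skew-symmetric matrix `a` satisfies `a ^ 3 = 0`, the curve `exp (t a) x exp (-t a)`. -/
lemma expCurve_eq {k : Type*} [Field k] {N : ℕ} (a b x : Matrix (Fin N) (Fin N) k) (t : k) :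
    (1 + t • a + t ^ 2 • b) * x * (1 - t • a + t ^ 2 • b) =
      x + t • (a * x - x * a) + t ^ 2 • (b * x + x * b - a * x * a) +
        t ^ 3 • (a * x * b - b * x * a) + t ^ 4 • (b * x * b) := by
  simp only [add_mul, mul_add, mul_sub, one_mul, mul_one, Matrix.smul_mul,
    Matrix.mul_smul, smul_add, smul_sub, smul_smul]
  have h2 : t ^ 2 = t * t := by ring
  have h3 : t ^ 3 = t * (t * t) := by ring
  have h4 : t ^ 4 = t * t * (t * t) := by ring
  simp only [h2, h3, h4, mul_assoc]
  abel

/-- Tangent directions to an orthogonal orbit annihilate the differential of a polynomial that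
vanishes on all sums of pairs with trivial skew commutant. -/
lemma sum_pderiv_mul_commutator_eq_zero {k : Type*} [Field k] [CharZero k] {N : ℕ}
    {O : Set (Matrix (Fin N) (Fin N) k)}
    (hO : ∀ g x : Matrix (Fin N) (Fin N) k, g * gᵀ = 1 → x ∈ O → g * x * gᵀ ∈ O)
    (P : MvPolynomial (Fin N × Fin N) k)
    (hP : ∀ x ∈ O, ∀ y ∈ O, MatSkewCommutantTrivial x y →
      MvPolynomial.eval (fun q => (x + y) q.1 q.2) P = 0)
    {x y : Matrix (Fin N) (Fin N) k} (hx : x ∈ O) (hy : y ∈ O) (hxy : MatSkewCommutantTrivial x y)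
    {a : Matrix (Fin N) (Fin N) k} (ha : aᵀ = -a) (ha3 : a * a * a = 0) :
    ∑ q : Fin N × Fin N, MvPolynomial.eval (fun q => (x + y) q.1 q.2) (MvPolynomial.pderiv q P) *
      (a * x - x * a) q.1 q.2 = 0 := by
  let b : Matrix (Fin N) (Fin N) k := (2⁻¹ : k) • (a * a)
  let X : ℕ → Matrix (Fin N) (Fin N) k := fun i => match i with
    | 0 => x
    | 1 => a * x - x * a
    | 2 => b * x + x * b - a * x * a
    | 3 => a * x * b - b * x * a
    | _ => b * x * b
  have hsum : ∀ t : k, ∑ i ∈ Finset.range (4 + 1), t ^ i • X i =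
      (1 + t • a + t ^ 2 • b) * x * (1 - t • a + t ^ 2 • b) := by
    intro t
    rw [expCurve_eq]
    simp [Finset.sum_range_succ, X]
  have hbt : bᵀ = b := by simp [b, ha]
  have hg : ∀ t : k, (1 + t • a + t ^ 2 • b)ᵀ = 1 - t • a + t ^ 2 • b := by
    intro t
    simp [ha, hbt, sub_eq_add_neg]
  have hgg : ∀ t : k, (1 + t • a + t ^ 2 • b) * (1 + t • a + t ^ 2 • b)ᵀ = 1 := by
    intro t
    rw [hg]
    have h1 := expCurve_eq a b 1 t
    rw [mul_one] at h1
    rw [h1]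
    have hab : a * b = 0 := by simp [b, ← mul_assoc, ha3]
    have hba : b * a = 0 := by simp [b, ha3]
    have hbb : b * b = 0 := by simp [b, ← mul_assoc, ha3]
    have h2b : b + b - a * a = 0 := by
      simp only [b, ← add_smul]
      norm_num
    simp [hab, hba, hbb, h2b]
  have hcurve : ∀ t : k, ∑ i ∈ Finset.range (4 + 1), t ^ i • X i ∈ O := by
    intro t
    rw [hsum, ← hg]
    exact hO _ _ (hgg t) hx
  let Z : Fin N × Fin N → Polynomial k := fun q =>
    ∑ i ∈ Finset.range (4 + 1), Polynomial.X ^ i * Polynomial.C (X i q.1 q.2) +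
      Polynomial.C (y q.1 q.2)
  have hev : ∀ (t : k) (R : MvPolynomial (Fin N × Fin N) k),
      (MvPolynomial.aeval Z R).eval t = MvPolynomial.eval
        (fun q => (∑ i ∈ Finset.range (4 + 1), t ^ i • X i + y) q.1 q.2) R := by
    intro t R
    rw [← Polynomial.coe_evalRingHom, MvPolynomial.aeval_def, MvPolynomial.hom_eval₂,
      MvPolynomial.eval]
    congr 1
    · ext; simp
    · ext q
      simp [Z, Polynomial.eval_finsetSum, Matrix.sum_apply]
      exact Finset.sum_congr rfl fun _ _ => mul_comm _ _
  have hzero : MvPolynomial.aeval Z P = 0 := by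
    apply Polynomial.eq_zero_of_infinite_isRoot
    refine ((finite_setOf_not_matSkewCommutantTrivial 4 X y hxy).infinite_compl).mono ?_
    intro t ht
    simp only [Set.mem_compl_iff, Set.mem_ofPred_eq, not_not] at ht
    simp only [Set.mem_ofPred_eq, Polynomial.IsRoot.def, hev]
    exact hP _ (hcurve t) _ hy ht
  have hder := derivative_aeval_mvPolynomial Z P
  rw [hzero, Polynomial.derivative_zero] at hder
  have h0 := congrArg (Polynomial.eval (0 : k)) hder
  rw [Polynomial.eval_zero, Polynomial.eval_finsetSum] at h0
  rw [h0]
  refine Finset.sum_congr rfl fun q _ => ?_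
  rw [Polynomial.eval_mul, hev]
  congr 1
  · simp [Finset.sum_range_succ, X]
  · simp [Z, Finset.sum_range_succ, X]

/-- A skew-symmetric matrix orthogonal to all the matrices `u vᵀ - v uᵀ` with `u` isotropic and
`v` orthogonal to `u` vanishes. -/
lemma eq_zero_of_isotropic_pairing {k : Type*} [Field k] [IsAlgClosed k] [CharZero k] {N : ℕ}
    (hN : 3 ≤ N) {S : Matrix (Fin N) (Fin N) k} (hS : Sᵀ = -S)
    (h : ∀ u v : Fin N → k, u ⬝ᵥ u = 0 → u ⬝ᵥ v = 0 → v ⬝ᵥ (S *ᵥ u) = 0) : S = 0 := by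
  obtain ⟨ι, hι⟩ := IsAlgClosed.exists_pow_nat_eq (-1 : k) (n := 2) (by norm_num)
  ext j i
  by_cases hij : i = j
  · subst hij
    have := congrFun (congrFun hS i) i
    simp only [Matrix.transpose_apply, Matrix.neg_apply] at this
    simpa using self_eq_neg.1 this
  · obtain ⟨l, hl⟩ : ∃ l : Fin N, l ∉ ({i, j} : Finset (Fin N)) := by
      by_contra! hcon
      have h1 : (Finset.univ : Finset (Fin N)) ⊆ {i, j} := fun l _ => hcon l
      have h2 := (Finset.card_le_card h1).trans Finset.card_le_two
      simp at h2
      omega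
    simp only [Finset.mem_insert, Finset.mem_singleton, not_or] at hl
    obtain ⟨hli, hlj⟩ := hl
    have key : ∀ ε : k, ε ^ 2 = -1 → S j i + ε * S j l = 0 := by
      intro ε hε
      have := h (Pi.single i 1 + ε • Pi.single l 1) (Pi.single j 1)
        (by
          simp [dotProduct_add, hli, Ne.symm hli]
          linear_combination hε)
        (by simp [hij, hlj])
      simpa [Matrix.mulVec_add, Matrix.mulVec_smul, dotProduct_add] using this
    have h1 := key ι hι
    have h2 := key (-ι) (by rw [neg_sq, hι])
    have : 2 * S j i = 0 := by linear_combination h1 + h2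
    simpa using this

lemma sum_pderiv_mul_skew_eq_zero {k : Type*} [Field k] [IsAlgClosed k] [CharZero k] {N : ℕ}
    (hN : 3 ≤ N) {O : Set (Matrix (Fin N) (Fin N) k)} (hso : O ⊆ soSet k N)
    (hO : ∀ g x : Matrix (Fin N) (Fin N) k, g * gᵀ = 1 → x ∈ O → g * x * gᵀ ∈ O)
    (P : MvPolynomial (Fin N × Fin N) k)
    (hP : ∀ x ∈ O, ∀ y ∈ O, MatSkewCommutantTrivial x y →
      MvPolynomial.eval (fun q => (x + y) q.1 q.2) P = 0)
    {x y : Matrix (Fin N) (Fin N) k} (hx : x ∈ O) (hy : y ∈ O) (hxy : MatSkewCommutantTrivial x y)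
    {v : Matrix (Fin N) (Fin N) k} (hv : vᵀ = -v) :
    ∑ q : Fin N × Fin N, MvPolynomial.eval (fun q => (x + y) q.1 q.2) (MvPolynomial.pderiv q P) *
      v q.1 q.2 = 0 := by
  let L : Matrix (Fin N) (Fin N) k := Matrix.of fun i j =>
    MvPolynomial.eval (fun q => (x + y) q.1 q.2) (MvPolynomial.pderiv (i, j) P)
  have hL : ∀ w : Matrix (Fin N) (Fin N) k, ∑ q : Fin N × Fin N,
      MvPolynomial.eval (fun q => (x + y) q.1 q.2) (MvPolynomial.pderiv q P) * w q.1 q.2 =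
      (Lᵀ * w).trace := by
    intro w
    rw [Fintype.sum_prod_type_right]
    simp [Matrix.trace, Matrix.mul_apply, L]
  have hskew : ∀ w : Matrix (Fin N) (Fin N) k, wᵀ = -w →
      2 * (Lᵀ * w).trace = -((L - Lᵀ) * w).trace := by
    intro w hw
    have : (Lᵀ * w).trace = -(L * w).trace := by
      rw [← Matrix.trace_transpose, Matrix.transpose_mul, Matrix.transpose_transpose, hw,
        Matrix.neg_mul, Matrix.trace_neg, Matrix.trace_mul_comm]
    rw [sub_mul, Matrix.trace_sub]
    linear_combination this
  have hcomm : ∀ z : Matrix (Fin N) (Fin N) k, zᵀ = -z →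
      (∀ a : Matrix (Fin N) (Fin N) k, aᵀ = -a → a * a * a = 0 →
        (Lᵀ * (a * z - z * a)).trace = 0) → (L - Lᵀ) * z = z * (L - Lᵀ) := by
    intro z hz hza
    have hSt : (z * (L - Lᵀ) - (L - Lᵀ) * z)ᵀ = -(z * (L - Lᵀ) - (L - Lᵀ) * z) := by
      simp only [Matrix.transpose_sub, Matrix.transpose_mul, hz, Matrix.transpose_transpose,
        mul_sub, sub_mul, Matrix.mul_neg, Matrix.neg_mul]
      abel
    refine (sub_eq_zero.1 (eq_zero_of_isotropic_pairing hN hSt ?_)).symm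
    intro u w huu huw
    set S := z * (L - Lᵀ) - (L - Lᵀ) * z with hSdef
    set a := Matrix.vecMulVec u w - Matrix.vecMulVec w u with hadef
    have hat : aᵀ = -a := by
      ext i j
      simp [hadef, Matrix.vecMulVec_apply]
      ring
    have hwu : w ⬝ᵥ u = 0 := by rw [dotProduct_comm, huw]
    have haa : a * a * a = 0 := by
      simp [hadef, sub_mul, mul_sub, Matrix.vecMulVec_mul_vecMulVec, huu, huw, hwu]
    have h1 := hza a hat haa
    have hazs : (a * z - z * a)ᵀ = -(a * z - z * a) := by
      simp [hat, hz]
    have h2 := hskew _ hazs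
    rw [h1, mul_zero] at h2
    have h3 : (a * S).trace = 0 := by
      have e1 : ((L - Lᵀ) * (a * z - z * a)).trace = (a * S).trace := by
        rw [mul_sub, Matrix.trace_sub, hSdef, mul_sub a, Matrix.trace_sub]
        congr 1
        · rw [Matrix.trace_mul_comm, mul_assoc]
        · rw [← mul_assoc, Matrix.trace_mul_comm]
      rw [← e1]
      linear_combination h2
    have h4 : (a * S).trace = w ⬝ᵥ (S *ᵥ u) - u ⬝ᵥ (S *ᵥ w) := by
      rw [hadef, sub_mul, Matrix.trace_sub, Matrix.vecMulVec_mul, Matrix.vecMulVec_mul,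
        Matrix.trace_vecMulVec, Matrix.trace_vecMulVec, dotProduct_comm, dotProduct_comm w,
        ← Matrix.dotProduct_mulVec, ← Matrix.dotProduct_mulVec]
    have h5 : u ⬝ᵥ (S *ᵥ w) = -(w ⬝ᵥ (S *ᵥ u)) := by
      rw [Matrix.dotProduct_mulVec, dotProduct_comm, ← Matrix.mulVec_transpose, hSt,
        Matrix.neg_mulVec, dotProduct_neg]
    rw [h4, h5] at h3
    have : 2 * (w ⬝ᵥ (S *ᵥ u)) = 0 := by linear_combination h3
    simpa using this
  have hxL := hcomm x (hso hx) fun a ha ha3 => by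
    rw [← hL]
    exact sum_pderiv_mul_commutator_eq_zero hO P hP hx hy hxy ha ha3
  have hyL := hcomm y (hso hy) fun a ha ha3 => by
    rw [← hL, add_comm x y]
    exact sum_pderiv_mul_commutator_eq_zero hO P hP hy hx hxy.symm ha ha3
  have hL0 := hxy (L - Lᵀ) (by simp) hxL hyL
  rw [hL]
  have := hskew v hv
  rw [hL0] at this
  simpa using this

/-- A Terracini-type criterion: an orthogonally invariant set of skew-symmetric matrices
containing a pair with trivial skew commutant has Zariski dense sums. -/
theorem zClosure_add_eq_soSet {k : Type*} [Field k] [IsAlgClosed k] [CharZero k] {N : ℕ}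
    (hN : 3 ≤ N) {O : Set (Matrix (Fin N) (Fin N) k)} (hso : O ⊆ soSet k N)
    (hO : ∀ g x : Matrix (Fin N) (Fin N) k, g * gᵀ = 1 → x ∈ O → g * x * gᵀ ∈ O)
    {x y : Matrix (Fin N) (Fin N) k} (hx : x ∈ O) (hy : y ∈ O)
    (hxy : MatSkewCommutantTrivial x y) :
    zClosure (Set.image2 (· + ·) O O) = soSet k N := by
  apply Set.Subset.antisymm
  · intro M hM
    ext i j
    have := hM (MvPolynomial.X (j, i) + MvPolynomial.X (i, j)) (by
      rintro _ ⟨z, hz, w, hw, rfl⟩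
      have h1 := congrFun (congrFun (hso hz) i) j
      have h2 := congrFun (congrFun (hso hw) i) j
      simp only [Matrix.transpose_apply, Matrix.neg_apply] at h1 h2
      simp only [map_add, MvPolynomial.eval_X, Matrix.add_apply]
      linear_combination h1 + h2)
    simp only [map_add, MvPolynomial.eval_X] at this
    exact eq_neg_of_add_eq_zero_left this
  · intro M hM P hP
    set v := M - (x + y) with hvdef
    have hv : vᵀ = -v := by
      have h1 : Mᵀ = -M := hM
      have h2 : xᵀ = -x := hso hx
      have h3 : yᵀ = -y := hso hy
      simp [hvdef, h1, h2, h3]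
      abel
    let D : MvPolynomial (Fin N × Fin N) k → MvPolynomial (Fin N × Fin N) k := fun R =>
      ∑ q, MvPolynomial.pderiv q R * MvPolynomial.C (v q.1 q.2)
    let Z : Fin N × Fin N → Polynomial k := fun q =>
      Polynomial.C ((x + y) q.1 q.2) + Polynomial.X * Polynomial.C (v q.1 q.2)
    have hZ : ∀ (t : k) (R : MvPolynomial (Fin N × Fin N) k),
        (MvPolynomial.aeval Z R).eval t =
          MvPolynomial.eval (fun q => (x + y) q.1 q.2 + t * v q.1 q.2) R := by
      intro t R
      rw [← Polynomial.coe_evalRingHom, MvPolynomial.aeval_def, MvPolynomial.hom_eval₂,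
        MvPolynomial.eval]
      congr 1
      · ext; simp
      · ext q
        simp [Z]
        ring
    have hDZ : ∀ R, Polynomial.derivative (MvPolynomial.aeval Z R) =
        MvPolynomial.aeval Z (D R) := by
      intro R
      rw [derivative_aeval_mvPolynomial]
      simp only [D, map_sum, map_mul]
      refine Finset.sum_congr rfl fun q _ => ?_
      simp [Z, MvPolynomial.algHom_C]
    have hiter : ∀ n : ℕ, ∀ z ∈ O, ∀ w ∈ O, MatSkewCommutantTrivial z w →
        MvPolynomial.eval (fun q => (z + w) q.1 q.2) (D^[n] P) = 0 := by
      intro n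
      induction n with
      | zero => exact fun z hz w hw _ => hP _ ⟨z, hz, w, hw, rfl⟩
      | succ n ih =>
        intro z hz w hw hzw
        rw [Function.iterate_succ_apply']
        simp only [D, map_sum, map_mul, MvPolynomial.eval_C]
        exact sum_pderiv_mul_skew_eq_zero hN hso hO _ ih hz hw hzw hv
    have hq : MvPolynomial.aeval Z P = 0 := by
      have hdn : ∀ n : ℕ, Polynomial.derivative^[n] (MvPolynomial.aeval Z P) =
          MvPolynomial.aeval Z (D^[n] P) := by
        intro n
        induction n with
        | zero => rfl
        | succ n ih => rw [Function.iterate_succ_apply', Function.iterate_succ_apply', ih, hDZ]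
      ext n
      have h1 : (Polynomial.derivative^[n] (MvPolynomial.aeval Z P)).coeff 0 = 0 := by
        rw [hdn, Polynomial.coeff_zero_eq_eval_zero, hZ]
        simpa using hiter n x hx y hy hxy
      rw [Polynomial.coeff_iterate_derivative] at h1
      simp only [zero_add, Nat.descFactorial_self, nsmul_eq_mul, mul_eq_zero] at h1
      simpa [Nat.factorial_ne_zero] using h1
    have := hZ 1 P
    rw [hq, Polynomial.eval_zero] at this
    rw [this]
    congr 2
    ext q
    simp [hvdef]

section AbstractForms

variable {k : Type*} [Field k]
variable {V : Type*} [AddCommGroup V] [Module k V]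

/-- A symmetric bilinear form with trivial radical. -/
structure IsQuadraticForm (B : V →ₗ[k] V →ₗ[k] k) : Prop where
  symm : ∀ v w, B v w = B w v
  nondeg : ∀ v, (∀ w, B v w = 0) → v = 0

/-- Skew-adjoint endomorphisms. -/
def IsSkewFor (B : V →ₗ[k] V →ₗ[k] k) (x : Module.End k V) : Prop :=
  ∀ v w, B (x v) w = -B v (x w)

/-- The pair `(x, y)` has no nonzero skew-adjoint endomorphism in its commutant. -/
def SkewCommutantTrivial (B : V →ₗ[k] V →ₗ[k] k) (x y : Module.End k V) : Prop :=
  ∀ A : Module.End k V, IsSkewFor B A → A * x = x * A → A * y = y * A → A = 0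

lemma IsSkewFor.smul {B : V →ₗ[k] V →ₗ[k] k} {x : Module.End k V} (hx : IsSkewFor B x) (c : k) :
    IsSkewFor B (c • x) := by
  intro v w
  simp [hx v w]

lemma IsSkewFor.add {B : V →ₗ[k] V →ₗ[k] k} {x y : Module.End k V} (hx : IsSkewFor B x)
    (hy : IsSkewFor B y) : IsSkewFor B (x + y) := by
  intro v w
  simp [hx v w, hy v w]
  ring

lemma IsSkewFor.pow_apply {B : V →ₗ[k] V →ₗ[k] k} {x : Module.End k V} (hx : IsSkewFor B x)
    (n : ℕ) (v w : V) : B ((x ^ n) v) w = (-1) ^ n * B v ((x ^ n) w) := by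
  induction n generalizing v w with
  | zero => simp
  | succ n ih =>
    rw [pow_succ', Module.End.mul_apply, hx, ih, ← Module.End.mul_apply, ← pow_succ, pow_succ' x n]
    ring

/-- The defect of skew-adjointness, as a linear map. -/
def skewDefect (B : V →ₗ[k] V →ₗ[k] k) : Module.End k V →ₗ[k] (V →ₗ[k] V →ₗ[k] k) where
  toFun A := B ∘ₗ A + B.compl₂ A
  map_add' A A' := by
    ext v w
    simp
    ring
  map_smul' c A := by
    ext v w
    simp

lemma isSkewFor_iff_skewDefect_eq_zero {B : V →ₗ[k] V →ₗ[k] k} {A : Module.End k V} :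
    IsSkewFor B A ↔ skewDefect B A = 0 := by
  constructor
  · intro h
    ext v w
    simp [skewDefect, h v w]
  · intro h v w
    have := LinearMap.congr_fun (LinearMap.congr_fun h v) w
    simp [skewDefect] at this
    exact eq_neg_of_add_eq_zero_left this

/-- Triviality of the skew commutant is an open condition along lines. -/
lemma finite_setOf_not_skewCommutantTrivial [FiniteDimensional k V] (B : V →ₗ[k] V →ₗ[k] k)
    {x y : Module.End k V} (n n' : Module.End k V) (h : SkewCommutantTrivial B x y) :
    {t : k | ¬ SkewCommutantTrivial B (x + t • n) (y + t • n')}.Finite := by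
  let ad : Module.End k V → Module.End k V →ₗ[k] Module.End k V := fun z =>
    LinearMap.mulRight k z - LinearMap.mulLeft k z
  let T : ℕ → Module.End k V →ₗ[k] (V →ₗ[k] V →ₗ[k] k) × Module.End k V × Module.End k V := fun i =>
    if i = 0 then (skewDefect B).prod ((ad x).prod (ad y))
    else LinearMap.prod 0 ((ad n).prod (ad n'))
  refine (finite_setOf_not_injective_of_polynomial_family (E := Module.End k V)
    (F := (V →ₗ[k] V →ₗ[k] k) × Module.End k V × Module.End k V) 1 T ?_).subset ?_
  · refine (injective_iff_map_eq_zero (T 0)).2 ?_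
    intro A hA
    simp only [T, if_true, LinearMap.prod_apply, Function.prod_apply, Prod.mk_eq_zero] at hA
    exact h A (isSkewFor_iff_skewDefect_eq_zero.2 hA.1) (by simpa [ad, sub_eq_zero] using hA.2.1)
      (by simpa [ad, sub_eq_zero] using hA.2.2)
  · intro t ht hinj
    apply ht
    intro A hA hx hy
    apply hinj
    rw [map_zero]
    simp only [Finset.sum_range_succ, Finset.sum_range_zero, T, if_true, one_ne_zero, if_false,
      zero_add, pow_zero, pow_one, one_smul, LinearMap.add_apply, LinearMap.smul_apply,
      LinearMap.prod_apply, Function.prod_apply, isSkewFor_iff_skewDefect_eq_zero.1 hA,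
      LinearMap.zero_apply, Prod.smul_mk, Prod.mk_add_mk, smul_zero, add_zero, Prod.mk_eq_zero,
      true_and]
    simp only [mul_add, add_mul, mul_smul_comm, smul_mul_assoc] at hx hy
    constructor
    · simp only [ad, LinearMap.sub_apply, LinearMap.mulRight_apply, LinearMap.mulLeft_apply,
        smul_sub]
      rw [sub_add_sub_comm, hx, sub_self]
    · simp only [ad, LinearMap.sub_apply, LinearMap.mulRight_apply, LinearMap.mulLeft_apply,
        smul_sub]
      rw [sub_add_sub_comm, hy, sub_self]

/-- The word `(YX)^a Y^b (XY)^a X^b`. -/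
def wordEnd (a b : ℕ) (X Y : Module.End k V) : Module.End k V :=
  (Y * X) ^ a * Y ^ b * (X * Y) ^ a * X ^ b

lemma wordEnd_smul (a b : ℕ) (X Y : Module.End k V) (c : k) :
    wordEnd a b X (c • Y) = c ^ (2 * a + b) • wordEnd a b X Y := by
  simp only [wordEnd, smul_mul_assoc, mul_smul_comm, smul_pow, smul_smul]
  congr 1
  ring

lemma wordEnd_intertwine {V' : Type*} [AddCommGroup V'] [Module k V'] (a b : ℕ)
    {X Y : Module.End k V} {X' Y' : Module.End k V'} (T : V →ₗ[k] V')
    (hX : ∀ v, T (X v) = X' (T v)) (hY : ∀ v, T (Y v) = Y' (T v)) (v : V) :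
    T (wordEnd a b X Y v) = wordEnd a b X' Y' (T v) := by
  have hpow : ∀ (Z : Module.End k V) (Z' : Module.End k V'), (∀ v, T (Z v) = Z' (T v)) →
      ∀ n v, T ((Z ^ n) v) = (Z' ^ n) (T v) := by
    intro Z Z' h n
    induction n with
    | zero => simp
    | succ n ih => intro v; simp [pow_succ, ih, h]
  simp only [wordEnd, Module.End.mul_apply]
  rw [hpow (Y * X) (Y' * X') (by simp [hX, hY]), hpow Y Y' hY,
    hpow (X * Y) (X' * Y') (by simp [hX, hY]), hpow X _ hX]

/-- A pair is cyclically rigid if some word is a rank one projection onto a generating vector. -/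
structure IsCyclicallyRigid (x y : Module.End k V) (s : V) (a b : ℕ) : Prop where
  pos : 1 ≤ b
  word_self : wordEnd a b x y s = s
  word_mem : ∀ v, wordEnd a b x y v ∈ Submodule.span k {s}
  generates : ∀ U : Submodule k V, s ∈ U → (∀ v ∈ U, x v ∈ U) → (∀ v ∈ U, y v ∈ U) → U = ⊤

lemma IsCyclicallyRigid.eq_smul {x y : Module.End k V} {s : V} {a b : ℕ}
    (h : IsCyclicallyRigid x y s a b) {A : Module.End k V} (hx : A * x = x * A)
    (hy : A * y = y * A) : ∃ α : k, ∀ v, A v = α • v := by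
  have h1 := wordEnd_intertwine a b A (fun v => LinearMap.congr_fun hx v)
    (fun v => LinearMap.congr_fun hy v) s
  rw [h.word_self] at h1
  have h2 := h.word_mem (A s)
  rw [← h1] at h2
  obtain ⟨α, hα⟩ := Submodule.mem_span_singleton.1 h2
  refine ⟨α, ?_⟩
  have h3 := h.generates (LinearMap.ker (A - α • 1)) (by simp [hα])
    (fun v hv => by
      have e := LinearMap.congr_fun hx v
      simp [sub_eq_zero] at hv e ⊢
      rw [e, hv, map_smul])
    (fun v hv => by
      have e := LinearMap.congr_fun hy v
      simp [sub_eq_zero] at hv e ⊢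
      rw [e, hv, map_smul])
  intro v
  have : v ∈ LinearMap.ker (A - α • 1) := by rw [h3]; trivial
  simpa [sub_eq_zero] using this

lemma eq_zero_of_isSkewFor_smul [CharZero k] {B : V →ₗ[k] V →ₗ[k] k} (hB : IsQuadraticForm B)
    {A : Module.End k V} (hA : IsSkewFor B A) {α : k} (h : ∀ v, A v = α • v) : A = 0 := by
  ext v
  refine hB.nondeg _ fun w => ?_
  have := hA v w
  rw [h v, h w] at this
  rw [h v]
  simp only [map_smul, LinearMap.smul_apply] at this ⊢
  exact self_eq_neg.1 this

lemma exists_ne_zero_pow_not_eigenvalue [CharZero k] [FiniteDimensional k V]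
    (W : Module.End k V) {d : ℕ} (hd : 1 ≤ d) :
    ∃ c : k, c ≠ 0 ∧ ∀ v, W v = c ^ d • v → v = 0 := by
  classical
  have hfin : {c : k | Module.End.HasEigenvalue W (c ^ d)}.Finite := by
    refine Set.Finite.subset (s := ⋃ e ∈ {e : k | Module.End.HasEigenvalue W e},
      {c : k | c ^ d = e}) ?_ ?_
    · refine Set.Finite.biUnion (Module.End.finite_hasEigenvalue W) fun e _ => ?_
      refine ((Polynomial.nthRoots d e).toFinset.finite_toSet).subset ?_
      intro c hc
      simpa [Polynomial.mem_nthRoots (by omega : 0 < d)] using hc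
    · intro c hc
      simpa using hc
  obtain ⟨c, hc⟩ := (hfin.union (Set.finite_singleton (0 : k))).infinite_compl.nonempty
  simp only [Set.mem_compl_iff, Set.mem_union, Set.mem_ofPred_eq, Set.mem_singleton_iff,
    not_or] at hc
  refine ⟨c, hc.2, fun v hv => ?_⟩
  by_contra hne
  exact hc.1 (Module.End.hasEigenvalue_of_hasEigenvector
    ⟨Module.End.mem_eigenspace_iff.2 hv, hne⟩)

section Prod

variable {V₁ V₂ : Type*} [AddCommGroup V₁] [Module k V₁] [AddCommGroup V₂] [Module k V₂]

/-- The orthogonal sum of two bilinear forms. -/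
def prodForm (B₁ : V₁ →ₗ[k] V₁ →ₗ[k] k) (B₂ : V₂ →ₗ[k] V₂ →ₗ[k] k) :
    (V₁ × V₂) →ₗ[k] (V₁ × V₂) →ₗ[k] k :=
  B₁.compl₁₂ (LinearMap.fst k V₁ V₂) (LinearMap.fst k V₁ V₂) +
    B₂.compl₁₂ (LinearMap.snd k V₁ V₂) (LinearMap.snd k V₁ V₂)

@[simp]
lemma prodForm_apply (B₁ : V₁ →ₗ[k] V₁ →ₗ[k] k) (B₂ : V₂ →ₗ[k] V₂ →ₗ[k] k) (v w : V₁ × V₂) :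
    prodForm B₁ B₂ v w = B₁ v.1 w.1 + B₂ v.2 w.2 := rfl

lemma IsQuadraticForm.prod {B₁ : V₁ →ₗ[k] V₁ →ₗ[k] k} {B₂ : V₂ →ₗ[k] V₂ →ₗ[k] k}
    (h₁ : IsQuadraticForm B₁) (h₂ : IsQuadraticForm B₂) : IsQuadraticForm (prodForm B₁ B₂) where
  symm v w := by simp [h₁.symm v.1, h₂.symm v.2]
  nondeg v hv := by
    refine Prod.ext (h₁.nondeg _ fun w => ?_) (h₂.nondeg _ fun w => ?_)
    · simpa using hv (w, 0)
    · simpa using hv (0, w)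

lemma IsSkewFor.prodMap {B₁ : V₁ →ₗ[k] V₁ →ₗ[k] k} {B₂ : V₂ →ₗ[k] V₂ →ₗ[k] k}
    {x₁ : Module.End k V₁} {x₂ : Module.End k V₂} (h₁ : IsSkewFor B₁ x₁) (h₂ : IsSkewFor B₂ x₂) :
    IsSkewFor (prodForm B₁ B₂) (x₁.prodMap x₂) := by
  intro v w
  simp [h₁ v.1, h₂ v.2]
  ring

lemma prodMap_pow (x₁ : Module.End k V₁) (x₂ : Module.End k V₂) (n : ℕ) :
    (x₁.prodMap x₂ : Module.End k (V₁ × V₂)) ^ n = (x₁ ^ n).prodMap (x₂ ^ n) := by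
  induction n with
  | zero => ext <;> simp
  | succ n ih => rw [pow_succ, ih, pow_succ, pow_succ]; ext <;> simp

lemma finrank_range_prodMap [FiniteDimensional k V₁] [FiniteDimensional k V₂]
    (x₁ : Module.End k V₁) (x₂ : Module.End k V₂) :
    Module.finrank k (LinearMap.range (x₁.prodMap x₂)) =
      Module.finrank k (LinearMap.range x₁) + Module.finrank k (LinearMap.range x₂) := by
  rw [LinearMap.range_prodMap, ← Module.finrank_prod]
  exact (show (LinearMap.range x₁).prod (LinearMap.range x₂) ≃ₗ[k] _ × _ from
    { toFun := fun v => (⟨v.1.1, v.2.1⟩, ⟨v.1.2, v.2.2⟩)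
      map_add' := fun _ _ => rfl
      map_smul' := fun _ _ => rfl
      invFun := fun v => ⟨(v.1.1, v.2.1), v.1.2, v.2.2⟩
      left_inv := fun _ => rfl
      right_inv := fun _ => rfl }).finrank_eq

/-- Adding a cyclically rigid block keeps the skew commutant trivial, after rescaling. -/
lemma exists_skewCommutantTrivial_prodMap [CharZero k] [FiniteDimensional k V₁]
    {B₁ : V₁ →ₗ[k] V₁ →ₗ[k] k} {B₂ : V₂ →ₗ[k] V₂ →ₗ[k] k} (hB₂ : IsQuadraticForm B₂)
    {x₁ y₁ : Module.End k V₁} {x₂ y₂ : Module.End k V₂} (h : SkewCommutantTrivial B₁ x₁ y₁)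
    {s : V₂} {a b : ℕ} (hr : IsCyclicallyRigid x₂ y₂ s a b) :
    ∃ c : k, c ≠ 0 ∧
      SkewCommutantTrivial (prodForm B₁ B₂) (x₁.prodMap x₂) (y₁.prodMap (c • y₂)) := by
  obtain ⟨c, hc0, hc⟩ := exists_ne_zero_pow_not_eigenvalue (wordEnd a b x₁ y₁)
    (d := 2 * a + b) (by have := hr.pos; omega)
  refine ⟨c, hc0, fun A hA hx hy => ?_⟩
  have hx' : ∀ v w, A (x₁ v, x₂ w) = (x₁ (A (v, w)).1, x₂ (A (v, w)).2) := fun v w => by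
    simpa using LinearMap.congr_fun hx (v, w)
  have hy' : ∀ v w, A (y₁ v, c • y₂ w) = (y₁ (A (v, w)).1, c • y₂ (A (v, w)).2) := fun v w => by
    simpa using LinearMap.congr_fun hy (v, w)
  let A₁₂ : V₂ →ₗ[k] V₁ := LinearMap.fst k V₁ V₂ ∘ₗ A ∘ₗ LinearMap.inr k V₁ V₂
  have h12x : ∀ v, A₁₂ (x₂ v) = x₁ (A₁₂ v) := fun v => by
    have := hx' 0 v
    rw [map_zero] at this
    simp [A₁₂, this]
  have h12y : ∀ v, A₁₂ ((c • y₂) v) = y₁ (A₁₂ v) := fun v => by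
    have := hy' 0 v
    rw [map_zero] at this
    exact congrArg Prod.fst this
  have h12s : A₁₂ s = 0 := by
    apply hc
    rw [← wordEnd_intertwine a b A₁₂ h12x h12y, wordEnd_smul, LinearMap.smul_apply, hr.word_self,
      map_smul]
  have h12 : ∀ v, A₁₂ v = 0 := by
    have := hr.generates (LinearMap.ker A₁₂) h12s
      (fun v hv => by
        rw [LinearMap.mem_ker] at hv ⊢
        rw [h12x, hv, map_zero])
      (fun v hv => by
        rw [LinearMap.mem_ker] at hv ⊢
        have e := h12y v
        rw [hv, map_zero, LinearMap.smul_apply, map_smul] at e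
        exact (smul_eq_zero.1 e).resolve_left hc0)
    intro v
    have hv : v ∈ LinearMap.ker A₁₂ := by rw [this]; trivial
    exact hv
  have h21 : ∀ v, (A (v, 0)).2 = 0 := by
    intro v
    refine hB₂.nondeg _ fun w => ?_
    have e := hA (v, 0) (0, w)
    have e2 : (A (0, w)).1 = 0 := h12 w
    simpa [e2] using e
  let A₁₁ : Module.End k V₁ := LinearMap.fst k V₁ V₂ ∘ₗ A ∘ₗ LinearMap.inl k V₁ V₂
  have h11 : A₁₁ = 0 := by
    refine h A₁₁ (fun v w => ?_) ?_ ?_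
    · simpa [A₁₁] using hA (v, 0) (w, 0)
    · ext v
      have := hx' v 0
      rw [map_zero] at this
      simp [A₁₁, this]
    · ext v
      have := hy' v 0
      rw [map_zero, smul_zero] at this
      simp [A₁₁, this]
  let A₂₂ : Module.End k V₂ := LinearMap.snd k V₁ V₂ ∘ₗ A ∘ₗ LinearMap.inr k V₁ V₂
  have h22 : A₂₂ = 0 := by
    have hs : IsSkewFor B₂ A₂₂ := fun v w => by simpa [A₂₂] using hA (0, v) (0, w)
    obtain ⟨α, hα⟩ := hr.eq_smul (A := A₂₂)
      (by
        ext v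
        have := hx' 0 v
        rw [map_zero] at this
        simp [A₂₂, this])
      (by
        ext v
        have := hy' 0 v
        rw [map_zero, show ((0 : V₁), c • y₂ v) = c • (0, y₂ v) by simp, map_smul] at this
        have := congrArg Prod.snd this
        simp only [Prod.smul_snd] at this
        exact smul_right_injective _ hc0 this)
    exact eq_zero_of_isSkewFor_smul hB₂ hs hα
  refine LinearMap.prod_ext ?_ ?_
  · ext v
    · exact LinearMap.congr_fun h11 v
    · exact h21 v
  · ext v
    · exact h12 v
    · exact LinearMap.congr_fun h22 v

end Prod

end AbstractForms

section Chains

variable {k : Type*} [Field k]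
variable {V : Type*} [AddCommGroup V] [Module k V]

/-- The span of the cyclic subspaces generated by a family of vectors. -/
def chainSpan {ι : Type*} (x : Module.End k V) (v : ι → V) : Submodule k V :=
  Submodule.span k (Set.range fun p : ι × ℕ => (x ^ p.2) (v p.1))

lemma pow_apply_mem_chainSpan {ι : Type*} (x : Module.End k V) (v : ι → V) (l : ι) (i : ℕ) :
    (x ^ i) (v l) ∈ chainSpan x v := Submodule.subset_span ⟨(l, i), rfl⟩

lemma chainSpan_le {ι : Type*} {x : Module.End k V} {v : ι → V} {E : Submodule k V}
    (hv : ∀ l, v l ∈ E) (hx : ∀ w ∈ E, x w ∈ E) : chainSpan x v ≤ E := by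
  rw [chainSpan, Submodule.span_le]
  rintro _ ⟨⟨l, i⟩, rfl⟩
  induction i with
  | zero => simpa using hv l
  | succ i ih =>
    simp only [SetLike.mem_coe] at ih ⊢
    rw [pow_succ', Module.End.mul_apply]
    exact hx _ ih

lemma apply_mem_chainSpan {ι : Type*} {x : Module.End k V} {v : ι → V} {w : V}
    (hw : w ∈ chainSpan x v) : x w ∈ chainSpan x v := by
  induction hw using Submodule.span_induction with
  | mem w hw =>
    obtain ⟨⟨l, i⟩, rfl⟩ := hw
    simp only
    rw [← Module.End.mul_apply, ← pow_succ']
    exact pow_apply_mem_chainSpan x v l _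
  | zero => simp
  | add u w _ _ hu hw => rw [map_add]; exact add_mem hu hw
  | smul c w _ hw => rw [map_smul]; exact Submodule.smul_mem _ _ hw

lemma pow_apply_eq_zero_of_le {x : Module.End k V} {v : V} {a b : ℕ} (h : (x ^ a) v = 0)
    (hab : a ≤ b) : (x ^ b) v = 0 := by
  rw [← Nat.sub_add_cancel hab, pow_add, Module.End.mul_apply, h, map_zero]

/-- A family of vectors generating independent Jordan chains of prescribed lengths. -/
structure IsJordanChains {ι : Type*} (x : Module.End k V) (v : ι → V) (L : ι → ℕ) : Prop where
  pos : ∀ l, 1 ≤ L l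
  pow_eq_zero : ∀ l, (x ^ L l) (v l) = 0
  socle : LinearIndependent k fun l => (x ^ (L l - 1)) (v l)

lemma IsJordanChains.linearIndependent {ι : Type*} [Fintype ι] {x : Module.End k V} {v : ι → V}
    {L : ι → ℕ} (h : IsJordanChains x v L) :
    LinearIndependent k fun p : (Σ l, Fin (L l)) => (x ^ (p.2 : ℕ)) (v p.1) := by
  classical
  rw [Fintype.linearIndependent_iff]
  intro g hg
  let G : ι → ℕ → k := fun l i => if hi : i < L l then g ⟨l, i, hi⟩ else 0
  have hG : ∑ l, ∑ i ∈ Finset.range (L l), G l i • (x ^ i) (v l) = 0 := by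
    rw [← hg, Fintype.sum_sigma]
    refine Finset.sum_congr rfl fun l _ => ?_
    rw [Finset.sum_range]
    refine Finset.sum_congr rfl fun i _ => ?_
    simp [G]
  suffices hmain : ∀ d t : ℕ, ∑ l, L l < t + d → ∀ l i, L l = i + t → 1 ≤ t → G l i = 0 by
    rintro ⟨l, i, hi⟩
    have := hmain (∑ l, L l + 1) (L l - i) (by omega) l i (by omega) (by omega)
    simpa [G, hi] using this
  intro d
  induction d with
  | zero =>
    intro t ht l i hl
    have := Finset.single_le_sum (f := L) (fun _ _ => Nat.zero_le _) (Finset.mem_univ l)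
    omega
  | succ d ih =>
    intro t ht l i hl h1
    have hx : ∑ l, (if t ≤ L l then G l (L l - t) else 0) • (x ^ (L l - 1)) (v l) = 0 := by
      have := congrArg (x ^ (t - 1)) hG
      rw [map_zero, map_sum] at this
      rw [← this]
      refine Finset.sum_congr rfl fun l _ => ?_
      rw [map_sum]
      split_ifs with hle
      · rw [Finset.sum_eq_single (L l - t)]
        · rw [map_smul, ← Module.End.mul_apply, ← pow_add,
            show t - 1 + (L l - t) = L l - 1 by omega]
        · intro i hi hne
          rw [Finset.mem_range] at hi
          rcases lt_or_gt_of_ne hne with h2 | h2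
          · rw [ih (L l - i) (by omega) l i (by omega) (by omega), zero_smul, map_zero]
          · rw [map_smul, ← Module.End.mul_apply, ← pow_add,
              pow_apply_eq_zero_of_le (h.pow_eq_zero l) (by omega), smul_zero]
        · intro hni
          rw [Finset.mem_range] at hni
          have := h.pos l
          omega
      · rw [zero_smul, Finset.sum_eq_zero]
        intro i hi
        rw [map_smul, ← Module.End.mul_apply, ← pow_add,
          pow_apply_eq_zero_of_le (h.pow_eq_zero l) (by omega), smul_zero]
    have := Fintype.linearIndependent_iff.1 h.socle _ hx l
    rw [if_pos (by omega), show L l - t = i by omega] at this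
    exact this

/-- The ranks of the powers of an endomorphism on the span of Jordan chains. -/
lemma IsJordanChains.finrank_map {ι : Type*} [Fintype ι] {x : Module.End k V} {v : ι → V}
    {L : ι → ℕ} (h : IsJordanChains x v L) (n : ℕ) :
    Module.finrank k ((chainSpan x v).map (x ^ n)) = ∑ l, (L l - n) := by
  let f : (Σ l, Fin (L l - n)) → Σ l, Fin (L l) := fun p => ⟨p.1, p.2 + n, by omega⟩
  have hf : Function.Injective f := by
    rintro ⟨l, i, hi⟩ ⟨l', i', hi'⟩ hll
    simp only [f, Sigma.mk.injEq] at hll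
    obtain ⟨rfl, h2⟩ := hll
    simpa using h2
  have hli := h.linearIndependent.comp f hf
  have hspan : (chainSpan x v).map (x ^ n) = Submodule.span k (Set.range
      ((fun p : (Σ l, Fin (L l)) => (x ^ (p.2 : ℕ)) (v p.1)) ∘ f)) := by
    rw [chainSpan, Submodule.map_span]
    apply le_antisymm
    · rw [Submodule.span_le]
      rintro _ ⟨_, ⟨⟨l, i⟩, rfl⟩, rfl⟩
      simp only [SetLike.mem_coe, ← Module.End.mul_apply, ← pow_add]
      by_cases hi : n + i < L l
      · refine Submodule.subset_span ⟨⟨l, i, by omega⟩, ?_⟩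
        simp [f, add_comm]
      · rw [pow_apply_eq_zero_of_le (h.pow_eq_zero l) (by omega)]
        exact zero_mem _
    · rw [Submodule.span_le]
      rintro _ ⟨⟨l, i⟩, rfl⟩
      refine Submodule.subset_span ⟨(x ^ (i : ℕ)) (v l), ⟨(l, i), rfl⟩, ?_⟩
      simp [f, pow_add, add_comm (i : ℕ) n]
  rw [hspan, finrank_span_eq_card hli]
  simp

lemma IsJordanChains.finrank_chainSpan {ι : Type*} [Fintype ι] {x : Module.End k V} {v : ι → V}
    {L : ι → ℕ} (h : IsJordanChains x v L) : Module.finrank k (chainSpan x v) = ∑ l, L l := by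
  have := h.finrank_map 0
  rw [pow_zero, Module.End.one_eq_id, Submodule.map_id] at this
  simpa using this

/-- Jordan chains filling the whole space determine the ranks of powers. -/
lemma IsJordanChains.finrank_range_pow [FiniteDimensional k V] {ι : Type*} [Fintype ι]
    {x : Module.End k V} {v : ι → V} {L : ι → ℕ} (h : IsJordanChains x v L)
    (hL : ∑ l, L l = Module.finrank k V) (n : ℕ) :
    Module.finrank k (LinearMap.range (x ^ n)) = ∑ l, (L l - n) := by
  have htop : chainSpan x v = ⊤ :=
    Submodule.eq_top_of_finrank_eq (h.finrank_chainSpan.trans hL)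
  rw [← h.finrank_map n, htop, Submodule.map_top]

/-- Pairwise orthogonal normalised Jordan chains of odd lengths. -/
structure IsOrthChains {ι : Type*} [DecidableEq ι] (B : V →ₗ[k] V →ₗ[k] k) (x : Module.End k V)
    (e : ι → V) (m : ι → ℕ) : Prop where
  pow_eq_zero : ∀ l, (x ^ (2 * m l + 1)) (e l) = 0
  pairing : ∀ l l' n, B (e l) ((x ^ n) (e l')) = if l = l' ∧ n = 2 * m l then 1 else 0

lemma IsOrthChains.isJordanChains {ι : Type*} [Fintype ι] [DecidableEq ι]
    {B : V →ₗ[k] V →ₗ[k] k} {x : Module.End k V} {e : ι → V} {m : ι → ℕ}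
    (h : IsOrthChains B x e m) : IsJordanChains x e fun l => 2 * m l + 1 where
  pos l := by omega
  pow_eq_zero := h.pow_eq_zero
  socle := by
    rw [Fintype.linearIndependent_iff]
    intro g hg l
    have := congrArg (B (e l)) hg
    simp only [map_sum, map_smul, h.pairing, map_zero, add_tsub_cancel_right, smul_eq_mul] at this
    rw [Finset.sum_eq_single l] at this
    · simpa using this
    · intro b _ hb
      simp [hb.symm]
    · simp

/-- The span of orthogonal chains meets its orthogonal trivially. -/
lemma IsOrthChains.eq_zero {ι : Type*} [Fintype ι] [DecidableEq ι]
    {B : V →ₗ[k] V →ₗ[k] k} {x : Module.End k V} (hx : IsSkewFor B x) {e : ι → V} {m : ι → ℕ}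
    (h : IsOrthChains B x e m) {v : V} (hv : v ∈ chainSpan x e)
    (hv' : ∀ w ∈ chainSpan x e, B w v = 0) : v = 0 := by
  have hp : ∀ u ∈ chainSpan x e, ∑ l, ∑ i ∈ Finset.range (2 * m l + 1),
      ((-1) ^ i * B ((x ^ (2 * m l - i)) (e l)) u) • (x ^ i) (e l) = u := by
    intro u hu
    induction hu using Submodule.span_induction with
    | mem w hw =>
      obtain ⟨⟨l', i'⟩, rfl⟩ := hw
      have hin : ∀ l, ∀ i ∈ Finset.range (2 * m l + 1),
          ((-1) ^ i * B ((x ^ (2 * m l - i)) (e l)) ((x ^ i') (e l'))) • (x ^ i) (e l) =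
          if i = i' then (if l = l' then (x ^ i') (e l') else 0) else 0 := by
        intro l i hi
        rw [Finset.mem_range] at hi
        rw [hx.pow_apply, ← Module.End.mul_apply, ← pow_add, h.pairing, ← mul_assoc, ← pow_add,
          show i + (2 * m l - i) = 2 * m l by omega]
        by_cases h1 : l = l'
        · subst h1
          by_cases h2 : i = i'
          · subst h2
            rw [if_pos ⟨rfl, by omega⟩]
            simp
          · rw [if_neg (by omega)]
            simp [h2]
        · simp [h1]
      rw [Finset.sum_congr rfl fun l _ => Finset.sum_congr rfl (hin l)]
      simp only [Finset.sum_ite_eq', Finset.mem_range]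
      rw [Finset.sum_eq_single l']
      · split_ifs with h3 h4
        · rfl
        · exact absurd rfl h4
        · exact (pow_apply_eq_zero_of_le (h.pow_eq_zero l') (by omega)).symm
      · intro l _ hl
        simp [hl]
      · simp
    | zero => simp
    | add u w _ _ hu hw =>
      conv_rhs => rw [← hu, ← hw]
      simp only [map_add, mul_add, add_smul, Finset.sum_add_distrib]
    | smul c w _ hw =>
      conv_rhs => rw [← hw]
      simp only [map_smul, Finset.smul_sum, smul_smul, smul_eq_mul]
      refine Finset.sum_congr rfl fun l _ => Finset.sum_congr rfl fun i _ => ?_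
      congr 1
      ring
  rw [← hp v hv]
  refine Finset.sum_eq_zero fun l _ => Finset.sum_eq_zero fun i _ => ?_
  rw [hv' _ (pow_apply_mem_chainSpan x e l _), mul_zero, zero_smul]

lemma finrank_range_pow_of_isCompl [FiniteDimensional k V] {E E' : Submodule k V}
    (hE : IsCompl E E') {f : Module.End k V} (h : ∀ v ∈ E, f v ∈ E) (h' : ∀ v ∈ E', f v ∈ E')
    (n : ℕ) : Module.finrank k (LinearMap.range (f ^ n)) =
      Module.finrank k (E.map (f ^ n)) + Module.finrank k (E'.map (f ^ n)) := by
  have hle : ∀ {U : Submodule k V}, (∀ v ∈ U, f v ∈ U) → U.map (f ^ n) ≤ U := by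
    intro U hU
    rintro _ ⟨v, hv, rfl⟩
    induction n with
    | zero => simpa using hv
    | succ n ih => rw [pow_succ', Module.End.mul_apply]; exact hU _ ih
  have hdisj : E.map (f ^ n) ⊓ E'.map (f ^ n) = ⊥ := by
    rw [eq_bot_iff, ← hE.inf_eq_bot]
    exact inf_le_inf (hle h) (hle h')
  have := Submodule.finrank_sup_add_finrank_inf_eq (E.map (f ^ n)) (E'.map (f ^ n))
  rw [hdisj, finrank_bot, add_zero, ← Submodule.map_sup, hE.sup_eq_top, Submodule.map_top] at this
  exact this

/-- Replacing an endomorphism on the span of orthogonal chains changes the ranks of its powers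
in a controlled way. -/
lemma IsOrthChains.finrank_range_pow_add [FiniteDimensional k V] {ι κ : Type*} [Fintype ι]
    [DecidableEq ι] [Fintype κ] {B : V →ₗ[k] V →ₗ[k] k} (hB : IsQuadraticForm B)
    {x : Module.End k V} (hx : IsSkewFor B x) {e : ι → V} {m : ι → ℕ} (h : IsOrthChains B x e m)
    {z : Module.End k V} (hz : ∀ v, z v ∈ chainSpan x e)
    (hz' : ∀ v, (∀ w ∈ chainSpan x e, B w v = 0) → z v = 0)
    {v : κ → V} {L : κ → ℕ} (hv : ∀ l, v l ∈ chainSpan x e) (hJ : IsJordanChains (x + z) v L)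
    (hL : ∑ l, L l = ∑ l, (2 * m l + 1)) (n : ℕ) :
    Module.finrank k (LinearMap.range ((x + z) ^ n)) + ∑ l, (2 * m l + 1 - n) =
      Module.finrank k (LinearMap.range (x ^ n)) + ∑ l, (L l - n) := by
  set E := chainSpan x e with hE
  let E' : Submodule k V := LinearMap.BilinForm.orthogonal B E
  have hE' : ∀ {v}, v ∈ E' ↔ ∀ w ∈ E, B w v = 0 := by
    intro v
    exact LinearMap.BilinForm.mem_orthogonal_iff
  have hcompl : IsCompl E E' := by
    refine LinearMap.BilinForm.isCompl_orthogonal_of_restrict_nondegenerate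
      (fun v w hvw => by rw [hB.symm, hvw]) ?_
    constructor
    · intro v hv
      exact Subtype.ext (h.eq_zero hx v.2 fun w hw => by
        rw [hB.symm]; exact hv ⟨w, hw⟩)
    · intro v hv
      exact Subtype.ext (h.eq_zero hx v.2 fun w hw => hv ⟨w, hw⟩)
  have hxE : ∀ v ∈ E, x v ∈ E := fun v hv => apply_mem_chainSpan hv
  have hxE' : ∀ v ∈ E', x v ∈ E' := by
    intro v hv
    rw [hE'] at hv ⊢
    intro w hw
    have := hx w v
    rw [hv _ (hxE w hw)] at this
    exact neg_eq_zero.1 this.symm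
  have hfE : ∀ v ∈ E, (x + z) v ∈ E := fun v hv => add_mem (hxE v hv) (hz v)
  have hagree : ∀ v ∈ E', (x + z) v = x v := fun v hv => by
    rw [LinearMap.add_apply, hz' v (hE'.1 hv), add_zero]
  have hpow : ∀ n, ∀ v ∈ E', ((x + z) ^ n) v = (x ^ n) v ∧ (x ^ n) v ∈ E' := by
    intro n v hv
    induction n with
    | zero => simpa using hv
    | succ n ih =>
      rw [pow_succ', pow_succ', Module.End.mul_apply, Module.End.mul_apply, ih.1,
        hagree _ ih.2]
      exact ⟨rfl, hxE' _ ih.2⟩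
  have h1 := finrank_range_pow_of_isCompl hcompl hxE hxE' n
  have h2 := finrank_range_pow_of_isCompl hcompl hfE
    (fun v hv => by rw [hagree v hv]; exact hxE' v hv) n
  have hmap : E'.map ((x + z) ^ n) = E'.map (x ^ n) :=
    SetLike.coe_injective (Set.image_congr fun v hv => (hpow n v hv).1)
  have h3 := h.isJordanChains.finrank_map n
  have hEq : chainSpan (x + z) v = E := by
    refine Submodule.eq_of_le_of_finrank_eq (chainSpan_le hv hfE) ?_
    rw [hJ.finrank_chainSpan, hL, hE, h.isJordanChains.finrank_chainSpan]
  have h4 := hJ.finrank_map n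
  rw [hEq] at h4
  rw [← hE] at h3
  rw [hmap] at h2
  omega

end Chains

section Replacement

variable {k : Type*} [Field k]
variable {V : Type*} [AddCommGroup V] [Module k V]

/-- The endomorphism `v ↦ B(p, v) q - B(q, v) p`. -/
def wedgeEnd (B : V →ₗ[k] V →ₗ[k] k) (p q : V) : Module.End k V :=
  (B p).smulRight q - (B q).smulRight p

@[simp]
lemma wedgeEnd_apply (B : V →ₗ[k] V →ₗ[k] k) (p q v : V) :
    wedgeEnd B p q v = B p v • q - B q v • p := rfl

lemma isSkewFor_wedgeEnd {B : V →ₗ[k] V →ₗ[k] k} (hB : IsQuadraticForm B) (p q : V) :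
    IsSkewFor B (wedgeEnd B p q) := by
  intro v w
  simp [hB.symm v p, hB.symm v q]
  ring

/-- Orthogonal chains of lengths `2m+1, 2m+1, 3` can be deformed into Jordan chains of lengths
`2m+2, 2m+2, 1`. -/
lemma exists_deformation_even_pair_one [IsAlgClosed k] [CharZero k] [FiniteDimensional k V]
    {B : V →ₗ[k] V →ₗ[k] k} (hB : IsQuadraticForm B) {x : Module.End k V} (hx : IsSkewFor B x)
    {m : ℕ} (hm : 1 ≤ m) {e : Fin 3 → V} (h : IsOrthChains B x e ![m, m, 1]) :
    ∃ z : Module.End k V, IsSkewFor B z ∧ ∀ t : k, t ≠ 0 → ∀ n : ℕ,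
      Module.finrank k (LinearMap.range ((x + t • z) ^ n)) + (2 * (2 * m + 1 - n) + (3 - n)) =
        Module.finrank k (LinearMap.range (x ^ n)) + (2 * (2 * m + 2 - n) + (1 - n)) := by
  obtain ⟨ι, hι⟩ := IsAlgClosed.exists_pow_nat_eq (-1 : k) (n := 2) (by norm_num)
  set p := e 0 + ι • e 1 with hp
  set q := e 0 - ι • e 1 with hq
  set w := e 2 with hw
  have pw := h.pairing
  have hqp : ∀ n, B q ((x ^ n) p) = if n = 2 * m then 2 else 0 := by
    intro n
    simp [hq, hp, pw]
    split_ifs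
    · linear_combination -hι
    · ring
  have hpp : ∀ n, B p ((x ^ n) p) = 0 := by
    intro n
    simp [hp, pw]
    split_ifs
    · linear_combination hι
    · ring
  have hqq : ∀ n, B q ((x ^ n) q) = 0 := by
    intro n
    simp [hq, pw]
    split_ifs
    · linear_combination hι
    · ring
  have hpq : ∀ n, B p ((x ^ n) q) = if n = 2 * m then 2 else 0 := by
    intro n
    simp [hq, hp, pw]
    split_ifs
    · linear_combination -hι
    · ring
  have hpw : ∀ n, B p ((x ^ n) w) = 0 := by
    intro n
    simp [hp, hw, pw]
  have hqw : ∀ n, B q ((x ^ n) w) = 0 := by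
    intro n
    simp [hq, hw, pw]
  have hwp : ∀ n, B w ((x ^ n) p) = 0 := by
    intro n
    simp [hp, hw, pw]
  have hwq : ∀ n, B w ((x ^ n) q) = 0 := by
    intro n
    simp [hq, hw, pw]
  have hww : ∀ n, B w ((x ^ n) w) = if n = 2 then 1 else 0 := by
    intro n
    simp [hw, pw]
  have hxp : (x ^ (2 * m + 1)) p = 0 := by
    have h0 := h.pow_eq_zero 0
    have h1 := h.pow_eq_zero 1
    simp at h0 h1
    simp [hp, h0, h1]
  have hxq : (x ^ (2 * m + 1)) q = 0 := by
    have h0 := h.pow_eq_zero 0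
    have h1 := h.pow_eq_zero 1
    simp at h0 h1
    simp [hq, h0, h1]
  have hxw : (x ^ 3) w = 0 := by simpa using h.pow_eq_zero 2
  have hpE : p ∈ chainSpan x e := add_mem (by simpa using pow_apply_mem_chainSpan x e 0 0)
    (Submodule.smul_mem _ _ (by simpa using pow_apply_mem_chainSpan x e 1 0))
  have hqE : q ∈ chainSpan x e := sub_mem (by simpa using pow_apply_mem_chainSpan x e 0 0)
    (Submodule.smul_mem _ _ (by simpa using pow_apply_mem_chainSpan x e 1 0))
  have hwE : ∀ i, (x ^ i) w ∈ chainSpan x e := fun i => pow_apply_mem_chainSpan x e 2 i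
  have hxE : ∀ v ∈ chainSpan x e, ∀ i, (x ^ i) v ∈ chainSpan x e := by
    intro v hv i
    induction i with
    | zero => simpa using hv
    | succ i ih => rw [pow_succ', Module.End.mul_apply]; exact apply_mem_chainSpan ih
  let z := wedgeEnd B q ((x ^ 2) w)
  have hzp : ∀ i, z ((x ^ i) p) = (if i = 2 * m then (2 : k) else 0) • (x ^ 2) w := by
    intro i
    simp only [z, wedgeEnd_apply, hqp]
    rw [hx.pow_apply, ← Module.End.mul_apply, ← pow_add, hwp]
    simp
  have hzq : ∀ i, z ((x ^ i) q) = 0 := by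
    intro i
    simp only [z, wedgeEnd_apply, hqq]
    rw [hx.pow_apply, ← Module.End.mul_apply, ← pow_add, hwq]
    simp
  have hzw : ∀ i, z ((x ^ i) w) = -(if i = 0 then q else 0) := by
    intro i
    simp only [z, wedgeEnd_apply, hqw]
    rw [hx.pow_apply, ← Module.End.mul_apply, ← pow_add, hww]
    simp
  refine ⟨z, isSkewFor_wedgeEnd hB _ _, fun t ht n => ?_⟩
  set X := x + t • z with hX
  have hXp : ∀ i, i ≤ 2 * m → (X ^ i) p = (x ^ i) p := by
    intro i
    induction i with
    | zero => simp
    | succ i ih =>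
      intro hi
      rw [pow_succ', Module.End.mul_apply, ih (by omega), hX, LinearMap.add_apply,
        LinearMap.smul_apply, hzp, if_neg (by omega), zero_smul, smul_zero, add_zero,
        ← Module.End.mul_apply, ← pow_succ']
  have hXw2 : ∀ i, 1 ≤ i → X ((x ^ i) w) = (x ^ (i + 1)) w := by
    intro i hi
    rw [hX, LinearMap.add_apply, LinearMap.smul_apply, hzw, if_neg (by omega), neg_zero,
      smul_zero, add_zero, ← Module.End.mul_apply, ← pow_succ']
  have hXp1 : (X ^ (2 * m + 1)) p = (2 * t) • (x ^ 2) w := by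
    rw [pow_succ', Module.End.mul_apply, hXp _ le_rfl, hX, LinearMap.add_apply,
      LinearMap.smul_apply, hzp, if_pos rfl, ← Module.End.mul_apply, ← pow_succ', hxp, zero_add,
      smul_smul, mul_comm]
  have hXp2 : (X ^ (2 * m + 2)) p = 0 := by
    rw [pow_succ', Module.End.mul_apply, hXp1, map_smul, hXw2 2 (by omega), hxw, smul_zero]
  have hXw : ∀ i, (X ^ (i + 1)) w = (x ^ (i + 1)) w - t • (x ^ i) q := by
    intro i
    induction i with
    | zero =>
      have := hzw 0
      simp only [pow_zero, Module.End.one_apply, if_true] at this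
      simp [hX, this, sub_eq_add_neg]
    | succ i ih =>
      rw [pow_succ', Module.End.mul_apply, ih, map_sub, hXw2 _ (by omega), map_smul, hX,
        LinearMap.add_apply, LinearMap.smul_apply, hzq, smul_zero, add_zero,
        ← Module.End.mul_apply, ← pow_succ']
  have hXw1 : (X ^ (2 * m + 1)) w = -(t • (x ^ (2 * m)) q) := by
    rw [hXw, pow_apply_eq_zero_of_le hxw (by omega), zero_sub]
  have hXw3 : (X ^ (2 * m + 2)) w = 0 := by
    rw [hXw, pow_apply_eq_zero_of_le hxw (by omega), hxq]
    simp
  have hX3 : X ((2 * t) • x w - (x ^ (2 * m)) p) = 0 := by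
    have h1 := hXw2 1 le_rfl
    rw [pow_one] at h1
    have h2 := hXp1
    rw [pow_succ', Module.End.mul_apply, hXp _ le_rfl] at h2
    rw [map_sub, map_smul, h1, h2, sub_self]
  have hJ : IsJordanChains X ![p, w, (2 * t) • x w - (x ^ (2 * m)) p]
      ![2 * m + 2, 2 * m + 2, 1] := by
    refine ⟨?_, ?_, ?_⟩
    · intro l
      fin_cases l <;> simp
    · intro l
      fin_cases l
      · simpa using hXp2
      · simpa using hXw3
      · simpa using hX3
    · rw [Fintype.linearIndependent_iff]
      intro g hg
      simp only [Fin.sum_univ_three, Matrix.cons_val_zero, Matrix.cons_val_one, Matrix.cons_val,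
        show 2 * m + 2 - 1 = 2 * m + 1 from rfl, hXp1, hXw1, Nat.sub_self, pow_zero,
        Module.End.one_apply] at hg
      have h0 := congrArg (B w) hg
      have h1 := congrArg (B p) hg
      have h2 := congrArg (B q) hg
      have a1 := hww 1
      have a2 := hpw 1
      have a3 := hqw 1
      rw [pow_one] at a1 a2 a3
      simp [hww, hwp, hwq, a1, ht] at h0
      simp [hpw, hpp, hpq, a2, ht] at h1
      simp [hqw, hqp, hqq, a3] at h2
      intro l
      fin_cases l
      · exact h0
      · exact h1
      · exact h2
  have := h.finrank_range_pow_add hB hx (z := t • z)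
    (fun v => Submodule.smul_mem _ _ (sub_mem (Submodule.smul_mem _ _ (hwE 2))
      (Submodule.smul_mem _ _ hqE)))
    (fun v hv => by simp [z, hv _ hqE, hv _ (hwE 2)])
    (v := ![p, w, (2 * t) • x w - (x ^ (2 * m)) p])
    (by
      intro l
      fin_cases l
      · exact hpE
      · exact hwE 0
      · exact sub_mem (Submodule.smul_mem _ _ (hwE 1)) (hxE p hpE _)) hJ
    (by simp [Fin.sum_univ_three]; ring) n
  rw [← hX] at this
  simp [Fin.sum_univ_three] at this
  omega

/-- Orthogonal chains of lengths `2m+1, 2m+1, 1, 1` can be deformed into Jordan chains of lengths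
`2m+2, 2m+2`. -/
lemma exists_deformation_even_pair [IsAlgClosed k] [CharZero k] [FiniteDimensional k V]
    {B : V →ₗ[k] V →ₗ[k] k} (hB : IsQuadraticForm B) {x : Module.End k V} (hx : IsSkewFor B x)
    {m : ℕ} {e : Fin 4 → V} (h : IsOrthChains B x e ![m, m, 0, 0]) :
    ∃ z : Module.End k V, IsSkewFor B z ∧ ∀ t : k, t ≠ 0 → ∀ n : ℕ,
      Module.finrank k (LinearMap.range ((x + t • z) ^ n)) + (2 * (2 * m + 1 - n) + 2 * (1 - n)) =
        Module.finrank k (LinearMap.range (x ^ n)) + 2 * (2 * m + 2 - n) := by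
  obtain ⟨ι, hι⟩ := IsAlgClosed.exists_pow_nat_eq (-1 : k) (n := 2) (by norm_num)
  set p := e 0 + ι • e 1 with hp
  set q := e 0 - ι • e 1 with hq
  set u := e 2 + ι • e 3 with hu
  set v := e 2 - ι • e 3 with hv
  have pw := h.pairing
  have hqp : ∀ n, B q ((x ^ n) p) = if n = 2 * m then 2 else 0 := by
    intro n
    simp [hq, hp, pw]
    split_ifs
    · linear_combination -hι
    · ring
  have hpp : ∀ n, B p ((x ^ n) p) = 0 := by
    intro n
    simp [hp, pw]
    split_ifs
    · linear_combination hι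
    · ring
  have hpq : ∀ n, B p ((x ^ n) q) = if n = 2 * m then 2 else 0 := by
    intro n
    simp [hq, hp, pw]
    split_ifs
    · linear_combination -hι
    · ring
  have hvp : ∀ n, B v ((x ^ n) p) = 0 := by
    intro n
    simp [hp, hv, pw]
  have hvq : ∀ n, B v ((x ^ n) q) = 0 := by
    intro n
    simp [hq, hv, pw]
  have hup : ∀ n, B u ((x ^ n) p) = 0 := by
    intro n
    simp [hp, hu, pw]
  have pw0 : ∀ l l', B (e l) (e l') =
      if l = l' ∧ 0 = 2 * (![m, m, 0, 0] : Fin 4 → ℕ) l then 1 else 0 :=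
    fun l l' => by simpa using pw l l' 0
  have hpu : B p u = 0 := by simp [hp, hu, pw0]
  have hpv : B p v = 0 := by simp [hp, hv, pw0]
  have hqv : B q v = 0 := by simp [hq, hv, pw0]
  have hvu : B v u = 2 := by
    simp [hu, hv, pw0]
    linear_combination -hι
  have huv : B u v = 2 := by rw [hB.symm, hvu]
  have hvv : B v v = 0 := by
    simp [hv, pw0]
    linear_combination hι
  have hxp : (x ^ (2 * m + 1)) p = 0 := by
    have h0 := h.pow_eq_zero 0
    have h1 := h.pow_eq_zero 1
    simp at h0 h1
    simp [hp, h0, h1]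
  have hxq : (x ^ (2 * m + 1)) q = 0 := by
    have h0 := h.pow_eq_zero 0
    have h1 := h.pow_eq_zero 1
    simp at h0 h1
    simp [hq, h0, h1]
  have hxe2 : x (e 2) = 0 := by simpa using h.pow_eq_zero 2
  have hxe3 : x (e 3) = 0 := by simpa using h.pow_eq_zero 3
  have hxu : x u = 0 := by simp [hu, hxe2, hxe3]
  have hxv : x v = 0 := by simp [hv, hxe2, hxe3]
  have heE : ∀ l, e l ∈ chainSpan x e := fun l => by simpa using pow_apply_mem_chainSpan x e l 0
  have hpE : p ∈ chainSpan x e := add_mem (heE 0) (Submodule.smul_mem _ _ (heE 1))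
  have hqE : q ∈ chainSpan x e := sub_mem (heE 0) (Submodule.smul_mem _ _ (heE 1))
  have huE : u ∈ chainSpan x e := add_mem (heE 2) (Submodule.smul_mem _ _ (heE 3))
  have hvE : v ∈ chainSpan x e := sub_mem (heE 2) (Submodule.smul_mem _ _ (heE 3))
  let z := wedgeEnd B v p
  have hzp : ∀ i, z ((x ^ i) p) = 0 := by
    intro i
    simp [z, hvp, hpp]
  have hzq : ∀ i, z ((x ^ i) q) = -((if i = 2 * m then (2 : k) else 0) • v) := by
    intro i
    simp [z, hvq, hpq]
  have hzu : z u = (2 : k) • p := by simp [z, hvu, hpu]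
  have hzv : z v = 0 := by simp [z, hvv, hpv]
  refine ⟨z, isSkewFor_wedgeEnd hB _ _, fun t ht n => ?_⟩
  set X := x + t • z with hX
  have hXu : ∀ i, (X ^ (i + 1)) u = (2 * t) • (x ^ i) p := by
    intro i
    induction i with
    | zero => simp [hX, hxu, hzu, smul_smul, mul_comm]
    | succ i ih =>
      rw [pow_succ', Module.End.mul_apply, ih, map_smul, hX, LinearMap.add_apply,
        LinearMap.smul_apply, hzp, smul_zero, add_zero, ← Module.End.mul_apply, ← pow_succ']
  have hXq : ∀ i, i ≤ 2 * m → (X ^ i) q = (x ^ i) q := by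
    intro i
    induction i with
    | zero => simp
    | succ i ih =>
      intro hi
      rw [pow_succ', Module.End.mul_apply, ih (by omega), hX, LinearMap.add_apply,
        LinearMap.smul_apply, hzq, if_neg (by omega), zero_smul, neg_zero, smul_zero, add_zero,
        ← Module.End.mul_apply, ← pow_succ']
  have hXq1 : (X ^ (2 * m + 1)) q = -((2 * t) • v) := by
    rw [pow_succ', Module.End.mul_apply, hXq _ le_rfl, hX, LinearMap.add_apply,
      LinearMap.smul_apply, hzq, if_pos rfl, ← Module.End.mul_apply, ← pow_succ', hxq, zero_add,
      smul_neg, smul_smul, mul_comm]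
  have hXq2 : (X ^ (2 * m + 2)) q = 0 := by
    rw [pow_succ', Module.End.mul_apply, hXq1]
    simp [hX, hxv, hzv]
  have hXu2 : (X ^ (2 * m + 2)) u = 0 := by rw [hXu, hxp, smul_zero]
  have hJ : IsJordanChains X ![u, q] ![2 * m + 2, 2 * m + 2] := by
    refine ⟨?_, ?_, ?_⟩
    · intro l
      fin_cases l <;> simp
    · intro l
      fin_cases l
      · simpa using hXu2
      · simpa using hXq2
    · rw [Fintype.linearIndependent_iff]
      intro g hg
      simp only [Fin.sum_univ_two, Matrix.cons_val_zero, Matrix.cons_val_one,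
        show 2 * m + 2 - 1 = 2 * m + 1 from rfl, hXu, hXq1] at hg
      have h0 := congrArg (B q) hg
      have h1 := congrArg (B u) hg
      simp [hqp, hqv, ht] at h0
      simp [hup, huv, ht] at h1
      intro l
      fin_cases l
      · exact h0
      · exact h1
  have := h.finrank_range_pow_add hB hx (z := t • z)
    (fun w => Submodule.smul_mem _ _ (sub_mem (Submodule.smul_mem _ _ hpE)
      (Submodule.smul_mem _ _ hvE)))
    (fun w hw => by simp [z, hw _ hvE, hw _ hpE])
    (v := ![u, q])
    (by
      intro l
      fin_cases l
      · exact huE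
      · exact hqE) hJ
    (by simp [Fin.sum_univ_two, Fin.sum_univ_four]; ring) n
  rw [← hX] at this
  simp [Fin.sum_univ_two, Fin.sum_univ_four] at this
  omega

end Replacement

section Realizable

universe u

/-- There are skew-adjoint `x`, `y` whose powers have ranks `f`, with trivial skew commutant and
with orthogonal chains of lengths `2 m l + 1`. -/
def Realizable (k : Type u) [Field k] (f : ℕ → ℕ) {ι : Type} [DecidableEq ι] (m : ι → ℕ) : Prop :=
  ∃ (V : Type u) (_ : AddCommGroup V) (_ : Module k V) (_ : FiniteDimensional k V)
    (B : V →ₗ[k] V →ₗ[k] k) (x y : Module.End k V),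
    IsQuadraticForm B ∧ IsSkewFor B x ∧ IsSkewFor B y ∧
    (∀ n, Module.finrank k (LinearMap.range (x ^ n)) = f n) ∧
    (∀ n, Module.finrank k (LinearMap.range (y ^ n)) = f n) ∧
    SkewCommutantTrivial B x y ∧
    (∃ e, IsOrthChains B x e m) ∧ ∃ e, IsOrthChains B y e m

/-- A cyclically rigid pair with prescribed ranks and orthogonal chains. -/
def IsRigidBlock (k : Type u) [Field k] (f : ℕ → ℕ) {ι : Type} [DecidableEq ι] (m : ι → ℕ) :
    Prop :=
  ∃ (V : Type u) (_ : AddCommGroup V) (_ : Module k V) (_ : FiniteDimensional k V)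
    (B : V →ₗ[k] V →ₗ[k] k) (x y : Module.End k V) (s : V) (a b : ℕ),
    IsQuadraticForm B ∧ IsSkewFor B x ∧ IsSkewFor B y ∧
    (∀ n, Module.finrank k (LinearMap.range (x ^ n)) = f n) ∧
    (∀ n, Module.finrank k (LinearMap.range (y ^ n)) = f n) ∧
    IsCyclicallyRigid x y s a b ∧
    (∃ e, IsOrthChains B x e m) ∧ ∀ c : k, c ≠ 0 → ∃ e, IsOrthChains B (c • y) e m

variable {k : Type u} [Field k]

lemma IsOrthChains.prodMap {V₁ V₂ : Type*} [AddCommGroup V₁] [Module k V₁] [AddCommGroup V₂]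
    [Module k V₂] {B₁ : V₁ →ₗ[k] V₁ →ₗ[k] k} {B₂ : V₂ →ₗ[k] V₂ →ₗ[k] k}
    {x₁ : Module.End k V₁} {x₂ : Module.End k V₂} {ι₁ ι₂ : Type*} [DecidableEq ι₁]
    [DecidableEq ι₂] {e₁ : ι₁ → V₁} {m₁ : ι₁ → ℕ} {e₂ : ι₂ → V₂} {m₂ : ι₂ → ℕ}
    (h₁ : IsOrthChains B₁ x₁ e₁ m₁) (h₂ : IsOrthChains B₂ x₂ e₂ m₂) :
    IsOrthChains (prodForm B₁ B₂) (x₁.prodMap x₂)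
      (Sum.elim (fun l => (e₁ l, 0)) fun l => (0, e₂ l)) (Sum.elim m₁ m₂) where
  pow_eq_zero := by
    rintro (l | l)
    · simp [prodMap_pow, h₁.pow_eq_zero]
    · simp [prodMap_pow, h₂.pow_eq_zero]
  pairing := by
    rintro (l | l) (l' | l') n
    · simp [prodMap_pow, h₁.pairing]
    · simp [prodMap_pow]
    · simp [prodMap_pow]
    · simp [prodMap_pow, h₂.pairing]

lemma IsOrthChains.comp {V : Type*} [AddCommGroup V] [Module k V] {B : V →ₗ[k] V →ₗ[k] k}
    {x : Module.End k V} {ι κ : Type*} [DecidableEq ι] [DecidableEq κ] {e : ι → V} {m : ι → ℕ}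
    (h : IsOrthChains B x e m) {g : κ → ι} (hg : Function.Injective g) :
    IsOrthChains B x (e ∘ g) (m ∘ g) where
  pow_eq_zero l := h.pow_eq_zero (g l)
  pairing l l' n := by simp [h.pairing, hg.eq_iff]

lemma Realizable.comp {f : ℕ → ℕ} {ι κ : Type} [DecidableEq ι] [DecidableEq κ] {m : ι → ℕ}
    (h : Realizable k f m) {g : κ → ι} (hg : Function.Injective g) : Realizable k f (m ∘ g) := by
  obtain ⟨V, _, _, _, B, x, y, hB, hx, hy, hfx, hfy, ht, ⟨e, he⟩, ⟨e', he'⟩⟩ := h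
  exact ⟨V, _, _, inferInstance, B, x, y, hB, hx, hy, hfx, hfy, ht, ⟨_, he.comp hg⟩,
    ⟨_, he'.comp hg⟩⟩

lemma Realizable.congr {f f' : ℕ → ℕ} {ι : Type} [DecidableEq ι] {m : ι → ℕ}
    (h : Realizable k f m) (hf : ∀ n, f n = f' n) : Realizable k f' m :=
  (funext hf : f = f') ▸ h

lemma finrank_range_smul_pow {V : Type*} [AddCommGroup V] [Module k V] (y : Module.End k V)
    {c : k} (hc : c ≠ 0) (n : ℕ) :
    Module.finrank k (LinearMap.range ((c • y) ^ n)) =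
      Module.finrank k (LinearMap.range (y ^ n)) := by
  rw [smul_pow, LinearMap.range_smul _ _ (pow_ne_zero n hc)]

lemma Realizable.add [CharZero k] {f₁ f₂ : ℕ → ℕ} {ι₁ ι₂ : Type} [DecidableEq ι₁]
    [DecidableEq ι₂] {m₁ : ι₁ → ℕ} {m₂ : ι₂ → ℕ} (h₁ : Realizable k f₁ m₁)
    (h₂ : IsRigidBlock k f₂ m₂) :
    Realizable k (fun n => f₁ n + f₂ n) (Sum.elim m₁ m₂) := by
  obtain ⟨V₁, _, _, _, B₁, x₁, y₁, hB₁, hx₁, hy₁, hfx₁, hfy₁, ht, ⟨e₁, he₁⟩, ⟨e₁', he₁'⟩⟩ := h₁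
  obtain ⟨V₂, _, _, _, B₂, x₂, y₂, s, a, b, hB₂, hx₂, hy₂, hfx₂, hfy₂, hr, ⟨e₂, he₂⟩, he₂'⟩ := h₂
  obtain ⟨c, hc, hc'⟩ := exists_skewCommutantTrivial_prodMap (B₁ := B₁) hB₂ ht hr
  obtain ⟨e₂', he₂'⟩ := he₂' c hc
  refine ⟨V₁ × V₂, inferInstance, inferInstance, inferInstance, prodForm B₁ B₂, x₁.prodMap x₂,
    y₁.prodMap (c • y₂), hB₁.prod hB₂, hx₁.prodMap hx₂, hy₁.prodMap (hy₂.smul c), fun n => ?_,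
    fun n => ?_, hc', ⟨_, he₁.prodMap he₂⟩, ⟨_, he₁'.prodMap he₂'⟩⟩
  · rw [prodMap_pow, finrank_range_prodMap, hfx₁, hfx₂]
  · rw [prodMap_pow, finrank_range_prodMap, hfy₁, finrank_range_smul_pow _ hc, hfy₂]

lemma exists_ne_zero_skewCommutantTrivial [CharZero k] {V : Type*} [AddCommGroup V] [Module k V]
    [FiniteDimensional k V] (B : V →ₗ[k] V →ₗ[k] k) {x y : Module.End k V}
    (n n' : Module.End k V) (h : SkewCommutantTrivial B x y) :
    ∃ t : k, t ≠ 0 ∧ SkewCommutantTrivial B (x + t • n) (y + t • n') := by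
  obtain ⟨t, ht⟩ := ((finite_setOf_not_skewCommutantTrivial B n n' h).union
    (Set.finite_singleton (0 : k))).infinite_compl.nonempty
  simp only [Set.mem_compl_iff, Set.mem_union, Set.mem_ofPred_eq, Set.mem_singleton_iff,
    not_or, not_not] at ht
  exact ⟨t, ht.2, ht.1⟩

lemma isOrthChains_elim {V : Type*} [AddCommGroup V] [Module k V] (B : V →ₗ[k] V →ₗ[k] k)
    (x : Module.End k V) (m : Fin 0 → ℕ) : ∃ e, IsOrthChains B x e m :=
  ⟨Fin.elim0, fun l => l.elim0, fun l => l.elim0⟩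

lemma Realizable.even_pair_one [IsAlgClosed k] [CharZero k] {f f' : ℕ → ℕ} {m : ℕ} (hm : 1 ≤ m)
    (h : Realizable k f ![m, m, 1])
    (hf : ∀ n, f' n + (2 * (2 * m + 1 - n) + (3 - n)) = f n + (2 * (2 * m + 2 - n) + (1 - n))) :
    Realizable k f' ![] := by
  obtain ⟨V, _, _, _, B, x, y, hB, hx, hy, hfx, hfy, ht, ⟨e, he⟩, ⟨e', he'⟩⟩ := h
  obtain ⟨z, hz, hzr⟩ := exists_deformation_even_pair_one hB hx hm he
  obtain ⟨z', hz', hzr'⟩ := exists_deformation_even_pair_one hB hy hm he'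
  obtain ⟨t, ht0, htt⟩ := exists_ne_zero_skewCommutantTrivial B z z' ht
  refine ⟨V, _, _, inferInstance, B, x + t • z, y + t • z', hB, hx.add (hz.smul t),
    hy.add (hz'.smul t), fun n => ?_, fun n => ?_, htt, isOrthChains_elim _ _ _,
    isOrthChains_elim _ _ _⟩
  · have h1 := hzr t ht0 n
    have h2 := hf n
    rw [hfx] at h1
    omega
  · have h1 := hzr' t ht0 n
    have h2 := hf n
    rw [hfy] at h1
    omega

lemma Realizable.even_pair [IsAlgClosed k] [CharZero k] {f f' : ℕ → ℕ} {m : ℕ}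
    (h : Realizable k f ![m, m, 0, 0])
    (hf : ∀ n, f' n + (2 * (2 * m + 1 - n) + 2 * (1 - n)) = f n + 2 * (2 * m + 2 - n)) :
    Realizable k f' ![] := by
  obtain ⟨V, _, _, _, B, x, y, hB, hx, hy, hfx, hfy, ht, ⟨e, he⟩, ⟨e', he'⟩⟩ := h
  obtain ⟨z, hz, hzr⟩ := exists_deformation_even_pair hB hx he
  obtain ⟨z', hz', hzr'⟩ := exists_deformation_even_pair hB hy he'
  obtain ⟨t, ht0, htt⟩ := exists_ne_zero_skewCommutantTrivial B z z' ht
  refine ⟨V, _, _, inferInstance, B, x + t • z, y + t • z', hB, hx.add (hz.smul t),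
    hy.add (hz'.smul t), fun n => ?_, fun n => ?_, htt, isOrthChains_elim _ _ _,
    isOrthChains_elim _ _ _⟩
  · have h1 := hzr t ht0 n
    have h2 := hf n
    rw [hfx] at h1
    omega
  · have h1 := hzr' t ht0 n
    have h2 := hf n
    rw [hfy] at h1
    omega

/-- A nondegenerate symmetric form over an algebraically closed field has an orthonormal basis. -/
lemma IsQuadraticForm.exists_orthonormal_basis [IsAlgClosed k] [CharZero k] {V : Type*}
    [AddCommGroup V] [Module k V] [FiniteDimensional k V] {B : V →ₗ[k] V →ₗ[k] k}
    (hB : IsQuadraticForm B) :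
    ∃ b : Module.Basis (Fin (Module.finrank k V)) k V, ∀ i j, B (b i) (b j) =
      if i = j then 1 else 0 := by
  have : Invertible (2 : k) := invertibleOfNonzero two_ne_zero
  obtain ⟨v, hv⟩ := LinearMap.BilinForm.exists_orthogonal_basis (B := B)
    (by exact ⟨fun v w => by simp [hB.symm v w]⟩)
  have hoff : ∀ i j, i ≠ j → B (v i) (v j) = 0 := fun i j hij => hv hij
  have hne : ∀ i, B (v i) (v i) ≠ 0 := by
    intro i hi
    refine v.ne_zero i (hB.nondeg _ fun w => ?_)
    have : B (v i) = 0 := by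
      refine v.ext fun j => ?_
      by_cases hij : i = j
      · rw [← hij, hi]; rfl
      · rw [hoff i j hij]; rfl
    rw [this]; rfl
  choose r hr using fun i => IsAlgClosed.exists_pow_nat_eq (B (v i) (v i)) (n := 2) (by norm_num)
  have hr0 : ∀ i, r i ≠ 0 := by
    intro i h0
    apply hne i
    rw [← hr i, h0]
    norm_num
  refine ⟨v.isUnitSMul (w := fun i => (r i)⁻¹) fun i =>
    (isUnit_iff_ne_zero.2 (inv_ne_zero (hr0 i))), fun i j => ?_⟩
  rw [Module.Basis.isUnitSMul_apply, Module.Basis.isUnitSMul_apply]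
  simp only [map_smul, LinearMap.smul_apply, smul_eq_mul]
  split_ifs with hij
  · subst hij
    rw [← hr i]
    field_simp [hr0 i]
  · rw [hoff i j hij]
    ring

lemma mul_rank_conj {N : ℕ} {g x : Matrix (Fin N) (Fin N) k} (hg : g * gᵀ = 1) (i : ℕ) :
    ((g * x * gᵀ) ^ i).rank = (x ^ i).rank := by
  have hg' : gᵀ * g = 1 := mul_eq_one_comm.1 hg
  have hpow : (g * x * gᵀ) ^ i = g * x ^ i * gᵀ := by
    induction i with
    | zero => simp [hg]
    | succ i ih =>
      rw [pow_succ, ih, pow_succ]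
      calc g * x ^ i * gᵀ * (g * x * gᵀ) = g * x ^ i * (gᵀ * g) * x * gᵀ := by
            simp only [mul_assoc]
        _ = g * (x ^ i * x) * gᵀ := by rw [hg']; simp only [mul_assoc, one_mul]
  have hu : IsUnit g.det := (Matrix.isUnit_iff_isUnit_det g).1 (IsUnit.of_mul_eq_one _ hg)
  have hu' : IsUnit gᵀ.det := (Matrix.isUnit_iff_isUnit_det gᵀ).1 (IsUnit.of_mul_eq_one _ hg')
  rw [hpow, Matrix.rank_mul_eq_left_of_isUnit_det _ _ hu',
    Matrix.rank_mul_eq_right_of_isUnit_det _ _ hu]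

/-- A realizable Jordan type has secant variety equal to the orthogonal Lie algebra. -/
lemma zClosure_eq_soSet_of_realizable [IsAlgClosed k] [CharZero k] {N p : ℕ} (hN : 3 ≤ N)
    (lam : Fin p → ℕ) (hsum : ∑ l, lam l = N)
    (h : Realizable k (fun n => ∑ l, (lam l - n)) ![]) :
    zClosure (Set.image2 (· + ·) (jordanOrbit k N lam ∩ soSet k N)
      (jordanOrbit k N lam ∩ soSet k N)) = soSet k N := by
  obtain ⟨V, _, _, _, B, x, y, hB, hx, hy, hfx, hfy, ht, -, -⟩ := h
  have hdim : Module.finrank k V = N := by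
    have := hfx 0
    rw [pow_zero, Module.End.one_eq_id, LinearMap.range_id, finrank_top] at this
    simpa [hsum] using this
  obtain ⟨b', hb'⟩ := hB.exists_orthonormal_basis
  subst hdim
  have hentry : ∀ z : Module.End k V, ∀ i j,
      LinearMap.toMatrix b' b' z i j = B (b' i) (z (b' j)) := by
    intro z i j
    have hrep : ∀ v, b'.repr v i = B (b' i) v := by
      intro v
      conv_rhs => rw [← b'.sum_repr v]
      rw [map_sum]
      simp [hb', -Module.Basis.sum_repr]
    rw [LinearMap.toMatrix_apply, hrep]
  have hskew : ∀ z : Module.End k V, IsSkewFor B z → (LinearMap.toMatrix b' b' z)ᵀ =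
      -LinearMap.toMatrix b' b' z := by
    intro z hz
    ext i j
    rw [Matrix.transpose_apply, Matrix.neg_apply, hentry, hentry, hB.symm, hz]
  have hmem : ∀ z : Module.End k V, IsSkewFor B z →
      (∀ n, Module.finrank k (LinearMap.range (z ^ n)) = ∑ l, (lam l - n)) →
      LinearMap.toMatrix b' b' z ∈ jordanOrbit k _ lam ∩ soSet k _ := by
    intro z hz hr
    refine ⟨fun i _ => ?_, hskew z hz⟩
    rw [LinearMap.toMatrix_pow, Matrix.rank_eq_finrank_range_toLin _ b' b',
      Matrix.toLin_toMatrix, hr]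
  refine zClosure_add_eq_soSet hN Set.inter_subset_right ?_ (hmem x hx hfx) (hmem y hy hfy) ?_
  · rintro g z hg ⟨hz, hz'⟩
    refine ⟨fun i hi => ?_, ?_⟩
    · rw [mul_rank_conj hg, hz i hi]
    · have hz'' : zᵀ = -z := hz'
      change (g * z * gᵀ)ᵀ = -(g * z * gᵀ)
      simp [Matrix.transpose_mul, hz'', Matrix.mul_assoc]
  · intro A hA hAx hAy
    have hAe : LinearMap.toMatrix b' b' (Matrix.toLin b' b' A) = A := LinearMap.toMatrix_toLin _ _ _
    have hcomm : ∀ z : Module.End k V, A * LinearMap.toMatrix b' b' z =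
        LinearMap.toMatrix b' b' z * A →
        Matrix.toLin b' b' A * z = z * Matrix.toLin b' b' A := by
      intro z hz
      apply (LinearMap.toMatrix b' b').injective
      rw [LinearMap.toMatrix_mul, LinearMap.toMatrix_mul, hAe, hz]
    have hsk : IsSkewFor B (Matrix.toLin b' b' A) := by
      have := LinearMap.ext_basis b' b' (B := B ∘ₗ Matrix.toLin b' b' A)
        (B' := -(B.compl₂ (Matrix.toLin b' b' A))) fun i j => by
          have h := congrFun (congrFun hA i) j
          rw [Matrix.transpose_apply, Matrix.neg_apply, ← hAe, hentry, hentry, hB.symm] at h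
          simpa using h
      intro v w
      simpa using LinearMap.congr_fun₂ this v w
    have := ht _ hsk (hcomm x hAx) (hcomm y hAy)
    rw [← hAe, this, map_zero]

end Realizable

section RelEnd

universe u

variable {k : Type u} [Field k] {J : Type} [DecidableEq J] {S : Finset J}

/-- The coordinate vector of `p`, or zero if `p ∉ S`. -/
def coordVec (k : Type u) [Field k] (S : Finset J) (p : J) : S → k :=
  fun i => if (i : J) = p then 1 else 0

lemma coordVec_coe (i : S) : coordVec k S i = Pi.single i 1 := by
  ext j
  rw [coordVec, Pi.single_apply]
  congr 1
  exact propext Subtype.coe_inj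

lemma ext_coordVec {W : Type*} [AddCommGroup W] [Module k W] {f g : (S → k) →ₗ[k] W}
    (h : ∀ p ∈ S, f (coordVec k S p) = g (coordVec k S p)) : f = g := by
  refine LinearMap.pi_ext' fun i => LinearMap.ext_ring ?_
  have := h i i.2
  rw [coordVec_coe] at this
  simpa using this

lemma eq_top_of_coordVec_mem {U : Submodule k (S → k)} (h : ∀ p ∈ S, coordVec k S p ∈ U) :
    U = ⊤ := by
  rw [eq_top_iff, ← (Pi.basisFun k S).span_eq, Submodule.span_le]
  rintro _ ⟨i, rfl⟩
  rw [Pi.basisFun_apply, ← coordVec_coe]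
  exact h i i.2

lemma linearIndependent_coordVec {κ : Type*} {c : κ → J} (hc : Function.Injective c)
    (hS : ∀ l, c l ∈ S) : LinearIndependent k fun l => coordVec k S (c l) := by
  have h : LinearIndependent k fun i : S => (Pi.single i 1 : S → k) := by
    convert (Pi.basisFun k S).linearIndependent using 2 with i
    exact (Pi.basisFun_apply k S i).symm
  have := h.comp (fun l => (⟨c l, hS l⟩ : S)) fun l l' hl => hc (by simpa using hl)
  convert this using 2 with l
  exact coordVec_coe ⟨c l, hS l⟩

/-- The bilinear form pairing the coordinate vectors of `p` and `σ p` to `sg p`. -/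
def involForm (S : Finset J) (σ : J → J) (sg : J → k) : (S → k) →ₗ[k] (S → k) →ₗ[k] k :=
  Matrix.toLinearMap₂' k (Matrix.of fun i j : S => if (j : J) = σ i then sg i else 0)

lemma involForm_coordVec {σ : J → J} {sg : J → k} {p q : J} (hp : p ∈ S) (hq : q ∈ S) :
    involForm S σ sg (coordVec k S p) (coordVec k S q) = if q = σ p then sg p else 0 := by
  rw [coordVec_coe ⟨p, hp⟩, coordVec_coe ⟨q, hq⟩, involForm, Matrix.toLinearMap₂'_apply']
  simp [Matrix.mulVec_single, single_dotProduct]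

/-- The endomorphism mapping the coordinate vector of `p` to the sum of those of its successors. -/
def relEnd (k : Type u) [Field k] (S : Finset J) (R : J → J → Prop) : Module.End k (S → k) := by
  classical
  exact Matrix.toLin' (Matrix.of fun q p : S => if R p q then 1 else 0)

lemma relEnd_coordVec_apply {R : J → J → Prop} [∀ p q, Decidable (R p q)] {p : J} (hp : p ∈ S)
    (i : S) :
    relEnd k S R (coordVec k S p) i = if R p i then 1 else 0 := by
  rw [coordVec_coe ⟨p, hp⟩, relEnd, Matrix.toLin'_apply]
  simp

lemma relEnd_coordVec {R : J → J → Prop} (hR : ∀ p q q', R p q → R p q' → q = q') {p q : J}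
    (hp : p ∈ S) (h : R p q) : relEnd k S R (coordVec k S p) = coordVec k S q := by
  classical
  ext i
  rw [relEnd_coordVec_apply hp, coordVec]
  congr 1
  exact propext ⟨fun h' => hR _ _ _ h' h, fun h' => h' ▸ h⟩

lemma relEnd_coordVec_eq_zero {R : J → J → Prop} {p : J}
    (hp : p ∈ S) (h : ∀ q, ¬ R p q) : relEnd k S R (coordVec k S p) = 0 := by
  classical
  ext i
  rw [relEnd_coordVec_apply hp, if_neg (h _)]
  rfl

lemma relEnd_pow_coordVec {R : J → J → Prop} (hR : ∀ p q q', R p q → R p q' → q = q') {c : ℕ → J}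
    {L : ℕ} (hS : ∀ i < L, c i ∈ S) (h : ∀ i, i + 1 < L → R (c i) (c (i + 1))) {i : ℕ}
    (hi : i < L) : (relEnd k S R ^ i) (coordVec k S (c 0)) = coordVec k S (c i) := by
  induction i with
  | zero => simp
  | succ i ih =>
    rw [pow_succ', Module.End.mul_apply, ih (by omega),
      relEnd_coordVec hR (hS i (by omega)) (h i hi)]

lemma relEnd_pow_coordVec_eq_zero {R : J → J → Prop} (hR : ∀ p q q', R p q → R p q' → q = q')
    {c : ℕ → J} {L : ℕ} (hL : 1 ≤ L) (hS : ∀ i < L, c i ∈ S)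
    (h : ∀ i, i + 1 < L → R (c i) (c (i + 1))) (hlast : ∀ q, ¬ R (c (L - 1)) q) {i : ℕ}
    (hi : L ≤ i) : (relEnd k S R ^ i) (coordVec k S (c 0)) = 0 := by
  refine pow_apply_eq_zero_of_le (a := L) ?_ hi
  obtain ⟨L, rfl⟩ : ∃ L', L = L' + 1 := ⟨L - 1, by omega⟩
  rw [pow_succ', Module.End.mul_apply, relEnd_pow_coordVec hR hS h (by omega)]
  exact relEnd_coordVec_eq_zero (hS _ (by omega)) hlast

lemma isJordanChains_relEnd {R : J → J → Prop} (hR : ∀ p q q', R p q → R p q' → q = q')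
    {κ : Type*} {c : κ → ℕ → J} {L : κ → ℕ} (hL : ∀ l, 1 ≤ L l) (hS : ∀ l, ∀ i < L l, c l i ∈ S)
    (h : ∀ l i, i + 1 < L l → R (c l i) (c l (i + 1))) (hlast : ∀ l q, ¬ R (c l (L l - 1)) q)
    (hinj : Function.Injective fun l => c l (L l - 1)) :
    IsJordanChains (relEnd k S R) (fun l => coordVec k S (c l 0)) L where
  pos := hL
  pow_eq_zero l := relEnd_pow_coordVec_eq_zero hR (hL l) (hS l) (h l) (hlast l) le_rfl
  socle := by
    have := linearIndependent_coordVec (k := k) (S := S) hinj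
      fun l => hS l _ (by have := hL l; omega)
    have heq : (fun l => (relEnd k S R ^ (L l - 1)) (coordVec k S (c l 0))) =
        fun l => coordVec k S (c l (L l - 1)) :=
      funext fun l => relEnd_pow_coordVec hR (hS l) (h l) (by have := hL l; omega)
    rwa [heq]

variable {σ : J → J} {sg : J → k}

lemma isQuadraticForm_involForm (hσ : ∀ p, σ (σ p) = p) (hσS : ∀ p ∈ S, σ p ∈ S)
    (hsg : ∀ p, sg p ≠ 0) (hsgσ : ∀ p, sg (σ p) = sg p) :
    IsQuadraticForm (involForm S σ sg) where
  symm := by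
    have : involForm S σ sg = (involForm S σ sg).flip := by
      refine ext_coordVec fun p hp => ext_coordVec fun q hq => ?_
      rw [LinearMap.flip_apply, involForm_coordVec hp hq, involForm_coordVec hq hp]
      by_cases h : q = σ p
      · subst h
        simp [hσ, hsgσ]
      · rw [if_neg h, if_neg]
        rintro rfl
        exact h (hσ q).symm
    intro v w
    conv_lhs => rw [this]
    rfl
  nondeg := by
    intro v hv
    ext i
    have := hv (coordVec k S (σ i))
    rw [coordVec_coe ⟨σ i, hσS i i.2⟩, involForm, Matrix.toLinearMap₂'_apply',
      Matrix.mulVec_single_one, dotProduct, Finset.sum_eq_single i] at this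
    · simpa [hsg] using this
    · intro j _ hj
      have : ¬ σ (i : J) = σ j := fun h => hj (Subtype.ext (by rw [← hσ j, ← h, hσ]))
      simp [this]
    · simp

lemma isSkewFor_relEnd (hσ : ∀ p, σ (σ p) = p) (hσS : ∀ p ∈ S, σ p ∈ S)
    {R : J → J → Prop} (hR : ∀ p q q', R p q → R p q' → q = q')
    (hRS : ∀ p q, R p q → q ∈ S)
    (hRσ : ∀ p q, R p q → R (σ q) (σ p)) (hRsg : ∀ p q, R p q → sg q = - sg p) :
    IsSkewFor (involForm S σ sg) (relEnd k S R) := by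
  have key : involForm S σ sg ∘ₗ relEnd k S R = -(involForm S σ sg).compl₂ (relEnd k S R) := by
    refine ext_coordVec fun p hp => ext_coordVec fun q hq => ?_
    rw [LinearMap.comp_apply, LinearMap.neg_apply, LinearMap.neg_apply, LinearMap.compl₂_apply]
    by_cases h : R p (σ q)
    · have h' : R q (σ p) := by simpa [hσ] using hRσ _ _ h
      rw [relEnd_coordVec hR hp h, relEnd_coordVec hR hq h', involForm_coordVec (hσS _ hq) hq,
        involForm_coordVec hp (hσS _ hp), if_pos (hσ q).symm, if_pos rfl, hRsg _ _ h]
    · have h' : ¬ R q (σ p) := fun h' => h (by simpa [hσ] using hRσ _ _ h')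
      have e1 : involForm S σ sg (relEnd k S R (coordVec k S p)) (coordVec k S q) = 0 := by
        by_cases hp' : ∃ r, R p r
        · obtain ⟨r, hr⟩ := hp'
          rw [relEnd_coordVec hR hp hr, involForm_coordVec (hRS _ _ hr) hq, if_neg]
          rintro rfl
          exact h (by rwa [hσ])
        · rw [relEnd_coordVec_eq_zero hp fun r hr => hp' ⟨r, hr⟩]
          simp
      have e2 : involForm S σ sg (coordVec k S p) (relEnd k S R (coordVec k S q)) = 0 := by
        by_cases hq' : ∃ r, R q r
        · obtain ⟨r, hr⟩ := hq'
          rw [relEnd_coordVec hR hq hr, involForm_coordVec hp (hRS _ _ hr), if_neg]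
          rintro rfl
          exact h' hr
        · rw [relEnd_coordVec_eq_zero hq fun r hr => hq' ⟨r, hr⟩]
          simp
      rw [e1, e2, neg_zero]
  intro v w
  simpa using LinearMap.congr_fun₂ key v w

end RelEnd

section Block

universe u

variable {k : Type u} [Field k]

/-- The index set of the basis of the rigid block. -/
def blockSet (m a : ℕ) (D : Finset ℤ) : Finset (ℤ ⊕ ℤ) :=
  (Finset.Icc (-(m + 2 * a : ℤ)) (m + 2 * a)).disjSum D

/-- The involution of the index set. -/
def blockNeg : ℤ ⊕ ℤ → ℤ ⊕ ℤ := Sum.map Neg.neg Neg.neg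

/-- The sign of a basis vector. -/
def blockSign (k : Type u) [Field k] (p : ℤ ⊕ ℤ) : k := if p.elim id id % 2 = 0 then 1 else -1

/-- The successor relation of the first nilpotent endomorphism. -/
def blockRel (m a : ℕ) (p q : ℤ ⊕ ℤ) : Prop :=
  ∃ n : ℤ, p = Sum.inl n ∧ q = Sum.inl (n + 1) ∧ -(m + 2 * a : ℤ) ≤ n ∧ n < m + 2 * a ∧
    (-(m : ℤ) ≤ n ∧ n < m ∨ n < -m ∧ (n - m) % 2 = 0 ∨ m < n ∧ (n - m) % 2 = 1)

/-- The long chain of the second nilpotent endomorphism. -/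
def blockLoop (m a : ℕ) (D : Finset ℤ) (i : ℤ) : ℤ ⊕ ℤ :=
  if i = -m then Sum.inl (m + 2 * a) else if i = m then Sum.inl (-(m + 2 * a)) else
    if i ∈ D then Sum.inr i else Sum.inl (-i)

/-- The successor relation of the second nilpotent endomorphism. -/
def blockRel' (m a : ℕ) (D : Finset ℤ) (p q : ℤ ⊕ ℤ) : Prop :=
  (∃ i : ℤ, p = blockLoop m a D i ∧ q = blockLoop m a D (i + 1) ∧ -(m : ℤ) ≤ i ∧ i < m) ∨
  ∃ n : ℤ, p = Sum.inl n ∧ q = Sum.inl (n + 1) ∧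
    (-(m + 2 * a : ℤ) ≤ n ∧ n < -m ∧ (n - m) % 2 = 1 ∨
      m ≤ n ∧ n < m + 2 * a ∧ (n - m) % 2 = 0)

variable {m a : ℕ} {D : Finset ℤ}

lemma inl_mem_blockSet {n : ℤ} :
    Sum.inl n ∈ blockSet m a D ↔ -(m + 2 * a : ℤ) ≤ n ∧ n ≤ m + 2 * a := by
  simp [blockSet]

lemma inr_mem_blockSet {n : ℤ} : Sum.inr n ∈ blockSet m a D ↔ n ∈ D := by
  simp [blockSet]

lemma blockNeg_blockNeg (p : ℤ ⊕ ℤ) : blockNeg (blockNeg p) = p := by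
  rcases p with n | n <;> simp [blockNeg]

lemma blockNeg_mem (hDs : ∀ i ∈ D, -i ∈ D) {p : ℤ ⊕ ℤ} (hp : p ∈ blockSet m a D) :
    blockNeg p ∈ blockSet m a D := by
  rcases p with n | n
  · rw [inl_mem_blockSet] at hp
    exact inl_mem_blockSet.2 ⟨by omega, by omega⟩
  · exact inr_mem_blockSet.2 (hDs _ (inr_mem_blockSet.1 hp))

lemma blockSign_ne_zero (p : ℤ ⊕ ℤ) : blockSign k p ≠ 0 := by
  rw [blockSign]
  split_ifs <;> simp

lemma blockSign_blockNeg (p : ℤ ⊕ ℤ) : blockSign k (blockNeg p) = blockSign k p := by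
  rcases p with n | n <;>
    simp only [blockSign, blockNeg, Sum.map_inl, Sum.map_inr, Sum.elim_inl, Sum.elim_inr, id] <;>
  · congr 1
    exact propext (by omega)

lemma blockSign_eq_neg {p q : ℤ ⊕ ℤ} (h : (p.elim id id - q.elim id id) % 2 = 1) :
    blockSign k q = -blockSign k p := by
  rw [blockSign, blockSign]
  split_ifs
  · omega
  · simp
  · simp
  · omega

lemma blockRel_functional (p q q' : ℤ ⊕ ℤ) (h : blockRel m a p q) (h' : blockRel m a p q') :
    q = q' := by
  obtain ⟨n, rfl, rfl, -⟩ := h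
  obtain ⟨n', h1, rfl, -⟩ := h'
  rw [Sum.inl.inj h1]

lemma blockRel_mem (p q : ℤ ⊕ ℤ) (h : blockRel m a p q) : q ∈ blockSet m a D := by
  obtain ⟨n, rfl, rfl, h⟩ := h
  exact inl_mem_blockSet.2 (by omega)

lemma blockRel_neg (p q : ℤ ⊕ ℤ) (h : blockRel m a p q) :
    blockRel m a (blockNeg q) (blockNeg p) := by
  obtain ⟨n, rfl, rfl, h⟩ := h
  exact ⟨-(n + 1), rfl, by simp [blockNeg], by omega⟩

lemma blockRel_sign (p q : ℤ ⊕ ℤ) (h : blockRel m a p q) : blockSign k q = -blockSign k p := by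
  obtain ⟨n, rfl, rfl, h⟩ := h
  exact blockSign_eq_neg (by simp only [Sum.elim_inl, id]; omega)

lemma blockLoop_eq_inl {i n : ℤ} (h : blockLoop m a D i = Sum.inl n) :
    i = -m ∧ n = m + 2 * a ∨ i = m ∧ n = -(m + 2 * a) ∨ i ≠ -m ∧ i ≠ m ∧ i ∉ D ∧ n = -i := by
  unfold blockLoop at h
  split_ifs at h <;> simp_all

lemma blockLoop_mem {i : ℤ} (h : -(m : ℤ) ≤ i) (h' : i ≤ m) :
    blockLoop m a D i ∈ blockSet m a D := by
  rw [blockLoop]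
  split_ifs with h1 h2 h3
  · exact inl_mem_blockSet.2 (by omega)
  · exact inl_mem_blockSet.2 (by omega)
  · exact inr_mem_blockSet.2 h3
  · exact inl_mem_blockSet.2 (by omega)

lemma blockLoop_injOn (hm : 1 ≤ m) {i j : ℤ}
    (hi : -(m : ℤ) ≤ i) (hi' : i ≤ m) (hj : -(m : ℤ) ≤ j) (hj' : j ≤ m)
    (h : blockLoop m a D i = blockLoop m a D j) : i = j := by
  rcases hc : blockLoop m a D j with n | n
  · have := blockLoop_eq_inl hc
    have := blockLoop_eq_inl (h.trans hc)
    omega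
  · rw [hc] at h
    unfold blockLoop at h hc
    split_ifs at h hc
    rw [Sum.inr.inj h, Sum.inr.inj hc]

lemma blockNeg_blockLoop (hm : 1 ≤ m) (hDs : ∀ i ∈ D, -i ∈ D) (i : ℤ) :
    blockNeg (blockLoop m a D i) = blockLoop m a D (-i) := by
  have : -i ∈ D ↔ i ∈ D := ⟨fun h => by simpa using hDs _ h, hDs i⟩
  have h1 : -i = -m ↔ i = m := by omega
  have h2 : -i = m ↔ i = -m := by omega
  simp only [blockLoop, this, h1, h2]
  split_ifs <;> first | omega | simp [blockNeg]

lemma blockLoop_parity (i : ℤ) : ((blockLoop m a D i).elim id id - i) % 2 = 0 := by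
  unfold blockLoop
  split_ifs <;> simp only [Sum.elim_inl, Sum.elim_inr, id] <;> omega

lemma blockRel'_functional (hm : 1 ≤ m) (p q q' : ℤ ⊕ ℤ)
    (h : blockRel' m a D p q) (h' : blockRel' m a D p q') : q = q' := by
  rcases h with ⟨i, rfl, rfl, h⟩ | ⟨n, rfl, rfl, h⟩ <;>
  rcases h' with ⟨j, h1, rfl, h'⟩ | ⟨n', h1, rfl, h'⟩
  · rw [blockLoop_injOn hm (by omega) (by omega) (by omega) (by omega) h1]
  · have := blockLoop_eq_inl h1
    omega
  · have := blockLoop_eq_inl h1.symm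
    omega
  · rw [Sum.inl.inj h1]

lemma blockRel'_mem (p q : ℤ ⊕ ℤ) (h : blockRel' m a D p q) : q ∈ blockSet m a D := by
  rcases h with ⟨i, rfl, rfl, h⟩ | ⟨n, rfl, rfl, h⟩
  · exact blockLoop_mem (by omega) (by omega)
  · exact inl_mem_blockSet.2 (by omega)

lemma blockRel'_neg (hm : 1 ≤ m) (hDs : ∀ i ∈ D, -i ∈ D) (p q : ℤ ⊕ ℤ)
    (h : blockRel' m a D p q) : blockRel' m a D (blockNeg q) (blockNeg p) := by
  rcases h with ⟨i, rfl, rfl, h⟩ | ⟨n, rfl, rfl, h⟩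
  · refine Or.inl ⟨-(i + 1), blockNeg_blockLoop hm hDs _, ?_, by omega⟩
    rw [blockNeg_blockLoop hm hDs]
    congr 1
    ring
  · exact Or.inr ⟨-(n + 1), rfl, by simp [blockNeg], by omega⟩

lemma blockRel'_sign (p q : ℤ ⊕ ℤ) (h : blockRel' m a D p q) :
    blockSign k q = -blockSign k p := by
  refine blockSign_eq_neg ?_
  rcases h with ⟨i, rfl, rfl, h⟩ | ⟨n, rfl, rfl, h⟩
  · have h1 := blockLoop_parity (m := m) (a := a) (D := D) i
    have h2 := blockLoop_parity (m := m) (a := a) (D := D) (i + 1)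
    omega
  · simp only [Sum.elim_inl, id]
    omega

end Block

section RigidBlock

universe u

variable {k : Type u} [Field k]

lemma exists_isOrthChains_relEnd [IsAlgClosed k] {J : Type} [DecidableEq J] {S : Finset J}
    {σ : J → J} {sg : J → k} (hsg : ∀ p, sg p ≠ 0) {R : J → J → Prop}
    (hR : ∀ p q q', R p q → R p q' → q = q') {m : ℕ} {c : ℕ → J}
    (hS : ∀ i < 2 * m + 1, c i ∈ S) (h : ∀ i, i + 1 < 2 * m + 1 → R (c i) (c (i + 1)))
    (hlast : ∀ q, ¬ R (c (2 * m)) q) (hend : c (2 * m) = σ (c 0))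
    (hne : ∀ i < 2 * m, c i ≠ σ (c 0)) {Q : Prop} {p : J} (hpS : Q → p ∈ S)
    (hpR : Q → ∀ q, ¬ R p q) (hpσ : σ p = p) (hpsg : sg p = 1)
    (hpc : Q → ∀ i < 2 * m + 1, c i ≠ p) {t : k} (ht : t ≠ 0) :
    ∃ e, IsOrthChains (involForm S σ sg) (t • relEnd k S R) e
      (fun b : {b : Bool // b = true → Q} => if b.1 = true then 0 else m) := by
  obtain ⟨μ, hμ⟩ := IsAlgClosed.exists_pow_nat_eq (t ^ (2 * m) * sg (c 0))⁻¹ (n := 2) (by norm_num)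
  have hμ' : μ * μ * (t ^ (2 * m) * sg (c 0)) = 1 := by
    rw [← sq, hμ]
    exact inv_mul_cancel₀ (mul_ne_zero (pow_ne_zero _ ht) (hsg _))
  have hpow : ∀ i < 2 * m + 1, (relEnd k S R ^ i) (coordVec k S (c 0)) = coordVec k S (c i) :=
    fun i hi => relEnd_pow_coordVec hR hS h hi
  have hpow' : ∀ i, 2 * m + 1 ≤ i → (relEnd k S R ^ i) (coordVec k S (c 0)) = 0 :=
    fun i hi => relEnd_pow_coordVec_eq_zero hR (by omega) hS h (by simpa using hlast) hi
  have hppow : Q → ∀ i, 1 ≤ i → (relEnd k S R ^ i) (coordVec k S p) = 0 := fun hQ i hi =>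
    pow_apply_eq_zero_of_le (a := 1)
      (by rw [pow_one]; exact relEnd_coordVec_eq_zero (hpS hQ) (hpR hQ)) hi
  have h0 : c 0 ∈ S := hS 0 (by omega)
  refine ⟨fun b => if b.1 = true then coordVec k S p else μ • coordVec k S (c 0), ?_, ?_⟩
  · rintro ⟨_ | _, hb⟩
    · simp [smul_pow, hpow' _ le_rfl]
    · have := hppow (hb rfl) 1 le_rfl
      simp only [pow_one] at this
      simp [this]
  · rintro ⟨_ | _, hb⟩ ⟨_ | _, hb'⟩ n
    · rcases Nat.lt_or_ge n (2 * m + 1) with hn | hn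
      · have : involForm S σ sg (coordVec k S (c 0)) (coordVec k S (c n)) =
            if n = 2 * m then sg (c 0) else 0 := by
          rw [involForm_coordVec h0 (hS n hn)]
          by_cases hn' : n = 2 * m
          · rw [if_pos hn', if_pos (hn' ▸ hend)]
          · rw [if_neg hn', if_neg (hne n (by omega))]
        simp only [smul_pow, Bool.false_eq_true, if_false, map_smul, LinearMap.smul_apply,
          hpow n hn, this, smul_eq_mul, true_and]
        split_ifs with hn'
        · rw [hn', ← hμ']
          ring
        · simp
      · have hn' : n ≠ 2 * m := by omega
        simp [smul_pow, hpow' n hn, hn']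
    · rcases Nat.eq_zero_or_pos n with rfl | hn
      · have : ¬ p = σ (c 0) := fun he => hpc (hb' rfl) (2 * m) (by omega) (hend.trans he.symm)
        simp [involForm_coordVec h0 (hpS (hb' rfl)), this]
      · simp [smul_pow, hppow (hb' rfl) n hn]
    · rcases Nat.lt_or_ge n (2 * m + 1) with hn | hn
      · have := hpc (hb rfl) n hn
        simp [smul_pow, hpow n hn, involForm_coordVec (hpS (hb rfl)) (hS n hn), hpσ, this]
      · simp [smul_pow, hpow' n hn]
    · rcases Nat.eq_zero_or_pos n with rfl | hn
      · simp [involForm_coordVec (hpS (hb rfl)) (hpS (hb rfl)), hpσ, hpsg]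
      · have : n ≠ 0 := by omega
        simp [smul_pow, hppow (hb' rfl) n hn, this]

variable {m a : ℕ} {D : Finset ℤ}

lemma finrank_block : Module.finrank k (blockSet m a D → k) = 2 * m + 1 + 4 * a + D.card := by
  rw [Module.finrank_fintype_fun_eq_card, Fintype.card_coe, blockSet, Finset.card_disjSum,
    Int.card_Icc]
  congr 1
  omega

/-- The lengths of the Jordan chains of the rigid block. -/
def blockLength (m a : ℕ) (D : Finset ℤ) : Unit ⊕ (Fin a ⊕ Fin a) ⊕ D → ℕ :=
  Sum.elim (fun _ => 2 * m + 1) (Sum.elim (fun _ => 2) fun _ => 1)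

lemma sum_blockLength (n : ℕ) : ∑ l, (blockLength m a D l - n) =
    (2 * m + 1 - n) + 2 * a * (2 - n) + D.card * (1 - n) := by
  simp [blockLength, Fintype.sum_sum_type]
  ring

lemma finrank_range_pow_of_blockLength {z : Module.End k (blockSet m a D → k)}
    {v : Unit ⊕ (Fin a ⊕ Fin a) ⊕ D → blockSet m a D → k}
    (h : IsJordanChains z v (blockLength m a D)) (n : ℕ) :
    Module.finrank k (LinearMap.range (z ^ n)) =
      (2 * m + 1 - n) + 2 * a * (2 - n) + D.card * (1 - n) := by
  rw [h.finrank_range_pow _ n, sum_blockLength]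
  have := sum_blockLength (m := m) (a := a) (D := D) 0
  simp only [Nat.sub_zero] at this
  rw [this, finrank_block]
  ring

lemma finrank_range_blockRel_pow (n : ℕ) : Module.finrank k
    (LinearMap.range (relEnd k (blockSet m a D) (blockRel m a) ^ n)) =
      (2 * m + 1 - n) + 2 * a * (2 - n) + D.card * (1 - n) := by
  let c : Unit ⊕ (Fin a ⊕ Fin a) ⊕ D → ℕ → ℤ ⊕ ℤ :=
    Sum.elim (fun _ i => Sum.inl (-m + i)) (Sum.elim (Sum.elim
      (fun l i => Sum.inl (-(m + 2 * a) + 2 * (l : ℕ) + i))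
      fun l i => Sum.inl (m + 1 + 2 * (l : ℕ) + i)) fun d _ => Sum.inr d)
  refine finrank_range_pow_of_blockLength (v := fun l => coordVec k _ (c l 0))
    (isJordanChains_relEnd blockRel_functional ?_ ?_ ?_ ?_ ?_) n
  · rintro (_ | _ | _) <;> simp [blockLength]
  · rintro (_ | (l | l) | d) i hi <;> simp only [blockLength, c, Sum.elim_inl, Sum.elim_inr] at hi ⊢
    · exact inl_mem_blockSet.2 (by omega)
    · exact inl_mem_blockSet.2 (by omega)
    · exact inl_mem_blockSet.2 (by omega)
    · exact inr_mem_blockSet.2 d.2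
  · rintro (_ | (l | l) | d) i hi <;> simp only [blockLength, c, Sum.elim_inl, Sum.elim_inr] at hi ⊢
    · exact ⟨_, rfl, by push_cast; rw [add_assoc], by omega⟩
    · exact ⟨_, rfl, by push_cast; congr 1; ring, by omega⟩
    · exact ⟨_, rfl, by push_cast; ring_nf, by omega⟩
    · omega
  · rintro (_ | (l | l) | d) q ⟨n, h1, -, h2⟩ <;>
      simp only [blockLength, c, Sum.elim_inl, Sum.elim_inr, Sum.inl.injEq, reduceCtorEq] at h1 <;>
      push_cast at h1 <;> omega
  · rintro (_ | (l | l) | d) (_ | (l' | l') | d') h <;>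
      simp only [blockLength, c, Sum.elim_inl, Sum.elim_inr, Sum.inl.injEq, Sum.inr.injEq,
        reduceCtorEq] at h ⊢ <;>
      try omega
    exact Subtype.ext h

lemma finrank_range_blockRel'_pow (hm : 1 ≤ m) (hD : ∀ i ∈ D, -(m : ℤ) < i ∧ i < m)
    (n : ℕ) : Module.finrank k
    (LinearMap.range (relEnd k (blockSet m a D) (blockRel' m a D) ^ n)) =
      (2 * m + 1 - n) + 2 * a * (2 - n) + D.card * (1 - n) := by
  let c : Unit ⊕ (Fin a ⊕ Fin a) ⊕ D → ℕ → ℤ ⊕ ℤ :=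
    Sum.elim (fun _ i => blockLoop m a D (-m + i)) (Sum.elim (Sum.elim
      (fun l i => Sum.inl (-(m + 2 * a) + 1 + 2 * (l : ℕ) + i))
      fun l i => Sum.inl (m + 2 * (l : ℕ) + i)) fun d _ => Sum.inl (-(d : ℤ)))
  have hend : blockLoop m a D (-m + (2 * m : ℕ)) = Sum.inl (-(m + 2 * a : ℤ)) := by
    rw [blockLoop, if_neg (by omega), if_pos (by omega)]
  refine finrank_range_pow_of_blockLength (v := fun l => coordVec k _ (c l 0))
    (isJordanChains_relEnd (blockRel'_functional hm) ?_ ?_ ?_ ?_ ?_) n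
  · rintro (_ | _ | _) <;> simp [blockLength]
  · rintro (_ | (l | l) | d) i hi <;> simp only [blockLength, c, Sum.elim_inl, Sum.elim_inr] at hi ⊢
    · exact blockLoop_mem (by omega) (by omega)
    · exact inl_mem_blockSet.2 (by omega)
    · exact inl_mem_blockSet.2 (by omega)
    · have := hD d d.2
      exact inl_mem_blockSet.2 (by omega)
  · rintro (_ | (l | l) | d) i hi <;> simp only [blockLength, c, Sum.elim_inl, Sum.elim_inr] at hi ⊢
    · exact Or.inl ⟨_, rfl, by push_cast; rw [add_assoc], by omega⟩
    · exact Or.inr ⟨_, rfl, by push_cast; congr 1; ring, by omega⟩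
    · exact Or.inr ⟨_, rfl, by push_cast; ring_nf, by omega⟩
    · omega
  · have hinl : ∀ {n : ℤ} {q}, blockRel' m a D (Sum.inl n) q → n = m + 2 * a ∨
        (-n ∉ D ∧ -(m : ℤ) < n ∧ n < m) ∨ (-(m + 2 * a : ℤ) ≤ n ∧ n < -m ∧ (n - m) % 2 = 1 ∨
        m ≤ n ∧ n < m + 2 * a ∧ (n - m) % 2 = 0) := by
      rintro n q (⟨i, h1, -, h2⟩ | ⟨n', h1, -, h2⟩)
      · rcases blockLoop_eq_inl h1.symm with h | h | ⟨h3, h4, h5, rfl⟩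
        · omega
        · omega
        · exact Or.inr (Or.inl ⟨by simpa using h5, by omega, by omega⟩)
      · cases Sum.inl.inj h1
        exact Or.inr (Or.inr h2)
    rintro (_ | (l | l) | d) q h <;>
      simp only [blockLength, c, Sum.elim_inl, Sum.elim_inr, Nat.add_sub_cancel, hend] at h
    · have := hinl h
      omega
    · have := hinl h
      omega
    · have := hinl h
      omega
    · have := hinl h
      have := hD d d.2
      simp only [neg_neg, Finset.coe_mem, not_true_eq_false, false_and, false_or] at *
      omega
  · have hdd : ∀ d : D, -(m : ℤ) < d ∧ (d : ℤ) < m := fun d => hD d d.2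
    rintro (_ | (l | l) | d) (_ | (l' | l') | d') h <;>
      simp only [blockLength, c, Sum.elim_inl, Sum.elim_inr, Sum.inl.injEq, Sum.inr.injEq,
        reduceCtorEq, Nat.add_sub_cancel, hend] at h ⊢ <;>
      first
      | omega
      | exact Subtype.ext (neg_injective h)
      | (have := hdd d; omega)
      | (have := hdd d'; omega)

/-- The pair of nilpotent endomorphisms is cyclically rigid. -/
lemma isCyclicallyRigid_block (hm : 1 ≤ m) (hD : ∀ i ∈ D, -(m : ℤ) < i ∧ i < m) :
    IsCyclicallyRigid (relEnd k (blockSet m a D) (blockRel m a))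
      (relEnd k (blockSet m a D) (blockRel' m a D))
      (coordVec k (blockSet m a D) (Sum.inl (-m))) a (2 * m) := by
  set S := blockSet m a D with hS
  set x := relEnd k S (blockRel m a)
  set y := relEnd k S (blockRel' m a D)
  have hx : ∀ n : ℤ, -(m + 2 * a : ℤ) ≤ n → n < m + 2 * a →
      (-(m : ℤ) ≤ n ∧ n < m ∨ n < -m ∧ (n - m) % 2 = 0 ∨ m < n ∧ (n - m) % 2 = 1) →
      x (coordVec k S (Sum.inl n)) = coordVec k S (Sum.inl (n + 1)) := fun n h1 h2 h3 =>
    relEnd_coordVec blockRel_functional (inl_mem_blockSet.2 (by omega)) ⟨n, rfl, rfl, h1, h2, h3⟩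
  have hy : ∀ n : ℤ, (-(m + 2 * a : ℤ) ≤ n ∧ n < -m ∧ (n - m) % 2 = 1 ∨
      m ≤ n ∧ n < m + 2 * a ∧ (n - m) % 2 = 0) →
      y (coordVec k S (Sum.inl n)) = coordVec k S (Sum.inl (n + 1)) := fun n h =>
    relEnd_coordVec (blockRel'_functional hm) (inl_mem_blockSet.2 (by omega))
      (Or.inr ⟨n, rfl, rfl, h⟩)
  have hyl : ∀ i : ℤ, -(m : ℤ) ≤ i → i < m →
      y (coordVec k S (blockLoop m a D i)) = coordVec k S (blockLoop m a D (i + 1)) :=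
    fun i h1 h2 => relEnd_coordVec (blockRel'_functional hm)
      (blockLoop_mem (by omega) (by omega)) (Or.inl ⟨i, rfl, rfl, h1, h2⟩)
  have hstart : blockLoop m a D (-m) = Sum.inl (m + 2 * a : ℤ) := by
    rw [blockLoop, if_pos rfl]
  have hend : blockLoop m a D m = Sum.inl (-(m + 2 * a : ℤ)) := by
    rw [blockLoop, if_neg (by omega), if_pos rfl]
  have hxp : ∀ i : ℕ, i ≤ 2 * m → (x ^ i) (coordVec k S (Sum.inl (-m))) =
      coordVec k S (Sum.inl (-m + i)) := by
    intro i hi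
    induction i with
    | zero => simp
    | succ i ih =>
      rw [pow_succ', Module.End.mul_apply, ih (by omega), hx _ (by omega) (by omega) (by omega)]
      push_cast
      rw [add_assoc]
  have hyp : ∀ i : ℕ, i ≤ 2 * m → (y ^ i) (coordVec k S (Sum.inl (m + 2 * a))) =
      coordVec k S (blockLoop m a D (-m + i)) := by
    intro i hi
    induction i with
    | zero => simp [hstart]
    | succ i ih =>
      rw [pow_succ', Module.End.mul_apply, ih (by omega), hyl _ (by omega) (by omega)]
      push_cast
      rw [add_assoc]
  have hxy : ∀ i : ℕ, i ≤ a → ((x * y) ^ i) (coordVec k S (Sum.inl m)) =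
      coordVec k S (Sum.inl (m + 2 * i)) := by
    intro i hi
    induction i with
    | zero => simp
    | succ i ih =>
      rw [pow_succ', Module.End.mul_apply, ih (by omega), Module.End.mul_apply,
        hy _ (by omega), hx _ (by omega) (by omega) (by omega)]
      push_cast
      congr 2
  have hyx : ∀ i : ℕ, i ≤ a → ((y * x) ^ i) (coordVec k S (Sum.inl (-(m + 2 * a)))) =
      coordVec k S (Sum.inl (-(m + 2 * a) + 2 * i)) := by
    intro i hi
    induction i with
    | zero => simp
    | succ i ih =>
      rw [pow_succ', Module.End.mul_apply, ih (by omega), Module.End.mul_apply,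
        hx _ (by omega) (by omega) (by omega), hy _ (by omega)]
      push_cast
      congr 2
      ring
  have hxs : (x ^ (2 * m)) (coordVec k S (Sum.inl (-m))) = coordVec k S (Sum.inl m) := by
    rw [hxp _ le_rfl]
    congr 2
    push_cast
    ring
  have hword : wordEnd a (2 * m) x y (coordVec k S (Sum.inl (-m))) =
      coordVec k S (Sum.inl (-m)) := by
    have h1 : -(m : ℤ) + (2 * m : ℕ) = m := by push_cast; ring
    have h2 : -(m + 2 * a : ℤ) + 2 * a = -m := by ring
    rw [wordEnd, Module.End.mul_apply, Module.End.mul_apply, Module.End.mul_apply, hxs,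
      hxy a le_rfl, hyp _ le_rfl, h1, hend, hyx a le_rfl, h2]
  have hmS : Sum.inl (m : ℤ) ∈ S := inl_mem_blockSet.2 (by omega)
  refine ⟨by omega, hword, fun v => ?_, fun U hs hxU hyU => ?_⟩
  · have hrank : Module.finrank k (LinearMap.range (x ^ (2 * m))) = 1 := by
      rw [finrank_range_blockRel_pow, show 2 * m + 1 - 2 * m = 1 by omega,
        show 2 - 2 * m = 0 by omega, show 1 - 2 * m = 0 by omega]
      simp
    have hne : (⟨_, LinearMap.mem_range_self (x ^ (2 * m)) (coordVec k S (Sum.inl (-m)))⟩ :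
        LinearMap.range (x ^ (2 * m))) ≠ 0 := by
      intro h
      have := congrFun (hxs.symm.trans (congrArg Subtype.val h)) ⟨_, hmS⟩
      simp [coordVec] at this
    obtain ⟨t, ht⟩ := (finrank_eq_one_iff_of_nonzero' _ hne).1 hrank
      ⟨_, LinearMap.mem_range_self (x ^ (2 * m)) v⟩
    have ht' := congrArg Subtype.val ht
    simp only [SetLike.val_smul] at ht'
    rw [Submodule.mem_span_singleton]
    refine ⟨t, ?_⟩
    rw [← hword, wordEnd, Module.End.mul_apply, ← map_smul, ht', ← Module.End.mul_apply]
  · have hright : ∀ i : ℕ, (i : ℤ) ≤ 2 * m + 2 * a → coordVec k S (Sum.inl (-m + i)) ∈ U := by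
      intro i hi
      induction i with
      | zero => simpa using hs
      | succ i ih =>
        have ih := ih (by omega)
        push_cast
        rw [← add_assoc]
        by_cases h : (m : ℤ) ≤ -m + i ∧ (-m + i - m : ℤ) % 2 = 0
        · rw [← hy _ (by omega)]
          exact hyU _ ih
        · rw [← hx _ (by omega) (by omega) (by omega)]
          exact hxU _ ih
    have hloop : ∀ i : ℕ, i ≤ 2 * m → coordVec k S (blockLoop m a D (-m + i)) ∈ U := by
      intro i hi
      induction i with
      | zero =>
        have := hright (2 * m + 2 * a) (by push_cast; omega)
        simp only [Nat.cast_zero, add_zero, hstart]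
        convert this using 3
        push_cast
        ring
      | succ i ih =>
        push_cast
        rw [← add_assoc, ← hyl _ (by omega) (by omega)]
        exact hyU _ (ih (by omega))
    have hleft : ∀ i : ℕ, i ≤ 2 * a → coordVec k S (Sum.inl (-(m + 2 * a) + i)) ∈ U := by
      intro i hi
      induction i with
      | zero =>
        have := hloop (2 * m) le_rfl
        rw [show -(m : ℤ) + (2 * m : ℕ) = m by push_cast; ring, hend] at this
        simpa using this
      | succ i ih =>
        have ih := ih (by omega)
        push_cast
        rw [← add_assoc]
        by_cases h : (-(m + 2 * a : ℤ) + i - m) % 2 = 0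
        · rw [← hx _ (by omega) (by omega) (by omega)]
          exact hxU _ ih
        · rw [← hy _ (by omega)]
          exact hyU _ ih
    refine eq_top_of_coordVec_mem ?_
    rintro (n | n) hn
    · rw [inl_mem_blockSet] at hn
      by_cases h : n < -m
      · have := hleft (n + (m + 2 * a)).toNat (by omega)
        rwa [Int.toNat_of_nonneg (by omega), neg_add_cancel_comm_assoc] at this
      · have := hright (n + m).toNat (by omega)
        rwa [Int.toNat_of_nonneg (by omega), neg_add_cancel_comm_assoc] at this
    · rw [inr_mem_blockSet] at hn
      have := hD n hn
      have := hloop (n + m).toNat (by omega)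
      rwa [Int.toNat_of_nonneg (by omega), neg_add_cancel_comm_assoc, blockLoop,
        if_neg (by omega), if_neg (by omega), if_pos hn] at this

/-- The nilpotent pair of Jordan type `(2m+1, 2^(2a), 1^|D|)` forms a rigid block. -/
lemma isRigidBlock_block [IsAlgClosed k] (hm : 1 ≤ m) (hD : ∀ i ∈ D, -(m : ℤ) < i ∧ i < m)
    (hDs : ∀ i ∈ D, -i ∈ D) :
    IsRigidBlock k (fun n => (2 * m + 1 - n) + 2 * a * (2 - n) + D.card * (1 - n))
      (fun b : {b : Bool // b = true → (0 : ℤ) ∈ D} => if b.1 = true then 0 else m) := by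
  have hcast : -(m : ℤ) + (2 * m : ℕ) = m := by push_cast; ring
  refine ⟨blockSet m a D → k, _, _, inferInstance, involForm _ blockNeg (blockSign k),
    relEnd k _ (blockRel m a), relEnd k _ (blockRel' m a D), _, a, 2 * m,
    isQuadraticForm_involForm blockNeg_blockNeg (fun p => blockNeg_mem hDs) blockSign_ne_zero
      blockSign_blockNeg,
    isSkewFor_relEnd blockNeg_blockNeg (fun p => blockNeg_mem hDs)
      blockRel_functional blockRel_mem blockRel_neg blockRel_sign,
    isSkewFor_relEnd blockNeg_blockNeg (fun p => blockNeg_mem hDs)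
      (blockRel'_functional hm) blockRel'_mem (blockRel'_neg hm hDs) blockRel'_sign,
    finrank_range_blockRel_pow, finrank_range_blockRel'_pow hm hD,
    isCyclicallyRigid_block hm hD, ?_, fun t ht => ?_⟩
  · rw [← one_smul k (relEnd k _ (blockRel m a))]
    refine exists_isOrthChains_relEnd (c := fun i => Sum.inl (-m + i)) (p := Sum.inr 0)
      blockSign_ne_zero blockRel_functional ?_ ?_ ?_ ?_ ?_ ?_ ?_ ?_ ?_ ?_ one_ne_zero
    · exact fun i hi => inl_mem_blockSet.2 (by omega)
    · exact fun i hi => ⟨_, rfl, by push_cast; rw [add_assoc], by omega⟩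
    · rintro q ⟨n, h1, -, h2⟩
      have := Sum.inl.inj h1
      omega
    · simp only [blockNeg, Sum.map_inl]
      congr 1
      omega
    · intro i hi h
      simp only [blockNeg, Sum.map_inl] at h
      have := Sum.inl.inj h
      omega
    · exact fun h => inr_mem_blockSet.2 h
    · rintro - q ⟨n, h1, -⟩
      exact Sum.inr_ne_inl h1
    · simp [blockNeg]
    · simp [blockSign]
    · exact fun _ i _ => Sum.inl_ne_inr
  · refine exists_isOrthChains_relEnd (c := fun i => blockLoop m a D (-m + i)) (p := Sum.inl 0)
      blockSign_ne_zero (blockRel'_functional hm) ?_ ?_ ?_ ?_ ?_ ?_ ?_ ?_ ?_ ?_ ht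
    · exact fun i hi => blockLoop_mem (by omega) (by omega)
    · exact fun i hi => Or.inl ⟨_, rfl, by push_cast; rw [add_assoc], by omega⟩
    · simp only [hcast]
      rintro q (⟨i, h1, -, h2⟩ | ⟨n, h1, -, h2⟩)
      · have := blockLoop_injOn hm (by omega) (by omega) (by omega) (by omega) h1
        omega
      · have := blockLoop_eq_inl h1
        omega
    · simp only [hcast, blockNeg_blockLoop hm hDs, Nat.cast_zero, add_zero, neg_neg]
    · intro i hi h
      simp only [blockNeg_blockLoop hm hDs] at h
      have := blockLoop_injOn hm (by omega) (by omega) (by omega) (by omega) h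
      omega
    · exact fun _ => inl_mem_blockSet.2 (by omega)
    · rintro h0 q (⟨i, h1, -, h2⟩ | ⟨n, h1, -, h2⟩)
      · rcases blockLoop_eq_inl h1.symm with h | h | ⟨h3, h4, h5, h6⟩
        · omega
        · omega
        · exact h5 (by rwa [show i = 0 by omega])
      · have := Sum.inl.inj h1
        omega
    · simp [blockNeg]
    · simp [blockSign]
    · intro h0 i hi h
      rcases blockLoop_eq_inl h with h | h | ⟨h3, h4, h5, h6⟩
      · omega
      · omega
      · exact h5 (by rwa [show -(m : ℤ) + i = 0 by omega])

end RigidBlock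

section Partition

universe u

variable {k : Type u} [Field k]

lemma IsRigidBlock.comp {f : ℕ → ℕ} {ι κ : Type} [DecidableEq ι] [DecidableEq κ] {m : ι → ℕ}
    (h : IsRigidBlock k f m) {g : κ → ι} (hg : Function.Injective g) :
    IsRigidBlock k f (m ∘ g) := by
  obtain ⟨V, _, _, _, B, x, y, s, a, b, hB, hx, hy, hfx, hfy, hr, ⟨e, he⟩, he'⟩ := h
  refine ⟨V, _, _, inferInstance, B, x, y, s, a, b, hB, hx, hy, hfx, hfy, hr, ⟨_, he.comp hg⟩,
    fun c hc => ?_⟩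
  obtain ⟨e', he'⟩ := he' c hc
  exact ⟨_, he'.comp hg⟩

lemma isRigidBlock_single [IsAlgClosed k] {m j : ℕ} (a : ℕ) (hm : 1 ≤ m) (hj : j ≤ 2 * m - 1) :
    IsRigidBlock k (fun n => (2 * m + 1 - n) + 2 * a * (2 - n) + j * (1 - n)) ![m] := by
  obtain ⟨D, hD, hDs, rfl⟩ : ∃ D : Finset ℤ, (∀ i ∈ D, -(m : ℤ) < i ∧ i < m) ∧
      (∀ i ∈ D, -i ∈ D) ∧ D.card = j := by
    rcases Nat.even_or_odd' j with ⟨t, rfl | rfl⟩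
    · refine ⟨(Finset.Icc (-(t : ℤ)) t).erase 0, fun i hi => ?_, fun i hi => ?_, ?_⟩
      · simp only [Finset.mem_erase, Finset.mem_Icc] at hi
        omega
      · simp only [Finset.mem_erase, Finset.mem_Icc] at hi ⊢
        omega
      · rw [Finset.card_erase_of_mem (by simp), Int.card_Icc]
        omega
    · refine ⟨Finset.Icc (-(t : ℤ)) t, fun i hi => ?_, fun i hi => ?_, ?_⟩
      · rw [Finset.mem_Icc] at hi
        omega
      · rw [Finset.mem_Icc] at hi ⊢
        omega
      · rw [Int.card_Icc]
        omega
  have h := (isRigidBlock_block (k := k) (a := a) hm hD hDs).comp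
    (g := fun _ : Fin 1 => ⟨false, by simp⟩) (Function.injective_of_subsingleton _)
  convert h using 1
  ext i
  fin_cases i
  simp

lemma isRigidBlock_pair [IsAlgClosed k] {m : ℕ} (a : ℕ) (hm : 1 ≤ m) :
    IsRigidBlock k (fun n => (2 * m + 1 - n) + 2 * a * (2 - n) + (1 - n)) ![m, 0] := by
  have h := (isRigidBlock_block (k := k) (m := m) (a := a) (D := {0}) hm
    (by simp; omega) (by simp)).comp
    (g := ![⟨false, by simp⟩, ⟨true, by simp⟩]) (by
      intro i j hij
      fin_cases i <;> fin_cases j <;> simp_all)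
  convert h using 1
  · simp
  · ext i
    fin_cases i <;> simp

lemma Realizable.forget {f : ℕ → ℕ} {ι : Type} [DecidableEq ι] {m : ι → ℕ}
    (h : Realizable k f m) : Realizable k f ![] := by
  convert h.comp (g := (Fin.elim0 : Fin 0 → ι)) fun i => i.elim0 using 1

lemma realizable_ones [CharZero k] {r : ℕ} (hr : r ≤ 1) :
    Realizable k (fun n => r * (1 - n)) ![] := by
  have hB : IsQuadraticForm (involForm (k := k) (Finset.range r) id fun _ => 1) :=
    isQuadraticForm_involForm (fun _ => rfl) (fun _ => id) (fun _ => one_ne_zero) fun _ => rfl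
  have h0 : ∀ n, Module.finrank k (LinearMap.range ((0 : Module.End k (Finset.range r → k)) ^ n)) =
      r * (1 - n) := by
    intro n
    rcases n with _ | n
    · rw [pow_zero, Module.End.one_eq_id, LinearMap.range_id, finrank_top]
      simp
    · simp
  refine ⟨Finset.range r → k, _, _, inferInstance, _, 0, 0, hB, fun v w => by simp,
    fun v w => by simp, h0, h0, fun A hA _ _ => ext_coordVec fun p hp => hB.nondeg _ ?_,
    isOrthChains_elim _ _ _, isOrthChains_elim _ _ _⟩
  suffices h : involForm (k := k) (Finset.range r) id (fun _ => 1) (A (coordVec k _ p)) = 0 from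
    fun w => by rw [h]; rfl
  refine ext_coordVec fun q hq => ?_
  obtain rfl : q = p := by
    rw [Finset.mem_range] at hp hq
    omega
  have := hA (coordVec k _ q) (coordVec k _ q)
  rw [hB.symm (coordVec k _ q)] at this
  simpa using self_eq_neg.1 this

lemma Realizable.of_comp_eq {f : ℕ → ℕ} {ι κ : Type} [DecidableEq ι] [DecidableEq κ] {m : ι → ℕ}
    {m' : κ → ℕ} (h : Realizable k f m) (g : κ → ι) (hg : Function.Injective g)
    (hm : ∀ i, m (g i) = m' i) : Realizable k f m' :=
  (funext hm : m ∘ g = m') ▸ h.comp hg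

/-- The induction over partitions with parts at least three, twos and ones. -/
lemma realizable_multiset [IsAlgClosed k] [CharZero k] (c : ℕ) : ∀ (Λ : Multiset ℕ) (a r : ℕ),
    Λ.card = c → (∀ l ∈ Λ, 3 ≤ l) → (∀ e, Even e → Even (Λ.count e)) →
    r ≤ (Λ.map (· - 2)).sum + 1 → (Λ = 0 → a = 0) →
    Realizable k (fun n => (Λ.map (· - n)).sum + 2 * a * (2 - n) + r * (1 - n)) ![] := by
  induction c using Nat.strong_induction_on with
  | _ c ih =>
  intro Λ a r hc h3 hev hr ha
  rcases Λ.empty_or_exists_mem with rfl | ⟨l, hl⟩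
  · have hr' : r ≤ 1 := by simpa using hr
    exact (realizable_ones hr').congr fun n => by simp [ha rfl]
  obtain ⟨Λ', rfl⟩ := Multiset.exists_cons_of_mem hl
  have hl3 := h3 l hl
  rcases Nat.even_or_odd l with hle | hlo
  · obtain ⟨m, rfl, hm⟩ : ∃ m, l = 2 * m + 2 ∧ 1 ≤ m := by
      obtain ⟨t, rfl⟩ := hle
      exact ⟨t - 1, by omega, by omega⟩
    have hl' : 2 * m + 2 ∈ Λ' := by
      have := hev _ hle
      rw [Multiset.count_cons_self] at this
      rw [← Multiset.count_ne_zero]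
      intro h0
      simp [h0] at this
    obtain ⟨Λ'', rfl⟩ := Multiset.exists_cons_of_mem hl'
    have hev' : ∀ e, Even e → Even (Λ''.count e) := by
      intro e he
      have := hev e he
      simp only [Multiset.count_cons] at this
      split_ifs at this
      · simpa [Nat.even_add_one, add_assoc] using this
      · simpa using this
    have h3' : ∀ l ∈ Λ'', 3 ≤ l := fun l hl =>
      h3 l (Multiset.mem_cons_of_mem (Multiset.mem_cons_of_mem hl))
    simp only [Multiset.card_cons] at hc
    simp only [Multiset.map_cons, Multiset.sum_cons] at hr ⊢
    rcases Nat.eq_zero_or_pos r with rfl | hr0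
    · have h1 := ((ih Λ''.card (by omega) Λ'' 0 0 rfl h3' hev' (by omega) (by simp)).add
        (isRigidBlock_pair a hm)).add (isRigidBlock_pair 0 hm)
      have h2 := h1.of_comp_eq (m' := ![m, m, 0, 0])
        ![Sum.inl (Sum.inr 0), Sum.inr 0, Sum.inl (Sum.inr 1), Sum.inr 1] (by decide)
        (fun i => by fin_cases i <;> rfl)
      refine h2.even_pair fun n => ?_
      simp only [Nat.mul_zero, Nat.zero_mul]
      omega
    · obtain ⟨j₁, j₂, j₃, r', hj₁, hj₂, hj₃, hr', rfl⟩ : ∃ j₁ j₂ j₃ r', j₁ ≤ 2 * m - 1 ∧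
          j₂ ≤ 2 * m - 1 ∧ j₃ ≤ 1 ∧ r' ≤ (Λ''.map (· - 2)).sum + 1 ∧
          r = r' + j₁ + j₂ + j₃ + 1 := by
        refine ⟨min (r - 1) (2 * m - 1), min (r - 1 - min (r - 1) (2 * m - 1)) (2 * m - 1),
          min (r - 1 - min (r - 1) (2 * m - 1) -
            min (r - 1 - min (r - 1) (2 * m - 1)) (2 * m - 1)) 1,
          r - 1 - min (r - 1) (2 * m - 1) -
            min (r - 1 - min (r - 1) (2 * m - 1)) (2 * m - 1) -
            min (r - 1 - min (r - 1) (2 * m - 1) -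
            min (r - 1 - min (r - 1) (2 * m - 1)) (2 * m - 1)) 1, ?_, ?_, ?_, ?_, ?_⟩ <;> omega
      have h1 := (((ih Λ''.card (by omega) Λ'' 0 r' rfl h3' hev' hr' (by simp)).add
        (isRigidBlock_single a hm hj₁)).add (isRigidBlock_single 0 hm hj₂)).add
        (isRigidBlock_single 0 le_rfl hj₃)
      have h2 := h1.of_comp_eq (m' := ![m, m, 1])
        ![Sum.inl (Sum.inl (Sum.inr 0)), Sum.inl (Sum.inr 0), Sum.inr 0] (by decide)
        (fun i => by fin_cases i <;> rfl)
      refine h2.even_pair_one hm fun n => ?_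
      simp only [Nat.mul_zero, Nat.zero_mul, add_mul]
      omega
  · obtain ⟨m, rfl, hm⟩ : ∃ m, l = 2 * m + 1 ∧ 1 ≤ m := by
      obtain ⟨t, rfl⟩ := hlo
      exact ⟨t, rfl, by omega⟩
    have hev' : ∀ e, Even e → Even (Λ'.count e) := by
      intro e he
      have := hev e he
      rwa [Multiset.count_cons_of_ne] at this
      rintro rfl
      exact (Nat.not_even_iff_odd.2 hlo) he
    simp only [Multiset.card_cons] at hc
    simp only [Multiset.map_cons, Multiset.sum_cons] at hr ⊢
    obtain ⟨j, r', hj, hr', rfl⟩ : ∃ j r', j ≤ 2 * m - 1 ∧ r' ≤ (Λ'.map (· - 2)).sum + 1 ∧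
        r = r' + j := ⟨min r (2 * m - 1), r - min r (2 * m - 1), by omega, by omega, by omega⟩
    have h1 := (ih Λ'.card (by omega) Λ' 0 r' rfl
      (fun l hl => h3 l (Multiset.mem_cons_of_mem hl)) hev' hr' (by simp)).add
      (isRigidBlock_single a hm hj)
    refine h1.forget.congr fun n => ?_
    simp only [Nat.mul_zero, Nat.zero_mul, add_mul]
    omega

end Partition

/-- For an orthogonal partition `λ` of `N ≥ 7` with `λ₁ ≥ 3` and `N − p ≥ ⌊N/2⌋`, the
conical secant variety of the nilpotent orbit `O_λ ∩ so_N` is all of `so_N`. -/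
theorem stmt5 {k : Type*} [Field k] [IsAlgClosed k] [CharZero k]
    {N p : ℕ} (hN : 7 ≤ N) (hp : 0 < p) (lam : Fin p → ℕ)
    (hanti : Antitone lam) (hpos : ∀ l, 1 ≤ lam l)
    (hsum : ∑ l, lam l = N)
    (horth : IsOrthogonalParts lam)
    (hl1 : 3 ≤ lam ⟨0, hp⟩)
    (hbig : N / 2 ≤ N - p) :
    zClosure (Set.image2 (· + ·) (jordanOrbit k N lam ∩ soSet k N)
        (jordanOrbit k N lam ∩ soSet k N))
      = soSet k N := by
  refine zClosure_eq_soSet_of_realizable (by omega) lam hsum ?_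
  set Λ : Multiset ℕ := (Finset.univ.filter fun l => 3 ≤ lam l).val.map lam with hΛ
  have hsplit : ∀ n, ∑ l, (lam l - n) = (Λ.map (· - n)).sum +
      (Finset.univ.filter fun l => lam l = 2).card * (2 - n) +
      (Finset.univ.filter fun l => lam l = 1).card * (1 - n) := by
    intro n
    have h1 : (Λ.map (· - n)).sum = ∑ l, if 3 ≤ lam l then lam l - n else 0 := by
      rw [hΛ, Multiset.map_map, ← Finset.sum_filter]
      rfl
    rw [h1, ← smul_eq_mul, ← smul_eq_mul, ← Finset.sum_const, ← Finset.sum_const,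
      Finset.sum_filter, Finset.sum_filter, ← Finset.sum_add_distrib, ← Finset.sum_add_distrib]
    refine Finset.sum_congr rfl fun l _ => ?_
    have := hpos l
    split_ifs <;> omega
  have hcount : ∀ e, 3 ≤ e → Λ.count e = (Finset.univ.filter fun l => lam l = e).card := by
    intro e he
    rw [hΛ, Multiset.count_map, ← Finset.filter_val, Finset.card_val, Finset.filter_filter]
    congr 1
    ext l
    simp only [Finset.mem_filter, Finset.mem_univ, true_and]
    omega
  have h3 : ∀ l ∈ Λ, 3 ≤ l := by
    intro l hl
    obtain ⟨i, hi, rfl⟩ := Multiset.mem_map.1 hl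
    simpa using hi
  have hcard : p = Λ.card + (Finset.univ.filter fun l => lam l = 2).card +
      (Finset.univ.filter fun l => lam l = 1).card := by
    have h1 : Λ.card = ∑ l, if 3 ≤ lam l then 1 else 0 := by
      rw [hΛ, Multiset.card_map, Finset.card_val, Finset.card_filter]
    rw [h1, Finset.card_filter, Finset.card_filter, ← Finset.sum_add_distrib,
      ← Finset.sum_add_distrib]
    conv_lhs => rw [← Fintype.card_fin p, ← Finset.card_univ, Finset.card_eq_sum_ones]
    refine Finset.sum_congr rfl fun l _ => ?_
    have := hpos l
    split_ifs <;> omega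
  have hsub : (Λ.map (· - 2)).sum + 2 * Λ.card = Λ.sum := by
    clear_value Λ
    clear hΛ hsplit hcount hcard
    induction Λ using Multiset.induction_on with
    | empty => simp
    | cons l Λ ih =>
      have := ih fun l hl => h3 l (Multiset.mem_cons_of_mem hl)
      have := h3 l (Multiset.mem_cons_self _ _)
      simp only [Multiset.map_cons, Multiset.sum_cons, Multiset.card_cons]
      omega
  have htot := hsplit 0
  simp only [Nat.sub_zero, hsum, Multiset.map_id'] at htot
  obtain ⟨a, ha⟩ := horth 2 (by norm_num) even_two
  refine (realizable_multiset Λ.card Λ a _ rfl h3 (fun e he => ?_) ?_ fun h0 => ?_).congr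
    fun n => (by rw [hsplit n, ha, ← two_mul] : _ = ∑ l, (lam l - n))
  · rcases Nat.lt_or_ge e 3 with h | h
    · rw [Multiset.count_eq_zero_of_notMem fun hm => by have := h3 e hm; omega]
      exact Even.zero
    · rw [hcount e h]
      exact horth e (by omega) he
  · omega
  · have : lam ⟨0, hp⟩ ∈ Λ := Multiset.mem_map_of_mem _ (by simpa using hl1)
    simp [h0] at this
end
end
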